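/- For every fixed ε > 0 there is a constant C(ε) such that, with the notation of the context, for any permutation (i, j, k) of (1, 2, 3) and any fixed positive integers x_i, x_j, y_k, the number of triples (x_k, y_i, y_j) of positive integers for which the resulting sextuple (x₁, x₂, x₃, y₁, y₂, y₃) lies in S₀(B) is at most C(ε) · (1 + (Y_iY_j)^{2/3} Y_k^{−2}) · B^ε. -/

import Mathlib

/-!
Fix `xᵢ`, `xⱼ` and `n = y_k`. Modulo `m = n³` the ratio `yᵢ / yⱼ` is a cube root of a fixed class,
so the points `(yᵢ, yⱼ)` lie on `O(Bᵟ)` congruence lattices `{s : m ∣ s₁ - l s₂}`, and a nonsingular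
binary cubic form takes a nonzero square value at each of them.

On one lattice, let `e` be a shortest nonzero vector for the norm attached to the box `Y × Z`, and
put `U = Y Z / ‖e‖`, `V = 2 ‖e‖ / m`, so that `U V` is of order `Y Z / m`.

* If `V ≤ √U`, the points lie on `O(1 + V)` lines parallel to `e`. On each line the cubic is a
  square for only about half of the residues modulo a good prime, by Stepanov's bound for the
  character sum, and Gallagher's larger sieve leaves `O(√U Bᵟ)` points.
* If `V > √U`, the square sieve over primes of size `(U V)^(1/3)` applies to the whole box. The
  two-dimensional Fourier transform of the quadratic character of the cubic form is `O(p)`. The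
  sieve is run over differences of two points of the box, so that Plancherel's identity makes use
  of this without the logarithmic loss of a sharp cutoff.

Both cases give `O((1 + (Y Z / m)^(2/3)) Bᵟ)`.
-/

/-- The set `S₀(B)` of sextuples `(x₁, x₂, x₃, y₁, y₂, y₃)` of positive integers (encoded as a
pair of functions `Fin 3 → ℤ`) such that `Xᵢ/2 < xᵢ ≤ Xᵢ` and `Yᵢ/2 < yᵢ ≤ Yᵢ`, the equation
`a₁x₁²y₁³ + a₂x₂²y₂³ + a₃x₃²y₃³ = 0` holds, `gcd(x₁y₁, x₂y₂, x₃y₃) = 1`,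
`gcd(a₁a₂a₃, x₁x₂x₃y₁y₂y₃) = 1`, and `a₁y₁, a₂y₂, a₃y₃` are all squarefree. -/
def S0 (a : Fin 3 → ℤ) (X Y : Fin 3 → ℝ) : Set ((Fin 3 → ℤ) × (Fin 3 → ℤ)) :=
  {p | (∀ i, 0 < p.1 i) ∧ (∀ i, 0 < p.2 i) ∧
    (∀ i, X i / 2 < (p.1 i : ℝ) ∧ (p.1 i : ℝ) ≤ X i) ∧
    (∀ i, Y i / 2 < (p.2 i : ℝ) ∧ (p.2 i : ℝ) ≤ Y i) ∧
    a 0 * p.1 0 ^ 2 * p.2 0 ^ 3 + a 1 * p.1 1 ^ 2 * p.2 1 ^ 3 +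
      a 2 * p.1 2 ^ 2 * p.2 2 ^ 3 = 0 ∧
    Int.gcd (p.1 0 * p.2 0) (Int.gcd (p.1 1 * p.2 1) (p.1 2 * p.2 2)) = 1 ∧
    Int.gcd (a 0 * a 1 * a 2) (p.1 0 * p.1 1 * p.1 2 * p.2 0 * p.2 1 * p.2 2) = 1 ∧
    (∀ i, Squarefree (a i * p.2 i))}

namespace FibreBound

section Stepanov

open Polynomial

variable {F : Type*} [Field F]

/-- The differential operator `r ↦ f r' + c f' r`, which is `f ^ (1 - c) * (f ^ c * r)'` for a
formal power `f ^ c`. -/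
noncomputable def twistedDerivative (f : F[X]) (c : F) : F[X] →ₗ[F] F[X] :=
  LinearMap.mulLeft F f ∘ₗ derivative + LinearMap.mulLeft F (C c * derivative f)

/-- The iterate `r ↦ f ^ (k - c) * (f ^ c * r)^(k)` of twisted derivatives. It is a polynomial in
`f`, `r` and their derivatives, so it makes sense for every scalar `c`. -/
noncomputable def twistedDerivativeIterate (f : F[X]) (c : F) : ℕ → F[X] →ₗ[F] F[X]
  | 0 => LinearMap.id
  | k + 1 => twistedDerivative f (c - k) ∘ₗ twistedDerivativeIterate f c k

lemma pow_mul_iterate_derivative_pow_mul (f r : F[X]) (n k : ℕ) :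
    f ^ k * derivative^[k] (f ^ n * r) = f ^ n * twistedDerivativeIterate f n k r := by
  induction k with
  | zero => simp [twistedDerivativeIterate]
  | succ k ih =>
    have hderiv := congrArg derivative ih
    have hpow (j : ℕ) : f * derivative (f ^ j) = C (j : F) * derivative f * f ^ j := by
      cases j with
      | zero => simp
      | succ j => rw [derivative_pow, Nat.add_sub_cancel]; push_cast; ring
    simp only [derivative_mul] at hderiv
    rw [Function.iterate_succ_apply', twistedDerivativeIterate, LinearMap.comp_apply,
      twistedDerivative, LinearMap.add_apply, LinearMap.comp_apply, LinearMap.mulLeft_apply,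
      LinearMap.mulLeft_apply, C_sub]
    linear_combination f * hderiv - derivative^[k] (f ^ n * r) * hpow k +
      twistedDerivativeIterate f n k r * hpow n - C (k : F) * derivative f * ih

lemma twistedDerivative_mem_degreeLT {f r : F[X]} {c : F} {m N : ℕ} (hf : f.natDegree = m + 1)
    (hr : r ∈ degreeLT F N) : twistedDerivative f c r ∈ degreeLT F (N + m) := by
  rcases eq_or_ne r 0 with rfl | hr0
  · rw [map_zero]; exact zero_mem _
  have hrN : r.natDegree < N := (natDegree_lt_iff_degree_lt hr0).mpr (mem_degreeLT.mp hr)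
  have hleft : f * derivative r ∈ degreeLT F (N + m) := by
    rcases eq_or_ne (derivative r) 0 with h0 | h0
    · rw [h0, mul_zero]; exact zero_mem _
    · have hdeg : r.natDegree ≠ 0 := fun h => h0 (derivative_of_natDegree_zero h)
      refine mem_degreeLT.mpr (degree_le_natDegree.trans_lt (Nat.cast_lt.mpr ?_))
      have := natDegree_mul_le (p := f) (q := derivative r)
      have := natDegree_derivative_lt hdeg
      omega
  have hright : C c * derivative f * r ∈ degreeLT F (N + m) := by
    refine mem_degreeLT.mpr (degree_le_natDegree.trans_lt (Nat.cast_lt.mpr ?_))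
    have := natDegree_mul_le (p := C c * derivative f) (q := r)
    have := natDegree_C_mul_le c (derivative f)
    have := natDegree_derivative_le f
    omega
  exact add_mem hleft hright

lemma twistedDerivativeIterate_mem_degreeLT {f r : F[X]} {c : F} {m N : ℕ}
    (hf : f.natDegree = m + 1) (hr : r ∈ degreeLT F N) (k : ℕ) :
    twistedDerivativeIterate f c k r ∈ degreeLT F (N + m * k) := by
  induction k with
  | zero => exact hr
  | succ k ih =>
    rw [Nat.mul_succ, ← Nat.add_assoc, twistedDerivativeIterate, LinearMap.comp_apply]
    exact twistedDerivative_mem_degreeLT hf ih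

/-- The auxiliary polynomial of Stepanov's method: a combination of `1` and `f ^ n` whose
coefficients `∑ j, r j * e ^ j` and `∑ j, s j * e ^ j` are written in base `e`. -/
noncomputable def stepanovPoly (f e : F[X]) (n : ℕ) {J : ℕ} (v : (Fin J → F[X]) × (Fin J → F[X])) :
    F[X] :=
  ∑ j : Fin J, e ^ (j : ℕ) * (v.1 j + f ^ n * v.2 j)

/-- The value of `f ^ k` times the `k`-th derivative of the auxiliary polynomial on the points where
`f ^ n = a` and `e = e₀`, when `e' = 0`. -/
noncomputable def stepanovCondition (f e₀ : F[X]) (n : ℕ) (a : F) (J k : ℕ) :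
    (Fin J → F[X]) × (Fin J → F[X]) →ₗ[F] F[X] :=
  ∑ j : Fin J, LinearMap.mulLeft F (e₀ ^ (j : ℕ)) ∘ₗ
    (twistedDerivativeIterate f 0 k ∘ₗ LinearMap.proj j ∘ₗ LinearMap.fst F _ _ +
      a • twistedDerivativeIterate f n k ∘ₗ LinearMap.proj j ∘ₗ LinearMap.snd F _ _)

lemma stepanovCondition_apply (f e₀ : F[X]) (n : ℕ) (a : F) (J k : ℕ)
    (v : (Fin J → F[X]) × (Fin J → F[X])) :
    stepanovCondition f e₀ n a J k v = ∑ j : Fin J, e₀ ^ (j : ℕ) *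
      (twistedDerivativeIterate f 0 k (v.1 j) + a • twistedDerivativeIterate f n k (v.2 j)) := by
  simp [stepanovCondition]

lemma iterate_derivative_mul_of_derivative_eq_zero {e : F[X]} (he : derivative e = 0) (g : F[X])
    (k : ℕ) : derivative^[k] (e * g) = e * derivative^[k] g := by
  induction k generalizing g with
  | zero => rfl
  | succ k ih => rw [Function.iterate_succ_apply, derivative_mul, he, zero_mul, zero_add, ih]; rfl

lemma pow_mul_iterate_derivative_stepanovPoly {f e : F[X]} (he : derivative e = 0) (n : ℕ) {J : ℕ}
    (v : (Fin J → F[X]) × (Fin J → F[X])) (k : ℕ) :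
    f ^ k * derivative^[k] (stepanovPoly f e n v) = ∑ j : Fin J, e ^ (j : ℕ) *
      (twistedDerivativeIterate f 0 k (v.1 j) +
        f ^ n * twistedDerivativeIterate f n k (v.2 j)) := by
  have he' (j : ℕ) : derivative (e ^ j) = 0 := by rw [derivative_pow, he, mul_zero]
  rw [stepanovPoly, iterate_derivative_sum, Finset.mul_sum]
  refine Finset.sum_congr rfl fun j _ => ?_
  have h1 := pow_mul_iterate_derivative_pow_mul f (v.1 j) 0 k
  have h2 := pow_mul_iterate_derivative_pow_mul f (v.2 j) n k
  rw [pow_zero, one_mul, one_mul, Nat.cast_zero] at h1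
  rw [iterate_derivative_mul_of_derivative_eq_zero (he' j), iterate_map_add derivative,
    ← h1, ← h2]
  ring

lemma eval_iterate_derivative_stepanovPoly {f e e₀ : F[X]} (he : derivative e = 0) {n : ℕ} {a x : F}
    (hx : f.eval x ^ n = a) (hfx : f.eval x ≠ 0) (hex : e.eval x = e₀.eval x) {J k : ℕ}
    {v : (Fin J → F[X]) × (Fin J → F[X])} (hv : stepanovCondition f e₀ n a J k v = 0) :
    (derivative^[k] (stepanovPoly f e n v)).eval x = 0 := by
  have hzero := congrArg (eval x) hv
  have heval := congrArg (eval x) (pow_mul_iterate_derivative_stepanovPoly (f := f) he n v k)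
  rw [stepanovCondition_apply] at hzero
  simp only [eval_finsetSum, eval_mul, eval_pow, eval_add, eval_smul, smul_eq_mul, eval_zero]
    at hzero heval
  rw [hx, hex, hzero] at heval
  exact (mul_eq_zero.mp heval).resolve_left (pow_ne_zero k hfx)

lemma pow_mul_mem_degreeLT {e r : F[X]} {N j J : ℕ} (he : e.natDegree ≤ 1) (hj : j < J)
    (hr : r ∈ degreeLT F N) : e ^ j * r ∈ degreeLT F (N + J) := by
  rcases eq_or_ne r 0 with rfl | hr0
  · rw [mul_zero]; exact zero_mem _
  refine mem_degreeLT.mpr (degree_le_natDegree.trans_lt (Nat.cast_lt.mpr ?_))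
  have hrN : r.natDegree < N := (natDegree_lt_iff_degree_lt hr0).mpr (mem_degreeLT.mp hr)
  have := natDegree_mul_le (p := e ^ j) (q := r)
  have := natDegree_pow_le_of_le j he
  omega

lemma stepanovCondition_mem_degreeLT {f e₀ : F[X]} (n : ℕ) (a : F) {m J d l k : ℕ}
    (hf : f.natDegree = m + 1) (he₀ : e₀.natDegree ≤ 1) (hk : k < l)
    {v : (Fin J → F[X]) × (Fin J → F[X])}
    (hv₁ : ∀ j, v.1 j ∈ degreeLT F d) (hv₂ : ∀ j, v.2 j ∈ degreeLT F d) :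
    stepanovCondition f e₀ n a J k v ∈ degreeLT F (d + m * l + J) := by
  rw [stepanovCondition_apply]
  refine sum_mem fun j _ => pow_mul_mem_degreeLT he₀ j.2 (degreeLT_mono ?_ (add_mem
    (twistedDerivativeIterate_mem_degreeLT hf (hv₁ j) k)
    (Submodule.smul_mem _ _ (twistedDerivativeIterate_mem_degreeLT hf (hv₂ j) k))))
  gcongr

lemma finrank_degreeLT (d : ℕ) : Module.finrank F (degreeLT F d) = d := by
  rw [(degreeLTEquiv F d).finrank_eq, Module.finrank_fin_fun]

lemma exists_stepanovCondition_eq_zero {f e₀ : F[X]} (n : ℕ) (a : F) {m d l J : ℕ}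
    (hf : f.natDegree = m + 1) (he₀ : e₀.natDegree ≤ 1) (hcount : l * (d + m * l + J) < 2 * d * J) :
    ∃ v : (Fin J → F[X]) × (Fin J → F[X]), v ≠ 0 ∧
      (∀ j, v.1 j ∈ degreeLT F d) ∧ (∀ j, v.2 j ∈ degreeLT F d) ∧
      ∀ k < l, stepanovCondition f e₀ n a J k v = 0 := by
  let incl : (Fin J → degreeLT F d) →ₗ[F] (Fin J → F[X]) :=
    LinearMap.pi fun j => (degreeLT F d).subtype ∘ₗ LinearMap.proj j
  let coeffs : (Fin J → degreeLT F d) × (Fin J → degreeLT F d) →ₗ[F]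
      (Fin l → Fin (d + m * l + J) → F) :=
    LinearMap.pi fun k => LinearMap.pi fun i =>
      lcoeff F i ∘ₗ stepanovCondition f e₀ n a J k ∘ₗ incl.prodMap incl
  have : FiniteDimensional F (degreeLT F d) :=
    Module.Finite.equiv (degreeLTEquiv F d).symm
  have hker : LinearMap.ker coeffs ≠ ⊥ := by
    refine LinearMap.ker_ne_bot_of_finrank_lt ?_
    simp only [Module.finrank_pi_fintype, Module.finrank_prod, Module.finrank_self,
      finrank_degreeLT, Finset.sum_const, Finset.card_univ, Fintype.card_fin, smul_eq_mul, mul_one]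
    linarith
  obtain ⟨w, hw, hw0⟩ := Submodule.exists_mem_ne_zero_of_ne_bot hker
  refine ⟨(fun j => w.1 j, fun j => w.2 j), fun h0 => hw0 ?_, fun j => (w.1 j).2,
    fun j => (w.2 j).2, fun k hk => ?_⟩
  · exact Prod.ext (funext fun j => Subtype.ext (congrFun (congrArg Prod.fst h0) j))
      (funext fun j => Subtype.ext (congrFun (congrArg Prod.snd h0) j))
  · refine (degreeLTEquiv_eq_zero_iff_eq_zero (stepanovCondition_mem_degreeLT n a hf he₀ hk
      (fun j => (w.1 j).2) fun j => (w.2 j).2)).mp (funext fun i => ?_)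
    exact congrFun (congrFun (LinearMap.mem_ker.mp hw) ⟨k, hk⟩) i

lemma eq_zero_of_sq_mul_eq_C_mul_sq {f : F[X]} {c : F} (hf : Squarefree f) (hdeg : 0 < f.natDegree)
    (hc : c ≠ 0) {r s : F[X]} (h : r ^ 2 * f = C c * s ^ 2) : r = 0 := by
  -- Infinite descent: both `r` and `s` are divisible by `f`.
  have hf0 : f ≠ 0 := ne_zero_of_natDegree_gt hdeg
  induction hn : r.natDegree using Nat.strong_induction_on generalizing r s with
  | _ n ih =>
    have hfs : f ∣ s := (hf.dvd_pow_iff_dvd two_ne_zero).mp <|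
      (isUnit_C.mpr hc.isUnit).dvd_mul_left.mp ⟨r ^ 2, by rw [← h, mul_comm]⟩
    obtain ⟨t, rfl⟩ := hfs
    have hr : r ^ 2 = f * (C c * t ^ 2) := mul_left_cancel₀ hf0 (by linear_combination h)
    obtain ⟨u, rfl⟩ := (hf.dvd_pow_iff_dvd two_ne_zero).mp ⟨_, hr⟩
    have hu : u ^ 2 * f = C c * t ^ 2 := mul_left_cancel₀ hf0 (by linear_combination hr)
    by_contra hfu
    have hu0 : u ≠ 0 := right_ne_zero_of_mul hfu
    rw [natDegree_mul hf0 hu0] at hn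
    exact hu0 (ih _ (by omega) hu rfl)

lemma natDegree_stepanovPoly_le {f e : F[X]} {n d q J : ℕ} (he : e.natDegree ≤ q)
    {v : (Fin J → F[X]) × (Fin J → F[X])}
    (hv₁ : ∀ j, v.1 j ∈ degreeLT F d) (hv₂ : ∀ j, v.2 j ∈ degreeLT F d) :
    (stepanovPoly f e n v).natDegree ≤ (J - 1) * q + (n * f.natDegree + d) := by
  have hle {r : F[X]} (hr : r ∈ degreeLT F d) : r.natDegree ≤ d :=
    natDegree_le_of_degree_le (mem_degreeLT.mp hr).le
  refine natDegree_sum_le_of_forall_le _ _ fun j _ => natDegree_mul_le_of_le ?_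
    (natDegree_add_le_of_degree_le ((hle (hv₁ j)).trans (Nat.le_add_left _ _))
      (natDegree_mul_le_of_le natDegree_pow_le (hle (hv₂ j))))
  exact (natDegree_pow_le_of_le _ he).trans (Nat.mul_le_mul_right q (Nat.le_sub_one_of_lt j.2))

lemma card_mul_le_natDegree_of_le_rootMultiplicity {q : F[X]} {l : ℕ} {s : Finset F}
    (hs : ∀ x ∈ s, l ≤ q.rootMultiplicity x) : s.card * l ≤ q.natDegree := by
  classical
  calc s.card * l ≤ ∑ x ∈ s, q.roots.count x := by
        rw [← smul_eq_mul]
        exact Finset.card_nsmul_le_sum _ _ _ fun x hx => (hs x hx).trans_eq (count_roots q).symm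
    _ ≤ ∑ x ∈ s ∪ q.roots.toFinset, q.roots.count x :=
        Finset.sum_le_sum_of_subset Finset.subset_union_left
    _ = q.roots.card := Multiset.sum_count_eq_card fun x hx =>
        Finset.mem_union_right _ (Multiset.mem_toFinset.mpr hx)
    _ ≤ q.natDegree := q.card_roots'

end Stepanov

section StepanovZMod

open Polynomial

variable {p : ℕ} [Fact p.Prime]

lemma X_sub_C_pow_dvd_pow_sub_C_eval (f : (ZMod p)[X]) (t : ZMod p) :
    (X - C t) ^ p ∣ f ^ p - C (f.eval t) := by
  have h : f ^ p - C (f.eval t) = (f - C (f.eval t)) ^ p := by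
    rw [sub_pow_char, ← C_pow, ZMod.pow_card]
  rw [h]
  exact pow_dvd_pow_of_dvd X_sub_C_dvd_sub_C_eval p

lemma eq_zero_of_X_sub_C_pow_dvd_add {f r s : (ZMod p)[X]} {t : ZMod p} {h d : ℕ}
    (hp : p = 2 * h + 1) (hf : Squarefree f) (hf0 : 0 < f.natDegree) (ht : f.eval t ≠ 0)
    (hd0 : 0 < d) (hd : 2 * d + f.natDegree ≤ p) (hr : r ∈ degreeLT (ZMod p) d)
    (hs : s ∈ degreeLT (ZMod p) d) (hdvd : (X - C t) ^ p ∣ r + f ^ h * s) : r = 0 ∧ s = 0 := by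
  have hsub : r ^ 2 * f - C (f.eval t) * s ^ 2 = 0 := by
    refine eq_zero_of_dvd_of_natDegree_lt (p := (X - C t) ^ p) ?_ ?_
    · have hsplit : r ^ 2 * f - C (f.eval t) * s ^ 2 =
          (r + f ^ h * s) * ((r - f ^ h * s) * f) + (f ^ p - C (f.eval t)) * s ^ 2 := by
        have hfp : f ^ p = f ^ (2 * h + 1) := congrArg (f ^ ·) hp
        rw [hfp]; ring
      rw [hsplit]
      exact dvd_add (hdvd.mul_right _) ((X_sub_C_pow_dvd_pow_sub_C_eval f t).mul_right _)
    · have hlt {q : (ZMod p)[X]} (hq : q ∈ degreeLT (ZMod p) d) : q.natDegree < d := by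
        rcases eq_or_ne q 0 with rfl | hq0
        · simpa using hd0
        · exact (natDegree_lt_iff_degree_lt hq0).mpr (mem_degreeLT.mp hq)
      have hrd := hlt hr
      have hsd := hlt hs
      have h1 := (natDegree_mul_le (p := r ^ 2) (q := f)).trans
        (Nat.add_le_add_right natDegree_pow_le _)
      have h2 := (natDegree_C_mul_le (f.eval t) (s ^ 2)).trans natDegree_pow_le
      rw [natDegree_pow, natDegree_X_sub_C]
      exact (natDegree_sub_le _ _).trans_lt (max_lt (by omega) (by omega))
  have hr0 := eq_zero_of_sq_mul_eq_C_mul_sq hf hf0 ht (sub_eq_zero.mp hsub)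
  simpa [hr0, ht] using hsub

lemma forall_eq_zero_of_sum_pow_mul_eq_zero {R : Type*} [CommRing R] [IsDomain R] {e : R}
    (he : e ≠ 0) {J : ℕ} {c : Fin J → R} (hc : ∀ j, e ∣ c j → c j = 0)
    (hsum : ∑ j : Fin J, e ^ (j : ℕ) * c j = 0) : ∀ j, c j = 0 := by
  induction J with
  | zero => exact fun j => j.elim0
  | succ J ih =>
    have htail : ∑ j : Fin (J + 1), e ^ (j : ℕ) * c j =
        c 0 + e * ∑ j : Fin J, e ^ (j : ℕ) * c j.succ := by
      rw [Fin.sum_univ_succ, Finset.mul_sum]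
      simp only [Fin.val_zero, pow_zero, one_mul, Fin.val_succ, pow_succ', mul_assoc]
    rw [htail] at hsum
    have h0 : c 0 = 0 := hc 0 ⟨_, (eq_neg_of_add_eq_zero_left hsum).trans (mul_neg _ _).symm⟩
    rw [h0, zero_add] at hsum
    exact Fin.cases h0 (ih (fun j => hc j.succ) ((mul_eq_zero.mp hsum).resolve_left he))

lemma stepanovPoly_ne_zero {f : (ZMod p)[X]} {t : ZMod p} {h d J : ℕ}
    (hp : p = 2 * h + 1) (hf : Squarefree f) (hf0 : 0 < f.natDegree) (ht : f.eval t ≠ 0)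
    (hd0 : 0 < d) (hd : 2 * d + f.natDegree ≤ p)
    {v : (Fin J → (ZMod p)[X]) × (Fin J → (ZMod p)[X])} (hv : v ≠ 0)
    (hv₁ : ∀ j, v.1 j ∈ degreeLT (ZMod p) d) (hv₂ : ∀ j, v.2 j ∈ degreeLT (ZMod p) d) :
    stepanovPoly f ((X - C t) ^ p) h v ≠ 0 := by
  intro hzero
  have hdvd (j : Fin J) (hj : (X - C t) ^ p ∣ v.1 j + f ^ h * v.2 j) : v.1 j = 0 ∧ v.2 j = 0 :=
    eq_zero_of_X_sub_C_pow_dvd_add hp hf hf0 ht hd0 hd (hv₁ j) (hv₂ j) hj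
  have hterm := forall_eq_zero_of_sum_pow_mul_eq_zero (pow_ne_zero p (X_sub_C_ne_zero t))
    (fun j hj => by rw [(hdvd j hj).1, (hdvd j hj).2, mul_zero, zero_add]) hzero
  have hv0 (j : Fin J) := hdvd j ((hterm j).symm ▸ dvd_zero _)
  exact hv (Prod.ext (funext fun j => (hv0 j).1) (funext fun j => (hv0 j).2))

lemma card_eval_pow_eq_mul_le {f : (ZMod p)[X]} {a : ZMod p} {m h d J l : ℕ} (hp : p = 2 * h + 1)
    (hf : Squarefree f) (hm : f.natDegree = m + 1) (ha : a ≠ 0) (hd0 : 0 < d)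
    (hd : 2 * d + (m + 1) ≤ p) (hl : l ≤ p) (hcount : l * (d + m * l + J) < 2 * d * J) :
    (Finset.univ.filter fun x : ZMod p => f.eval x ^ h = a).card * l ≤
      (J - 1) * p + (h * (m + 1) + d) := by
  obtain ⟨t, ht⟩ : ∃ t, f.eval t ≠ 0 := by
    by_contra! hall
    have hcard := card_le_degree_of_subset_roots (p := f) (Z := (Finset.univ : Finset (ZMod p)))
      fun x _ => (mem_roots (ne_zero_of_natDegree_gt (n := 0) (by omega))).mpr (hall x)
    rw [Finset.card_univ, ZMod.card] at hcard
    omega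
  obtain ⟨v, hv, hv₁, hv₂, hzero⟩ :=
    exists_stepanovCondition_eq_zero (e₀ := X - C t) h a hm (natDegree_X_sub_C_le t) hcount
  have hne := stepanovPoly_ne_zero hp hf (by omega) ht hd0 (by omega) hv hv₁ hv₂
  have hmult : ∀ x ∈ Finset.univ.filter fun x : ZMod p => f.eval x ^ h = a,
      l ≤ (stepanovPoly f ((X - C t) ^ p) h v).rootMultiplicity x := by
    intro x hx
    have hx' : f.eval x ^ h = a := (Finset.mem_filter.mp hx).2
    have hfx : f.eval x ≠ 0 := fun h0 => ha <| by
      rw [← hx', h0, zero_pow (by omega)]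
    have hroot (k : ℕ) (hk : k < l) :
        (derivative^[k] (stepanovPoly f ((X - C t) ^ p) h v)).IsRoot x :=
      eval_iterate_derivative_stepanovPoly (by simp [derivative_pow]) hx' hfx
        (by simp [ZMod.pow_card]) (hzero k hk)
    cases l with
    | zero => exact Nat.zero_le _
    | succ l =>
      refine lt_rootMultiplicity_of_isRoot_iterate_derivative_of_mem_nonZeroDivisors hne
        (fun k hk => hroot k (Nat.lt_succ_of_le hk)) (mem_nonZeroDivisors_of_ne_zero ?_)
      rw [Ne, CharP.cast_eq_zero_iff (ZMod p) p, (Fact.out : p.Prime).dvd_factorial]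
      omega
  have hdeg : ((X - C t) ^ p).natDegree ≤ p := by rw [natDegree_pow, natDegree_X_sub_C, mul_one]
  exact (card_mul_le_natDegree_of_le_rootMultiplicity hmult).trans
    (hm ▸ natDegree_stepanovPoly_le hdeg hv₁ hv₂)

theorem card_eval_pow_eq_mul_le_of_sq_le {f : (ZMod p)[X]} {a : ZMod p} {h m l : ℕ}
    (hp : p = 2 * h + 1) (hf : Squarefree f) (hm : f.natDegree = m + 1) (ha : a ≠ 0)
    (hl : l ^ 2 ≤ p) (hml : 6 * (m + 1) ≤ l) :
    (Finset.univ.filter fun x : ZMod p => f.eval x ^ h = a).card * l ≤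
      (l / 2 + m + 1) * p + h * (m + 2) := by
  have hmh : m + 1 < h := by nlinarith
  obtain ⟨d, rfl⟩ : ∃ d, h = d + (m + 1) := ⟨h - (m + 1), by omega⟩
  have hcount : l * (d + m * l + (l / 2 + m + 2)) < 2 * d * (l / 2 + m + 2) := by
    have hlower : d * (l + 2 * m + 3) ≤ d * (2 * (l / 2 + m + 2)) :=
      Nat.mul_le_mul_left d (by omega)
    have hupper : 2 * (d + m * l + (l / 2 + m + 2)) ≤ 2 * d + (2 * m + 1) * l + 2 * m + 4 := by
      nlinarith [Nat.div_mul_le_self l 2]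
    have hupper := Nat.mul_le_mul_left l hupper
    have hd : l ^ 2 ≤ 2 * d + 2 * m + 3 := by omega
    nlinarith [hd]
  refine (card_eval_pow_eq_mul_le hp hf hm ha (by omega) (by omega) ?_ hcount).trans ?_
  · nlinarith
  · rw [show l / 2 + m + 2 - 1 = l / 2 + m + 1 by omega]
    nlinarith

lemma card_eval_pow_eq_le_of_le_sqrt {f : (ZMod p)[X]} {a : ZMod p} {h : ℕ} (hp : p = 2 * h + 1)
    (hf : Squarefree f) (hf0 : 0 < f.natDegree) (ha : a ≠ 0) (hl : 6 * f.natDegree ≤ Nat.sqrt p) :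
    ((Finset.univ.filter fun x : ZMod p => f.eval x ^ h = a).card : ℝ) ≤
      p / 2 + 3 * f.natDegree * √p := by
  obtain ⟨m, hm⟩ : ∃ m, f.natDegree = m + 1 := ⟨f.natDegree - 1, by omega⟩
  rw [hm] at hl ⊢
  push_cast
  have hbound := card_eval_pow_eq_mul_le_of_sq_le hp hf hm ha (Nat.sqrt_le' p) hl
  set N := (Finset.univ.filter fun x : ZMod p => f.eval x ^ h = a).card
  set l := Nat.sqrt p
  have hsq : √(p : ℝ) ^ 2 = p := Real.sq_sqrt (Nat.cast_nonneg p)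
  have hsqrt : √(p : ℝ) ≤ l + 1 := Real.real_sqrt_le_nat_sqrt_succ
  have hboundR : (N : ℝ) * l ≤ (l / 2 + m + 1) * p + h * (m + 2) := by
    have hhalf : ((l / 2 : ℕ) : ℝ) ≤ l / 2 := Nat.cast_div_le
    have hbound' : (N : ℝ) * l ≤ (((l / 2 : ℕ) : ℝ) + m + 1) * p + h * (m + 2) := by
      exact_mod_cast hbound
    nlinarith [(Nat.cast_nonneg p : (0 : ℝ) ≤ p)]
  have hhp : (h : ℝ) ≤ p / 2 := by
    rw [le_div_iff₀ two_pos]; exact_mod_cast (by omega : h * 2 ≤ p)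
  have hl6 : (6 : ℝ) * (m + 1) ≤ l := by exact_mod_cast hl
  have hm0 : (0 : ℝ) ≤ m := Nat.cast_nonneg m
  have hl0 : (0 : ℝ) < l := by linarith
  have hpl : (p : ℝ) ≤ 7 / 6 * √p * l := by
    nlinarith [Real.sqrt_nonneg (p : ℝ)]
  refine le_of_mul_le_mul_right ?_ hl0
  calc (N : ℝ) * l ≤ (l / 2 + m + 1) * p + p / 2 * (m + 2) := by nlinarith
    _ ≤ p / 2 * l + 2 * (m + 1) * p := by nlinarith [mul_nonneg hm0 (Nat.cast_nonneg (α := ℝ) p)]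
    _ ≤ p / 2 * l + 2 * (m + 1) * (7 / 6 * √p * l) := by gcongr
    _ ≤ (p / 2 + 3 * (m + 1) * √p) * l := by
      have : 0 ≤ (m + 1) * √(p : ℝ) * l := by positivity
      nlinarith

theorem card_eval_pow_eq_le {f : (ZMod p)[X]} {a : ZMod p} {h : ℕ} (hp : p = 2 * h + 1)
    (hf : Squarefree f) (hf0 : 0 < f.natDegree) (ha : a ≠ 0) :
    ((Finset.univ.filter fun x : ZMod p => f.eval x ^ h = a).card : ℝ) ≤
      p / 2 + 3 * f.natDegree * √p := by
  rcases lt_or_ge (Nat.sqrt p) (6 * f.natDegree) with hsmall | hlarge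
  · have hsq : √(p : ℝ) ^ 2 = p := Real.sq_sqrt (Nat.cast_nonneg p)
    have hsqrt : √(p : ℝ) ≤ 6 * f.natDegree :=
      Real.real_sqrt_le_nat_sqrt_succ.trans (by exact_mod_cast hsmall)
    have hcard : ((Finset.univ.filter fun x : ZMod p => f.eval x ^ h = a).card : ℝ) ≤ p := by
      exact_mod_cast (Finset.card_le_univ _).trans_eq (ZMod.card p)
    nlinarith [Real.sqrt_nonneg (p : ℝ)]
  · exact card_eval_pow_eq_le_of_le_sqrt hp hf hf0 ha hlarge

end StepanovZMod

section CharacterSum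

open Polynomial

variable {p : ℕ} [Fact p.Prime]

lemma card_quadraticChar_eval_eq_le {f : (ZMod p)[X]} (hp : p ≠ 2) (hf : Squarefree f)
    (hf0 : 0 < f.natDegree) {u : ℤ} (hu : IsUnit u) :
    ((Finset.univ.filter fun x => quadraticChar (ZMod p) (f.eval x) = u).card : ℝ) ≤
      p / 2 + 3 * f.natDegree * √p := by
  obtain ⟨h, hph⟩ : ∃ h, p = 2 * h + 1 := (Fact.out : p.Prime).odd_of_ne_two hp
  have hpow (y : ZMod p) : (quadraticChar (ZMod p) y : ZMod p) = y ^ h := by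
    rw [quadraticChar_eq_pow_of_char_ne_two' (by rwa [ZMod.ringChar_zmod_n]), ZMod.card]
    congr 1
    omega
  have hu0 : (u : ZMod p) ≠ 0 := (hu.map (Int.castRingHom (ZMod p))).ne_zero
  refine le_trans ?_ (card_eval_pow_eq_le hph hf hf0 hu0)
  gcongr with x
  intro hx
  rw [← hpow, hx]

lemma card_quadraticChar_eval_eq_zero_le {f : (ZMod p)[X]} (hf : f ≠ 0) :
    (Finset.univ.filter fun x => quadraticChar (ZMod p) (f.eval x) = 0).card ≤ f.natDegree :=
  card_le_degree_of_subset_roots fun x hx => by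
    have hx0 := quadraticChar_eq_zero_iff.mp (Finset.mem_filter.mp hx).2
    exact (mem_roots hf).mpr hx0

lemma quadraticChar_trichotomy (y : ZMod p) :
    quadraticChar (ZMod p) y = 0 ∨ quadraticChar (ZMod p) y = 1 ∨ quadraticChar (ZMod p) y = -1 :=
  (eq_or_ne y 0).imp quadraticChar_eq_zero_iff.mpr quadraticChar_dichotomy

lemma natDegree_le_natDegree_mul_sqrt (f : (ZMod p)[X]) :
    (f.natDegree : ℝ) ≤ f.natDegree * √p :=
  le_mul_of_one_le_right (Nat.cast_nonneg _) <|
    Real.one_le_sqrt.mpr <| Nat.one_le_cast.mpr (Fact.out : p.Prime).one_le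

theorem abs_sum_quadraticChar_eval_le {f : (ZMod p)[X]} (hp : p ≠ 2) (hf : Squarefree f)
    (hf0 : 0 < f.natDegree) :
    |∑ x, (quadraticChar (ZMod p) (f.eval x) : ℝ)| ≤ 7 * f.natDegree * √p := by
  have hone := card_quadraticChar_eval_eq_le hp hf hf0 isUnit_one
  have hneg := card_quadraticChar_eval_eq_le hp hf hf0 isUnit_neg_one
  have hzero : ((Finset.univ.filter fun x => quadraticChar (ZMod p) (f.eval x) = 0).card : ℝ) ≤
      f.natDegree := by
    exact_mod_cast card_quadraticChar_eval_eq_zero_le hf.ne_zero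
  have hsqrt := natDegree_le_natDegree_mul_sqrt f
  have hsum_one : ∑ x, (quadraticChar (ZMod p) (f.eval x) : ℝ) =
      2 * (Finset.univ.filter fun x => quadraticChar (ZMod p) (f.eval x) = 1).card +
        (Finset.univ.filter fun x => quadraticChar (ZMod p) (f.eval x) = 0).card - p := by
    have hcard : (p : ℝ) = ∑ _x : ZMod p, 1 := by simp
    rw [hcard, Finset.natCast_card_filter, Finset.natCast_card_filter, Finset.mul_sum,
      ← Finset.sum_add_distrib, ← Finset.sum_sub_distrib]
    refine Finset.sum_congr rfl fun x _ => ?_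
    rcases quadraticChar_trichotomy (f.eval x) with hx | hx | hx <;> rw [hx] <;> norm_num
  have hsum_neg : ∑ x, (quadraticChar (ZMod p) (f.eval x) : ℝ) =
      p - 2 * (Finset.univ.filter fun x => quadraticChar (ZMod p) (f.eval x) = -1).card -
        (Finset.univ.filter fun x => quadraticChar (ZMod p) (f.eval x) = 0).card := by
    have hcard : (p : ℝ) = ∑ _x : ZMod p, 1 := by simp
    rw [hcard, Finset.natCast_card_filter, Finset.natCast_card_filter, Finset.mul_sum,
      ← Finset.sum_sub_distrib, ← Finset.sum_sub_distrib]
    refine Finset.sum_congr rfl fun x _ => ?_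
    rcases quadraticChar_trichotomy (f.eval x) with hx | hx | hx <;> rw [hx] <;> norm_num
  rw [abs_le]
  constructor <;> linarith

theorem card_quadraticChar_eval_ne_neg_one_le {f : (ZMod p)[X]} (hp : p ≠ 2) (hf : Squarefree f)
    (hf0 : 0 < f.natDegree) :
    ((Finset.univ.filter fun x => quadraticChar (ZMod p) (f.eval x) ≠ -1).card : ℝ) ≤
      p / 2 + 4 * f.natDegree * √p := by
  have hsub : (Finset.univ.filter fun x => quadraticChar (ZMod p) (f.eval x) ≠ -1) ⊆
      (Finset.univ.filter fun x => quadraticChar (ZMod p) (f.eval x) = 1) ∪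
        Finset.univ.filter fun x => quadraticChar (ZMod p) (f.eval x) = 0 := by
    intro x hx
    have := quadraticChar_trichotomy (f.eval x)
    simp only [Finset.mem_union, Finset.mem_filter, Finset.mem_univ, true_and] at hx ⊢
    tauto
  have hone := card_quadraticChar_eval_eq_le hp hf hf0 isUnit_one
  have hsqrt := natDegree_le_natDegree_mul_sqrt f
  calc ((Finset.univ.filter fun x => quadraticChar (ZMod p) (f.eval x) ≠ -1).card : ℝ)
      ≤ (Finset.univ.filter fun x => quadraticChar (ZMod p) (f.eval x) = 1).card +
          (Finset.univ.filter fun x => quadraticChar (ZMod p) (f.eval x) = 0).card := by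
        exact_mod_cast (Finset.card_le_card hsub).trans (Finset.card_union_le _ _)
    _ ≤ p / 2 + 3 * f.natDegree * √p + f.natDegree :=
        add_le_add hone (by exact_mod_cast card_quadraticChar_eval_eq_zero_le hf.ne_zero)
    _ ≤ p / 2 + 4 * f.natDegree * √p := by linarith

end CharacterSum

section CubicOnLine

open Polynomial

variable {F : Type*} [Field F]

/-- The diagonal cubic form `α X³ + β Y³` restricted to the line `t ↦ x + t e`. -/
noncomputable def cubicOnLine (α β : F) (x e : F × F) : F[X] :=
  C α * (C x.1 + C e.1 * X) ^ 3 + C β * (C x.2 + C e.2 * X) ^ 3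

@[simp]
lemma eval_cubicOnLine (α β : F) (x e : F × F) (t : F) :
    (cubicOnLine α β x e).eval t = α * (x.1 + e.1 * t) ^ 3 + β * (x.2 + e.2 * t) ^ 3 := by
  simp [cubicOnLine]

lemma natDegree_cubicOnLine_le (α β : F) (x e : F × F) : (cubicOnLine α β x e).natDegree ≤ 3 := by
  unfold cubicOnLine
  compute_degree

lemma natDegree_cubicOnLine_pos {α β : F} {x e : F × F} (h3 : (3 : F) ≠ 0) (hα : α ≠ 0)
    (hβ : β ≠ 0) (hdet : e.1 * x.2 - e.2 * x.1 ≠ 0) : 0 < (cubicOnLine α β x e).natDegree := by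
  by_contra! hdeg
  have hexpand : cubicOnLine α β x e =
      C (α * e.1 ^ 3 + β * e.2 ^ 3) * X ^ 3 +
        C (3 * (α * e.1 ^ 2 * x.1 + β * e.2 ^ 2 * x.2)) * X ^ 2 +
        C (3 * (α * e.1 * x.1 ^ 2 + β * e.2 * x.2 ^ 2)) * X + C (α * x.1 ^ 3 + β * x.2 ^ 3) := by
    simp only [cubicOnLine, map_add, map_mul, map_pow, map_ofNat]
    ring
  have h₃ : α * e.1 ^ 3 + β * e.2 ^ 3 = 0 := by
    rw [← coeff_eq_zero_of_natDegree_lt (hdeg.trans_lt three_pos), hexpand]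
    simp only [coeff_add, coeff_C_mul, coeff_X_pow, coeff_X, coeff_C]
    norm_num
  have h₂ : α * e.1 ^ 2 * x.1 + β * e.2 ^ 2 * x.2 = 0 := by
    refine (mul_eq_zero.mp ?_).resolve_left h3
    rw [← coeff_eq_zero_of_natDegree_lt (hdeg.trans_lt two_pos), hexpand]
    simp only [coeff_add, coeff_C_mul, coeff_X_pow, coeff_X, coeff_C]
    norm_num
  have he₁ : α * e.1 ^ 2 * (e.1 * x.2 - e.2 * x.1) = 0 := by linear_combination x.2 * h₃ - e.2 * h₂
  have he₂ : β * e.2 ^ 2 * (e.1 * x.2 - e.2 * x.1) = 0 := by linear_combination e.1 * h₂ - x.1 * h₃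
  simp only [mul_eq_zero, hα, hβ, hdet, pow_eq_zero_iff, ne_eq, OfNat.ofNat_ne_zero,
    not_false_eq_true, false_or, or_false] at he₁ he₂
  simp [he₁, he₂] at hdet

/- Both linear factors `L₁`, `L₂` squared are combinations of the cubic and its derivative, and
`L₁`, `L₂` are coprime. -/
lemma separable_cubicOnLine {α β : F} {x e : F × F} (h3 : (3 : F) ≠ 0) (hα : α ≠ 0)
    (hβ : β ≠ 0) (hdet : e.1 * x.2 - e.2 * x.1 ≠ 0) : (cubicOnLine α β x e).Separable := by
  set f := cubicOnLine α β x e with hf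
  set L₁ : F[X] := C x.1 + C e.1 * X with hL₁
  set L₂ : F[X] := C x.2 + C e.2 * X with hL₂
  set Δ := e.1 * x.2 - e.2 * x.1
  have hΔ : C e.1 * L₂ - C e.2 * L₁ = C Δ := by
    simp only [hL₁, hL₂, Δ, map_sub, map_mul]
    ring
  have hderiv : derivative f = C 3 * (C α * C e.1 * L₁ ^ 2 + C β * C e.2 * L₂ ^ 2) := by
    simp only [hf, cubicOnLine, hL₁, hL₂, derivative_add, derivative_mul, derivative_pow,
      derivative_C, derivative_X, zero_mul, zero_add, mul_one, Nat.cast_ofNat,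
      Nat.add_one_sub_one, map_ofNat]
    ring
  have hfL : f = C α * L₁ ^ 3 + C β * L₂ ^ 3 := rfl
  have hcomb₂ : C 3 * C e.1 * f - L₁ * derivative f = C (3 * β * Δ) * L₂ ^ 2 := by
    rw [hderiv, hfL, C_mul, C_mul, ← hΔ]
    ring
  have hcomb₁ : L₂ * derivative f - C 3 * C e.2 * f = C (3 * α * Δ) * L₁ ^ 2 := by
    rw [hderiv, hfL, C_mul, C_mul, ← hΔ]
    ring
  have hunit {c : F} (hc : c ≠ 0) : IsUnit (C c) := isUnit_C.mpr hc.isUnit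
  have hcop : IsCoprime (L₁ ^ 2) (L₂ ^ 2) := by
    refine IsCoprime.pow ⟨-C (Δ⁻¹ * e.2), C (Δ⁻¹ * e.1), ?_⟩
    rw [← C_1, ← inv_mul_cancel₀ hdet, C_mul (b := Δ), ← hΔ, C_mul, C_mul]
    ring
  obtain ⟨u, v, huv⟩ := (isCoprime_mul_unit_left_left (hunit (c := 3 * α * Δ) (by
    simp [h3, hα, Δ, hdet])) _ _).mpr ((isCoprime_mul_unit_left_right (hunit (c := 3 * β * Δ) (by
    simp [h3, hβ, Δ, hdet])) _ _).mpr hcop)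
  refine ⟨v * (C 3 * C e.1) - u * (C 3 * C e.2), u * L₂ - v * L₁, ?_⟩
  rw [← huv, ← hcomb₁, ← hcomb₂]
  ring

end CubicOnLine

section CubicCharacterSum

variable {p : ℕ} [Fact p.Prime]

lemma three_ne_zero_zmod (hp : 3 < p) : (3 : ZMod p) ≠ 0 := by
  exact_mod_cast mt (ZMod.natCast_eq_zero_iff 3 p).mp (Nat.not_dvd_of_pos_of_lt three_pos hp)

theorem abs_sum_quadraticChar_cubic_le (hp : 3 < p) {α β : ZMod p} {x e : ZMod p × ZMod p}
    (hα : α ≠ 0) (hβ : β ≠ 0) (hdet : e.1 * x.2 - e.2 * x.1 ≠ 0) :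
    |∑ t, (quadraticChar (ZMod p) (α * (x.1 + e.1 * t) ^ 3 + β * (x.2 + e.2 * t) ^ 3) : ℝ)| ≤
      21 * √p := by
  have h3 := three_ne_zero_zmod hp
  have hsum := abs_sum_quadraticChar_eval_le (by omega)
    (separable_cubicOnLine h3 hα hβ hdet).squarefree (natDegree_cubicOnLine_pos h3 hα hβ hdet)
  simp only [eval_cubicOnLine] at hsum
  have hdeg : ((cubicOnLine α β x e).natDegree : ℝ) ≤ 3 := by
    exact_mod_cast natDegree_cubicOnLine_le α β x e
  exact hsum.trans (mul_le_mul_of_nonneg_right (by linarith) (Real.sqrt_nonneg _))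

theorem card_quadraticChar_cubic_ne_neg_one_le (hp : 3 < p) {α β : ZMod p} {x e : ZMod p × ZMod p}
    (hα : α ≠ 0) (hβ : β ≠ 0) (hdet : e.1 * x.2 - e.2 * x.1 ≠ 0) :
    ((Finset.univ.filter fun t =>
      quadraticChar (ZMod p) (α * (x.1 + e.1 * t) ^ 3 + β * (x.2 + e.2 * t) ^ 3) ≠ -1).card : ℝ) ≤
      p / 2 + 12 * √p := by
  have h3 := three_ne_zero_zmod hp
  have hcard := card_quadraticChar_eval_ne_neg_one_le (by omega)
    (separable_cubicOnLine h3 hα hβ hdet).squarefree (natDegree_cubicOnLine_pos h3 hα hβ hdet)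
  simp only [eval_cubicOnLine] at hcard
  have hdeg : ((cubicOnLine α β x e).natDegree : ℝ) ≤ 3 := by
    exact_mod_cast natDegree_cubicOnLine_le α β x e
  have := mul_le_mul_of_nonneg_right hdeg (Real.sqrt_nonneg (p : ℝ))
  linarith

end CubicCharacterSum

section FiniteFourier

variable {G H ι : Type*} [AddCommGroup G] [AddCommGroup H]

lemma addChar_prod_apply (ψ : AddChar (G × H) ℂ) (z : G × H) :
    ψ z = ψ.compAddMonoidHom (AddMonoidHom.inl G H) z.1 *
      ψ.compAddMonoidHom (AddMonoidHom.inr G H) z.2 := by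
  simp [← AddChar.map_add_eq_mul]

variable [Fintype G] [Fintype H]

lemma card_mul_sum_sum_sub (f : G → ℂ) (A : Finset ι) (u : ι → G) :
    (Fintype.card G : ℂ) * ∑ x ∈ A, ∑ y ∈ A, f (u x - u y) =
      ∑ ψ : AddChar G ℂ, (∑ z, f z * ψ z) * (‖∑ x ∈ A, ψ (u x)‖ ^ 2 : ℝ) := by
  classical
  have hinv (g : G) : (Fintype.card G : ℂ) * f g = ∑ ψ : AddChar G ℂ, ∑ z, f z * ψ (z - g) := by
    rw [Finset.sum_comm]
    simp only [← Finset.mul_sum, AddChar.sum_apply_eq_ite, sub_eq_zero, mul_ite, mul_zero,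
      Finset.sum_ite_eq', Finset.mem_univ, if_true, mul_comm]
  have hsq (ψ : AddChar G ℂ) :
      ((‖∑ x ∈ A, ψ (u x)‖ ^ 2 : ℝ) : ℂ) = ∑ x ∈ A, ∑ y ∈ A, ψ (-(u x - u y)) := by
    rw [Complex.ofReal_pow, ← Complex.conj_mul', map_sum, Finset.sum_mul_sum]
    simp_rw [← AddChar.map_neg_eq_conj, ← AddChar.map_add_eq_mul, neg_sub', sub_neg_eq_add]
  have hterm (ψ : AddChar G ℂ) : (∑ z, f z * ψ z) * (‖∑ x ∈ A, ψ (u x)‖ ^ 2 : ℝ) =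
      ∑ x ∈ A, ∑ y ∈ A, ∑ z, f z * ψ (z - (u x - u y)) := by
    simp_rw [hsq, Finset.mul_sum, Finset.sum_mul, sub_eq_add_neg _ (u _ - u _),
      AddChar.map_add_eq_mul, mul_assoc]
  simp_rw [hterm, Finset.mul_sum, hinv]
  conv_rhs => rw [Finset.sum_comm]
  refine Finset.sum_congr rfl fun x _ => ?_
  exact Finset.sum_comm

theorem norm_sum_sum_sub_le {f : G → ℂ} {M : ℝ} (hf : ∀ ψ : AddChar G ℂ, ‖∑ z, f z * ψ z‖ ≤ M)
    {A : Finset ι} {u : ι → G} (hu : Set.InjOn u A) :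
    ‖∑ x ∈ A, ∑ y ∈ A, f (u x - u y)‖ ≤ M * A.card := by
  classical
  have hparseval : ∑ ψ : AddChar G ℂ, ‖∑ x ∈ A, ψ (u x)‖ ^ 2 = Fintype.card G * A.card := by
    have hdiag : ∑ x ∈ A, ∑ y ∈ A, (if u x - u y = 0 then (1 : ℂ) else 0) = A.card := by
      have hinner (x : ι) (hx : x ∈ A) :
          ∑ y ∈ A, (if u x - u y = 0 then (1 : ℂ) else 0) = 1 := by
        rw [Finset.sum_eq_single_of_mem x hx fun y hy hyx => if_neg fun h =>
          hyx (hu hx hy (sub_eq_zero.mp h)).symm, sub_self, if_pos rfl]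
      rw [Finset.sum_congr rfl hinner, Finset.sum_const, nsmul_eq_mul, mul_one]
    have hdelta := card_mul_sum_sum_sub (fun z : G => if z = 0 then (1 : ℂ) else 0) A u
    simp only [hdiag, ite_mul, zero_mul, one_mul, Finset.sum_ite_eq', Finset.mem_univ, if_true,
      AddChar.map_zero_eq_one] at hdelta
    exact_mod_cast hdelta.symm
  have hG : (0 : ℝ) < Fintype.card G := Nat.cast_pos.mpr Fintype.card_pos
  refine le_of_mul_le_mul_left ?_ hG
  calc (Fintype.card G : ℝ) * ‖∑ x ∈ A, ∑ y ∈ A, f (u x - u y)‖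
      = ‖∑ ψ : AddChar G ℂ, (∑ z, f z * ψ z) * (‖∑ x ∈ A, ψ (u x)‖ ^ 2 : ℝ)‖ := by
        rw [← card_mul_sum_sum_sub, norm_mul, Complex.norm_natCast]
    _ ≤ ∑ ψ : AddChar G ℂ, M * ‖∑ x ∈ A, ψ (u x)‖ ^ 2 := by
        refine norm_sum_le_of_le _ fun ψ _ => ?_
        rw [norm_mul, Complex.norm_real, Real.norm_of_nonneg (by positivity)]
        gcongr
        exact hf ψ
    _ = Fintype.card G * (M * A.card) := by rw [← Finset.mul_sum, hparseval]; ring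

theorem norm_sum_mul_addChar_prod_le {f : G → ℂ} {g : H → ℂ} {M N : ℝ}
    (hf : ∀ ψ : AddChar G ℂ, ‖∑ z, f z * ψ z‖ ≤ M) (hg : ∀ ψ : AddChar H ℂ, ‖∑ z, g z * ψ z‖ ≤ N)
    (ψ : AddChar (G × H) ℂ) : ‖∑ z : G × H, f z.1 * g z.2 * ψ z‖ ≤ M * N := by
  have hfactor (z : G × H) : f z.1 * g z.2 * ψ z =
      f z.1 * ψ.compAddMonoidHom (AddMonoidHom.inl G H) z.1 *
        (g z.2 * ψ.compAddMonoidHom (AddMonoidHom.inr G H) z.2) := by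
    rw [addChar_prod_apply, mul_mul_mul_comm]
  simp_rw [hfactor, Fintype.sum_prod_type]
  rw [← Fintype.sum_mul_sum, norm_mul]
  exact mul_le_mul (hf _) (hg _) (norm_nonneg _) ((norm_nonneg _).trans (hf 0))

end FiniteFourier

section GaussSum

variable {F : Type*} [Field F] [Fintype F]

lemma norm_gaussSum {χ : MulChar F ℂ} (hχ : χ ≠ 1) {ψ : AddChar F ℂ} (hψ : ψ.IsPrimitive) :
    ‖gaussSum χ ψ‖ = √(Fintype.card F) := by
  have hmul := gaussSum_mul_gaussSum_eq_card hχ hψ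
  rw [← star_gaussSum_eq, Complex.star_def, Complex.mul_conj'] at hmul
  rw [eq_comm, Real.sqrt_eq_iff_eq_sq (Nat.cast_nonneg _) (norm_nonneg _)]
  exact_mod_cast hmul.symm

lemma sum_mulChar_mul_addChar_mul {χ : MulChar F ℂ} (hχ : χ ≠ 1) (ψ : AddChar F ℂ) (a : F) :
    ∑ l, χ l * ψ (l * a) = gaussSum χ ψ * χ⁻¹ a := by
  rcases eq_or_ne a 0 with rfl | ha
  · simp [MulChar.sum_eq_zero_of_ne_one hχ, MulChar.map_zero]
  · simpa [gaussSum, mul_comm] using gaussSum_mulShift_eq χ ψ (Units.mk0 a ha)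

theorem card_sub_one_mul_sum_mul_addChar {V : Type*} [AddCommGroup V] [Module F V] [Fintype V]
    {χ : MulChar F ℂ} (hχ : χ ≠ 1) (ψ : AddChar F ℂ) {g : V → ℂ}
    (hg : ∀ (l : F) v, l ≠ 0 → g (l • v) = χ l * g v) (Λ : V →ₗ[F] F) :
    ((Fintype.card F : ℂ) - 1) * ∑ v, g v * ψ (Λ v) =
      gaussSum χ ψ * ∑ v, g v * χ⁻¹ (Λ v) := by
  classical
  have hscale (l : F) : ∑ v, g v * (χ l * ψ (l * Λ v)) =
      (∑ v, g v * ψ (Λ v)) - if l = 0 then ∑ v, g v * ψ (Λ v) else 0 := by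
    split_ifs with hl
    · simp [hl, MulChar.map_zero]
    · rw [sub_zero, ← (LinearEquiv.smulOfNeZero F V l hl).toEquiv.sum_comp fun v => g v * ψ (Λ v)]
      refine Finset.sum_congr rfl fun v _ => ?_
      simp [hg l v hl, mul_assoc, mul_left_comm]
  calc ((Fintype.card F : ℂ) - 1) * ∑ v, g v * ψ (Λ v)
      = ∑ l, ∑ v, g v * (χ l * ψ (l * Λ v)) := by
        simp [hscale, Finset.sum_sub_distrib, sub_mul]
    _ = gaussSum χ ψ * ∑ v, g v * χ⁻¹ (Λ v) := by
        rw [Finset.sum_comm, Finset.mul_sum]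
        refine Finset.sum_congr rfl fun v _ => ?_
        rw [← Finset.mul_sum, sum_mulChar_mul_addChar_mul hχ]
        ring

end GaussSum

section CubicFourier

variable {p : ℕ} [Fact p.Prime]

/-- The quadratic character of the diagonal binary cubic form `α X³ + β Y³`, as a complex valued
function on the plane over `ZMod p`. -/
noncomputable def cubicSymbol (α β : ZMod p) (z : ZMod p × ZMod p) : ℂ :=
  (quadraticChar (ZMod p) (α * z.1 ^ 3 + β * z.2 ^ 3) : ℂ)

/-- The quadratic character of `ZMod p` with complex values. -/
noncomputable def quadraticMulChar (p : ℕ) [Fact p.Prime] : MulChar (ZMod p) ℂ :=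
  (quadraticChar (ZMod p)).ringHomComp (Int.castRingHom ℂ)

lemma quadraticMulChar_ne_one (hp : p ≠ 2) : quadraticMulChar p ≠ 1 :=
  (MulChar.ringHomComp_ne_one_iff Int.cast_injective).mpr
    (quadraticChar_ne_one (by rwa [ZMod.ringChar_zmod_n]))

lemma quadraticMulChar_inv : (quadraticMulChar p)⁻¹ = quadraticMulChar p :=
  ((quadraticChar_isQuadratic (ZMod p)).comp _).inv

lemma cubicSymbol_smul (α β : ZMod p) (l : ZMod p) (z : ZMod p × ZMod p) (hl : l ≠ 0) :
    cubicSymbol α β (l • z) = quadraticMulChar p l * cubicSymbol α β z := by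
  have hl3 : quadraticChar (ZMod p) (l ^ 3) = quadraticChar (ZMod p) l := by
    rw [pow_succ, map_mul, quadraticChar_sq_one' hl, one_mul]
  have hform : α * (l * z.1) ^ 3 + β * (l * z.2) ^ 3 = l ^ 3 * (α * z.1 ^ 3 + β * z.2 ^ 3) := by
    ring
  simp only [cubicSymbol, Prod.smul_fst, Prod.smul_snd, smul_eq_mul, hform, map_mul, hl3,
    Int.cast_mul]
  rfl

/-- The linear form `z ↦ h₁ z₁ + h₂ z₂` on the plane over `ZMod p`. -/
def planeForm (h : ZMod p × ZMod p) : ZMod p × ZMod p →ₗ[ZMod p] ZMod p :=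
  h.1 • LinearMap.fst _ _ _ + h.2 • LinearMap.snd _ _ _

lemma planeForm_apply (h z : ZMod p × ZMod p) : planeForm h z = h.1 * z.1 + h.2 * z.2 := rfl

lemma exists_planeForm_eq_one {h : ZMod p × ZMod p} (hh : h ≠ 0) : ∃ w, planeForm h w = 1 := by
  have hh' : h.1 ≠ 0 ∨ h.2 ≠ 0 := by
    rwa [← not_and_or, ← Prod.mk_eq_zero]
  rcases hh' with h₁ | h₂
  · exact ⟨(h.1⁻¹, 0), by simp [planeForm_apply, h₁]⟩
  · exact ⟨(0, h.2⁻¹), by simp [planeForm_apply, h₂]⟩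

/-- The coordinates `(c, t)` of the plane in which the point `c w + t (-h₂, h₁)` moves along the
line `planeForm h = c` as `t` varies. -/
def lineParam {h w : ZMod p × ZMod p} (hw : planeForm h w = 1) :
    ZMod p × ZMod p ≃ ZMod p × ZMod p where
  toFun s := (s.1 * w.1 + -h.2 * s.2, s.1 * w.2 + h.1 * s.2)
  invFun z := (planeForm h z, w.1 * z.2 - w.2 * z.1)
  left_inv s := by
    rw [planeForm_apply] at hw
    ext <;> simp only [planeForm_apply]
    · linear_combination s.1 * hw
    · linear_combination s.2 * hw
  right_inv z := by
    rw [planeForm_apply] at hw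
    ext <;> simp only [planeForm_apply]
    · linear_combination z.1 * hw
    · linear_combination z.2 * hw

lemma planeForm_lineParam {h w : ZMod p × ZMod p} (hw : planeForm h w = 1) (s : ZMod p × ZMod p) :
    planeForm h (lineParam hw s) = s.1 :=
  congrArg Prod.fst ((lineParam hw).symm_apply_apply s)

/- For `h = 0` the sum vanishes; otherwise the plane is a union of the lines `planeForm h = c`, and
the sum over each of them with `c ≠ 0` is a one-variable cubic character sum. -/
theorem norm_sum_cubicSymbol_mul_quadraticMulChar_le (hp : 3 < p) {α β : ZMod p} (hα : α ≠ 0)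
    (hβ : β ≠ 0) (h : ZMod p × ZMod p) :
    ‖∑ z, cubicSymbol α β z * quadraticMulChar p (planeForm h z)‖ ≤ (p - 1) * (21 * √p) := by
  have hp1 : (0 : ℝ) ≤ p - 1 := by rw [sub_nonneg]; exact_mod_cast (by omega : 1 ≤ p)
  rcases eq_or_ne h 0 with rfl | hh
  · simp only [planeForm_apply, Prod.fst_zero, Prod.snd_zero, zero_mul, add_zero, MulChar.map_zero,
      mul_zero, Finset.sum_const_zero, norm_zero]
    positivity
  obtain ⟨w, hw⟩ := exists_planeForm_eq_one hh
  have hline (c : ZMod p) :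
      ‖∑ t, cubicSymbol α β (lineParam hw (c, t)) * quadraticMulChar p c‖ ≤
        21 * √p - if c = 0 then 21 * √p else 0 := by
    split_ifs with hc
    · simp [hc, MulChar.map_zero]
    · have hdet : -h.2 * (c * w.2) - h.1 * (c * w.1) ≠ 0 := by
        rw [planeForm_apply] at hw
        rwa [show -h.2 * (c * w.2) - h.1 * (c * w.1) = -c by linear_combination -c * hw,
          neg_ne_zero]
      have hcast : ∑ t, cubicSymbol α β (lineParam hw (c, t)) =
          ((∑ t, (quadraticChar (ZMod p) (α * (c * w.1 + -h.2 * t) ^ 3 +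
            β * (c * w.2 + h.1 * t) ^ 3) : ℝ) : ℝ) : ℂ) := by
        push_cast
        rfl
      rw [← Finset.sum_mul, norm_mul, sub_zero, hcast, Complex.norm_real]
      exact (mul_le_of_le_one_right (norm_nonneg _)
        (DirichletCharacter.norm_le_one (quadraticMulChar p) c)).trans <|
          abs_sum_quadraticChar_cubic_le hp (x := (c * w.1, c * w.2)) (e := (-h.2, h.1)) hα hβ hdet
  rw [← (lineParam hw).sum_comp, Fintype.sum_prod_type]
  simp only [planeForm_lineParam]
  calc ‖∑ c, ∑ t, cubicSymbol α β (lineParam hw (c, t)) * quadraticMulChar p c‖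
      ≤ ∑ c : ZMod p, (21 * √p - if c = 0 then 21 * √p else 0) :=
        norm_sum_le_of_le _ fun c _ => hline c
    _ = (p - 1) * (21 * √p) := by simp [Finset.sum_sub_distrib, sub_mul]

lemma exists_eq_mulShift_stdAddChar (ψ : AddChar (ZMod p) ℂ) :
    ∃ h : ZMod p, ψ = ZMod.stdAddChar.mulShift h := by
  have hinj := AddChar.to_mulShift_inj_of_isPrimitive (ZMod.isPrimitive_stdAddChar p)
  have hbij := (Fintype.bijective_iff_injective_and_card _).mpr
    ⟨hinj, (AddChar.card_eq (α := ZMod p)).symm⟩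
  obtain ⟨h, hh⟩ := hbij.surjective ψ
  exact ⟨h, hh.symm⟩

lemma exists_eq_stdAddChar_planeForm (ψ : AddChar (ZMod p × ZMod p) ℂ) :
    ∃ h, ∀ z, ψ z = ZMod.stdAddChar (planeForm h z) := by
  obtain ⟨h₁, hh₁⟩ := exists_eq_mulShift_stdAddChar (ψ.compAddMonoidHom (AddMonoidHom.inl _ _))
  obtain ⟨h₂, hh₂⟩ := exists_eq_mulShift_stdAddChar (ψ.compAddMonoidHom (AddMonoidHom.inr _ _))
  refine ⟨(h₁, h₂), fun z => ?_⟩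
  rw [addChar_prod_apply, hh₁, hh₂, planeForm_apply, AddChar.map_add_eq_mul]
  rfl

theorem norm_sum_cubicSymbol_mul_addChar_le (hp : 3 < p) {α β : ZMod p} (hα : α ≠ 0)
    (hβ : β ≠ 0) (ψ : AddChar (ZMod p × ZMod p) ℂ) :
    ‖∑ z, cubicSymbol α β z * ψ z‖ ≤ 21 * p := by
  obtain ⟨h, hψ⟩ := exists_eq_stdAddChar_planeForm ψ
  have hχ := quadraticMulChar_ne_one (p := p) (by omega)
  have hgauss := congrArg norm <| card_sub_one_mul_sum_mul_addChar hχ ZMod.stdAddChar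
    (cubicSymbol_smul α β) (planeForm h)
  rw [norm_mul, norm_mul, norm_gaussSum hχ (ZMod.isPrimitive_stdAddChar p), ZMod.card,
    quadraticMulChar_inv] at hgauss
  have hp1 : (0 : ℝ) < p - 1 := by
    rw [sub_pos]; exact_mod_cast (by omega : 1 < p)
  have hnorm : ‖(p : ℂ) - 1‖ = p - 1 := by
    rw [← Complex.ofReal_natCast, ← Complex.ofReal_one, ← Complex.ofReal_sub, Complex.norm_real,
      Real.norm_of_nonneg hp1.le]
  simp_rw [hψ]
  refine le_of_mul_le_mul_left ?_ hp1
  calc ((p : ℝ) - 1) * ‖∑ z, cubicSymbol α β z * ZMod.stdAddChar (planeForm h z)‖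
      = √p * ‖∑ z, cubicSymbol α β z * quadraticMulChar p (planeForm h z)‖ := by
        rw [← hgauss, hnorm]
    _ ≤ √p * ((p - 1) * (21 * √p)) := by
        gcongr
        exact norm_sum_cubicSymbol_mul_quadraticMulChar_le hp hα hβ h
    _ = (p - 1) * (21 * (√p * √p)) := by ring
    _ = (p - 1) * (21 * p) := by rw [Real.mul_self_sqrt (Nat.cast_nonneg p)]

theorem norm_sum_sum_cubicSymbol_mul_le {ι : Type*} {q : ℕ} [Fact q.Prime] (hp : 3 < p)
    (hq : 3 < q) {α β : ZMod p} {α' β' : ZMod q} (hα : α ≠ 0) (hβ : β ≠ 0) (hα' : α' ≠ 0)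
    (hβ' : β' ≠ 0) {A : Finset ι} {u : ι → ZMod p × ZMod p} {w : ι → ZMod q × ZMod q}
    (hinj : Set.InjOn (fun x => (u x, w x)) A) :
    ‖∑ x ∈ A, ∑ y ∈ A, cubicSymbol α β (u x - u y) * cubicSymbol α' β' (w x - w y)‖ ≤
      21 ^ 2 * p * q * A.card := by
  refine (norm_sum_sum_sub_le (norm_sum_mul_addChar_prod_le
    (norm_sum_cubicSymbol_mul_addChar_le hp hα hβ)
    (norm_sum_cubicSymbol_mul_addChar_le hq hα' hβ')) hinj).trans_eq ?_
  ring

end CubicFourier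

section Primes

lemma summable_log_div_mul_sqrt : Summable fun n : ℕ => Real.log n / (n * √n) := by
  have hpow : Summable fun n : ℕ => 4 * (1 / (n : ℝ) ^ (5 / 4 : ℝ)) :=
    (Real.summable_one_div_nat_rpow.mpr (by norm_num)).mul_left 4
  refine .of_nonneg_of_le
    (fun n => div_nonneg (Real.log_natCast_nonneg n) (by positivity)) (fun n => ?_) hpow
  rcases n.eq_zero_or_pos with rfl | hn
  · simp
  have hn0 : (0 : ℝ) < n := by exact_mod_cast hn
  have hlog : Real.log n ≤ 4 * (n : ℝ) ^ (1 / 4 : ℝ) := by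
    have := Real.log_le_rpow_div hn0.le (ε := 1 / 4) (by norm_num)
    linarith
  have hsplit : (n : ℝ) * √n = (n : ℝ) ^ (1 / 4 : ℝ) * (n : ℝ) ^ (5 / 4 : ℝ) := by
    rw [Real.sqrt_eq_rpow, ← Real.rpow_one_add' hn0.le (by norm_num), ← Real.rpow_add hn0]
    norm_num
  rw [hsplit, div_le_iff₀ (by positivity)]
  refine hlog.trans_eq ?_
  field_simp

lemma exists_sum_log_div_mul_sqrt_le :
    ∃ C : ℝ, 0 ≤ C ∧ ∀ s : Finset ℕ, ∑ n ∈ s, Real.log n / (n * √n) ≤ C := by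
  have hnonneg (n : ℕ) : 0 ≤ Real.log n / (n * √n) :=
    div_nonneg (Real.log_natCast_nonneg n) (by positivity)
  exact ⟨_, tsum_nonneg hnonneg,
    fun s => summable_log_div_mul_sqrt.sum_le_tsum s fun n _ => hnonneg n⟩

lemma mul_log_sub_le_log_factorial {n : ℕ} (hn : n ≠ 0) :
    n * Real.log n - n ≤ Real.log n.factorial := by
  have hstirling := Stirling.le_log_factorial_stirling hn
  have hlog := Real.log_natCast_nonneg n
  have hpi : 0 ≤ Real.log (2 * Real.pi) := Real.log_nonneg (by linarith [Real.pi_gt_three])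
  linarith

lemma log_factorial_le (n : ℕ) :
    Real.log n.factorial ≤ n * ∑ p ∈ n.primesLE, Real.log p / (p - 1) := by
  rw [Real.log_nat_eq_sum_factorization, Finsupp.sum, Finset.mul_sum]
  have hsub : n.factorial.factorization.support ⊆ n.primesLE := by
    intro p hp
    rw [Nat.support_factorization, Nat.mem_primeFactors] at hp
    exact Nat.mem_primesLE.mpr ⟨(hp.1.dvd_factorial).mp hp.2.1, hp.1⟩
  refine (Finset.sum_le_sum_of_subset_of_nonneg hsub fun p _ _ =>
    mul_nonneg (Nat.cast_nonneg _) (Real.log_natCast_nonneg p)).trans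
      (Finset.sum_le_sum fun p hp => ?_)
  have hprime := (Nat.mem_primesLE.mp hp).2
  have : Fact p.Prime := ⟨hprime⟩
  have hlegendre : ((p - 1 : ℕ) : ℝ) * padicValNat p n.factorial ≤ n := by
    exact_mod_cast (sub_one_mul_padicValNat_factorial n).le.trans (Nat.sub_le _ _)
  rw [Nat.cast_pred hprime.pos] at hlegendre
  have hp1 : (0 : ℝ) < p - 1 := sub_pos.mpr (by exact_mod_cast hprime.one_lt)
  rw [Nat.factorization_def _ hprime, mul_div_assoc', le_div_iff₀ hp1]
  calc (padicValNat p n.factorial : ℝ) * Real.log p * (p - 1)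
      = ((p : ℝ) - 1) * padicValNat p n.factorial * Real.log p := by ring
    _ ≤ n * Real.log p := mul_le_mul_of_nonneg_right hlegendre (Real.log_natCast_nonneg p)

lemma log_div_sub_one_le {x : ℝ} (hx : 2 ≤ x) :
    Real.log x / (x - 1) ≤ Real.log x / x + 2 * (Real.log x / (x * √x)) := by
  have hx1 : 0 < x - 1 := by linarith
  have hlog : 0 ≤ Real.log x := Real.log_nonneg (by linarith)
  have hsqrt : √x ≤ 2 * (x - 1) := by
    rw [Real.sqrt_le_left (by linarith)]
    nlinarith
  have : 0 < √x := Real.sqrt_pos.mpr (by linarith)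
  have hsplit : Real.log x / (x - 1) = Real.log x / x + Real.log x / (x * (x - 1)) := by
    field_simp
    ring
  rw [hsplit, mul_div_assoc']
  refine add_le_add le_rfl ?_
  rw [div_le_div_iff₀ (by positivity) (by positivity)]
  calc Real.log x * (x * √x) ≤ Real.log x * (x * (2 * (x - 1))) := by gcongr
    _ = 2 * Real.log x * (x * (x - 1)) := by ring

theorem exists_log_sub_le_sum_log_div_prime : ∃ C : ℝ, ∀ n : ℕ, n ≠ 0 →
    Real.log n - C ≤ ∑ p ∈ n.primesLE, Real.log p / p := by
  obtain ⟨C, -, hC⟩ := exists_sum_log_div_mul_sqrt_le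
  refine ⟨2 * C + 1, fun n hn => ?_⟩
  have hn0 : (0 : ℝ) < n := by exact_mod_cast Nat.pos_of_ne_zero hn
  have hfactorial : Real.log n - 1 ≤ ∑ p ∈ n.primesLE, Real.log p / (p - 1) := by
    refine le_of_mul_le_mul_left ?_ hn0
    linarith [mul_log_sub_le_log_factorial hn, log_factorial_le n]
  have hterm : ∑ p ∈ n.primesLE, Real.log p / (p - 1) ≤
      ∑ p ∈ n.primesLE, (Real.log p / p + 2 * (Real.log p / (p * √p))) :=
    Finset.sum_le_sum fun p hp =>
      log_div_sub_one_le (by exact_mod_cast (Nat.mem_primesLE.mp hp).2.two_le)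
  rw [Finset.sum_add_distrib, ← Finset.mul_sum] at hterm
  linarith [hC n.primesLE]

lemma sum_log_le_of_subset_primeFactors {n : ℕ} (hn : n ≠ 0) {T : Finset ℕ}
    (hT : T ⊆ n.primeFactors) : ∑ p ∈ T, Real.log p ≤ Real.log n := by
  rw [← Real.log_prod fun p hp => by exact_mod_cast (Nat.prime_of_mem_primeFactors (hT hp)).ne_zero]
  refine Real.log_le_log
    (Finset.prod_pos fun p hp => by exact_mod_cast (Nat.prime_of_mem_primeFactors (hT hp)).pos) ?_
  rw [← Nat.cast_prod]
  exact_mod_cast Nat.le_of_dvd (Nat.pos_of_ne_zero hn)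
    ((Finset.prod_dvd_prod_of_subset _ _ _ hT).trans (Nat.prod_primeFactors_dvd n))

lemma card_primeFactors_le (n : ℕ) : (n.primeFactors.card : ℝ) ≤ 2 * Real.log n := by
  rcases eq_or_ne n 0 with rfl | hn
  · simp
  have hlog (p : ℕ) (hp : p ∈ n.primeFactors) : (1 / 2 : ℝ) ≤ Real.log p := by
    have h2p : Real.log 2 ≤ Real.log p :=
      Real.log_le_log two_pos (by exact_mod_cast (Nat.prime_of_mem_primeFactors hp).two_le)
    linarith [Real.log_two_gt_d9]
  have hcard := Finset.card_nsmul_le_sum _ _ _ hlog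
  rw [nsmul_eq_mul] at hcard
  linarith [sum_log_le_of_subset_primeFactors hn subset_rfl]

lemma exists_sum_log_div_primeFactors_le {ε : ℝ} (hε : 0 < ε) : ∃ C : ℝ, 0 ≤ C ∧ ∀ n : ℕ, n ≠ 0 →
    ∑ p ∈ n.primeFactors, Real.log p / p ≤ C + ε * Real.log n := by
  have hnonneg (p : ℕ) : 0 ≤ Real.log p / p :=
    div_nonneg (Real.log_natCast_nonneg p) (Nat.cast_nonneg p)
  set R := Finset.range (⌊1 / ε⌋₊ + 1) with hR
  refine ⟨∑ p ∈ R, Real.log p / p, Finset.sum_nonneg fun p _ => hnonneg p, fun n hn => ?_⟩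
  have hterm (p : ℕ) (hp : p ∈ n.primeFactors) :
      Real.log p / p ≤ (if p ∈ R then Real.log p / p else 0) + ε * Real.log p := by
    have hlog := Real.log_natCast_nonneg p
    have hp0 : (0 : ℝ) < p := by exact_mod_cast Nat.pos_of_mem_primeFactors hp
    split_ifs with hpR
    · exact le_add_of_nonneg_right (by positivity)
    · rw [hR, Finset.mem_range, not_lt, ← Nat.lt_iff_add_one_le, Nat.floor_lt (by positivity),
        div_lt_iff₀ hε] at hpR
      rw [zero_add, div_le_iff₀ hp0]
      nlinarith
  refine (Finset.sum_le_sum hterm).trans ?_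
  rw [Finset.sum_add_distrib, ← Finset.mul_sum, ← Finset.sum_filter]
  gcongr ?_ + ε * ?_
  · exact Finset.sum_le_sum_of_subset_of_nonneg (fun p hp => (Finset.mem_filter.mp hp).2)
      fun p _ _ => hnonneg p
  · exact sum_log_le_of_subset_primeFactors hn subset_rfl

/-- The primes `3 < p ≤ N` not dividing `D`: those at which a cubic form whose discriminant divides
a power of `D` has good reduction. -/
def goodPrimes (N D : ℕ) : Finset ℕ :=
  {p ∈ N.primesLE | 3 < p ∧ ¬ p ∣ D}

lemma mem_goodPrimes {N D p : ℕ} : p ∈ goodPrimes N D ↔ p ≤ N ∧ p.Prime ∧ 3 < p ∧ ¬ p ∣ D := by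
  rw [goodPrimes, Finset.mem_filter, Nat.mem_primesLE, and_assoc]

lemma goodPrimes_subset_primesLE (N D : ℕ) : goodPrimes N D ⊆ N.primesLE :=
  Finset.filter_subset _ _

lemma primesLE_subset_goodPrimes_union_primeFactors (N : ℕ) {D : ℕ} (hD : D ≠ 0) :
    N.primesLE ⊆ goodPrimes N D ∪ (6 * D).primeFactors := by
  intro p hp
  obtain ⟨hpN, hp⟩ := Nat.mem_primesLE.mp hp
  rw [Finset.mem_union, mem_goodPrimes, Nat.mem_primeFactors]
  by_cases hpD : p ∣ 6 * D
  · exact .inr ⟨hp, hpD, by positivity⟩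
  refine .inl ⟨hpN, hp, ?_, fun h => hpD (h.mul_left 6)⟩
  by_contra! hp3
  have hp6 : p ∣ 6 := by
    have := hp.two_le
    interval_cases p <;> decide
  exact hpD (hp6.mul_right D)

lemma two_mul_sub_le_div_add_sqrt {L x k : ℝ} (hL : 0 ≤ L) (hx : 0 < x) (hk : 0 ≤ k) :
    2 * (L / x) - 4 * k * (L / (x * √x)) ≤ L / (x / 2 + k * √x) := by
  have hs : 0 < √x := Real.sqrt_pos.mpr hx
  obtain ⟨s, rfl⟩ : ∃ s, x = s ^ 2 := ⟨√x, (Real.sq_sqrt hx.le).symm⟩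
  generalize hr : √(s ^ 2) = r at *
  have hsr : s ^ 2 = r ^ 2 := by rw [← hr, Real.sq_sqrt hx.le]
  rw [hsr, le_div_iff₀ (by positivity)]
  calc (2 * (L / r ^ 2) - 4 * k * (L / (r ^ 2 * r))) * (r ^ 2 / 2 + k * r)
      = L - 4 * k ^ 2 * L / r ^ 2 := by field_simp; ring
    _ ≤ L := sub_le_self _ (by positivity)

theorem exists_two_mul_log_sub_le_sum_goodPrimes {k ε : ℝ} (hk : 0 ≤ k) (hε : 0 < ε) :
    ∃ C : ℝ, 0 ≤ C ∧ ∀ D N : ℕ, D ≠ 0 → N ≠ 0 →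
      2 * Real.log N - C - ε * Real.log D ≤
        ∑ p ∈ goodPrimes N D, Real.log p / ((p : ℝ) / 2 + k * √p) := by
  obtain ⟨C₁, hC₁⟩ := exists_log_sub_le_sum_log_div_prime
  obtain ⟨C₂, hC₂, hbad⟩ := exists_sum_log_div_primeFactors_le (half_pos hε)
  obtain ⟨C₃, hC₃, htail⟩ := exists_sum_log_div_mul_sqrt_le
  have : 0 ≤ Real.log 6 := Real.log_nonneg (by norm_num)
  refine ⟨2 * |C₁| + 2 * C₂ + ε * Real.log 6 + 4 * k * C₃, by positivity, fun D N hD hN => ?_⟩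
  have hmertens : Real.log N - C₁ ≤ ∑ p ∈ goodPrimes N D, Real.log p / p +
      ∑ p ∈ (6 * D).primeFactors, Real.log p / p := by
    have hnonneg (p : ℕ) : 0 ≤ Real.log p / p :=
      div_nonneg (Real.log_natCast_nonneg p) (Nat.cast_nonneg p)
    rw [← Finset.sum_union_inter]
    exact (hC₁ N hN).trans <| (Finset.sum_le_sum_of_subset_of_nonneg
      (primesLE_subset_goodPrimes_union_primeFactors N hD) fun p _ _ => hnonneg p).trans
        (le_add_of_nonneg_right (Finset.sum_nonneg fun p _ => hnonneg p))
  have hbad' := hbad (6 * D) (by positivity)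
  rw [Nat.cast_mul, Nat.cast_ofNat, Real.log_mul (by norm_num) (by exact_mod_cast hD)] at hbad'
  have hgood := Finset.sum_le_sum fun p (hp : p ∈ goodPrimes N D) =>
    two_mul_sub_le_div_add_sqrt (Real.log_natCast_nonneg p)
      (by exact_mod_cast (mem_goodPrimes.mp hp).2.1.pos : (0 : ℝ) < p) hk
  rw [Finset.sum_sub_distrib, ← Finset.mul_sum, ← Finset.mul_sum] at hgood
  have htail' := mul_le_mul_of_nonneg_left (htail (goodPrimes N D)) (by positivity : 0 ≤ 4 * k)
  linarith [le_abs_self C₁]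

lemma sum_log_goodPrimes_le (N D : ℕ) :
    ∑ p ∈ goodPrimes N D, Real.log p ≤ Real.log 4 * N := by
  refine le_trans ?_ (Chebyshev.theta_le_log4_mul_x (Nat.cast_nonneg N))
  rw [Chebyshev.theta_eq_sum_primesLE_log]
  exact Finset.sum_le_sum_of_subset_of_nonneg (goodPrimes_subset_primesLE N D)
    fun p _ _ => Real.log_natCast_nonneg p

lemma rpow_le_primeCounting {η : ℝ} (hη : 0 < η) {n : ℕ} (hn : 2 ≤ n) :
    η / 8 * (n : ℝ) ^ (1 - η) ≤ n.primeCounting := by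
  refine le_trans ?_ (Chebyshev.pi_ge n)
  have hn2 : (2 : ℝ) ≤ n := by exact_mod_cast hn
  have hlog : Real.log n ≤ (n : ℝ) ^ η / η := Real.log_le_rpow_div (by linarith) hη
  have heighth : η / 8 * (n : ℝ) ^ (1 - η) * Real.log n ≤ n / 8 := by
    calc η / 8 * (n : ℝ) ^ (1 - η) * Real.log n
        ≤ η / 8 * (n : ℝ) ^ (1 - η) * ((n : ℝ) ^ η / η) := by gcongr
      _ = ((n : ℝ) ^ (1 - η) * (n : ℝ) ^ η) / 8 := by field_simp
      _ = n / 8 := by rw [← Real.rpow_add (by linarith), sub_add_cancel, Real.rpow_one]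
  have htangent : Real.log ((n : ℝ) + 1) ≤ (n + 1) / 4 + 2 * Real.log 2 - 1 := by
    have hlog4 : Real.log 4 = 2 * Real.log 2 := by
      rw [show (4 : ℝ) = 2 ^ 2 by norm_num, Real.log_pow, Nat.cast_ofNat]
    have := Real.log_le_sub_one_of_pos (x := ((n : ℝ) + 1) / 4) (by positivity)
    rw [Real.log_div (by positivity) (by norm_num), hlog4] at this
    linarith
  rw [le_div_iff₀ (Real.log_pos (by linarith))]
  nlinarith [Real.log_two_gt_d9, Real.log_two_lt_d9]

end Primes

section LargerSieve

lemma card_sq_le_card_image_mul_sum {α β : Type*} [DecidableEq β] (S : Finset α) (f : α → β) :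
    (S.card : ℝ) ^ 2 ≤
      (S.image f).card * ∑ n ∈ S, ∑ m ∈ S, if f m = f n then (1 : ℝ) else 0 := by
  have hpairs : ∑ n ∈ S, ∑ m ∈ S, (if f m = f n then (1 : ℝ) else 0) =
      ∑ b ∈ S.image f, (({n ∈ S | f n = b} : Finset α).card : ℝ) ^ 2 := by
    simp only [Finset.sum_boole]
    rw [Finset.sum_comp (fun b => (({n ∈ S | f n = b} : Finset α).card : ℝ)) f]
    simp only [nsmul_eq_mul, sq]
  rw [hpairs, Finset.card_eq_sum_card_image f S, Nat.cast_sum]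
  exact sq_sum_le_card_mul_sum_sq

lemma sum_log_mul_congr_le {T : Finset ℕ} (hT : ∀ p ∈ T, p.Prime) {n m : ℤ} (hnm : n ≠ m) :
    ∑ p ∈ T, Real.log p * (if (m : ZMod p) = n then (1 : ℝ) else 0) ≤
      Real.log |((n - m : ℤ) : ℝ)| := by
  have hcongr (p : ℕ) : (m : ZMod p) = n ↔ p ∣ (n - m).natAbs := by
    rw [ZMod.intCast_eq_intCast_iff_dvd_sub, ← Int.natCast_dvd]
  have hne : (n - m).natAbs ≠ 0 := Int.natAbs_ne_zero.mpr (sub_ne_zero.mpr hnm)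
  simp only [hcongr, mul_ite, mul_one, mul_zero]
  rw [← Finset.sum_filter, ← Int.cast_abs, Int.abs_eq_natAbs, Int.cast_natCast]
  refine sum_log_le_of_subset_primeFactors hne fun p hp => ?_
  obtain ⟨hpT, hdvd⟩ := Finset.mem_filter.mp hp
  exact Nat.mem_primeFactors.mpr ⟨hT p hpT, hdvd, hne⟩

/- Count with weight `log p` the triples `(n, m, p)` with `n ≡ m mod p`: Cauchy–Schwarz bounds the
number for given `p` from below, and the product of the `p` dividing `n - m ≠ 0` is at most `L`. -/
theorem gallagher_larger_sieve {S : Finset ℤ} {L : ℝ} (hL : 1 ≤ L)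
    (hS : ∀ n ∈ S, ∀ m ∈ S, |((n - m : ℤ) : ℝ)| ≤ L) {T : Finset ℕ} (hT : ∀ p ∈ T, p.Prime)
    {ν : ℕ → ℝ} (hν : ∀ p ∈ T, 0 < ν p)
    (himage : ∀ p ∈ T, ((S.image fun n : ℤ => (n : ZMod p)).card : ℝ) ≤ ν p) :
    S.card * (∑ p ∈ T, Real.log p / ν p - Real.log L) ≤ ∑ p ∈ T, Real.log p := by
  set Θ := ∑ p ∈ T, Real.log p
  have hΘ : 0 ≤ Θ := Finset.sum_nonneg fun p _ => Real.log_natCast_nonneg p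
  have hlogL : 0 ≤ Real.log L := Real.log_nonneg hL
  rcases S.eq_empty_or_nonempty with rfl | hSne
  · simpa using hΘ
  have hcard : (0 : ℝ) < S.card := by exact_mod_cast hSne.card_pos
  have hlower (p : ℕ) (hp : p ∈ T) : (S.card : ℝ) ^ 2 / ν p ≤
      ∑ n ∈ S, ∑ m ∈ S, if (m : ZMod p) = n then (1 : ℝ) else 0 := by
    rw [div_le_iff₀' (hν p hp)]
    refine (card_sq_le_card_image_mul_sum S fun n : ℤ => (n : ZMod p)).trans ?_
    exact mul_le_mul_of_nonneg_right (himage p hp) (by positivity)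
  have hupper (n : ℤ) (hn : n ∈ S) (m : ℤ) (hm : m ∈ S) :
      ∑ p ∈ T, Real.log p * (if (m : ZMod p) = n then (1 : ℝ) else 0) ≤
        (if n = m then Θ else 0) + Real.log L := by
    split_ifs with hnm
    · subst hnm
      simpa only [if_true, mul_one] using le_add_of_nonneg_right hlogL
    · rw [zero_add]
      refine (sum_log_mul_congr_le hT hnm).trans (Real.log_le_log ?_ (hS n hn m hm))
      exact abs_pos.mpr (by exact_mod_cast sub_ne_zero.mpr hnm)
  refine le_of_mul_le_mul_left ?_ hcard
  suffices (S.card : ℝ) ^ 2 * ∑ p ∈ T, Real.log p / ν p ≤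
      S.card * Θ + (S.card : ℝ) ^ 2 * Real.log L by linarith
  calc (S.card : ℝ) ^ 2 * ∑ p ∈ T, Real.log p / ν p
      = ∑ p ∈ T, Real.log p * ((S.card : ℝ) ^ 2 / ν p) := by
        rw [Finset.mul_sum]
        exact Finset.sum_congr rfl fun p _ => by ring
    _ ≤ ∑ p ∈ T, Real.log p * ∑ n ∈ S, ∑ m ∈ S, (if (m : ZMod p) = n then (1 : ℝ) else 0) :=
        Finset.sum_le_sum fun p hp =>
          mul_le_mul_of_nonneg_left (hlower p hp) (Real.log_natCast_nonneg p)
    _ = ∑ n ∈ S, ∑ m ∈ S, ∑ p ∈ T,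
          Real.log p * (if (m : ZMod p) = n then (1 : ℝ) else 0) := by
        simp_rw [Finset.mul_sum]
        rw [Finset.sum_comm]
        exact Finset.sum_congr rfl fun n _ => Finset.sum_comm
    _ ≤ ∑ n ∈ S, ∑ m ∈ S, ((if n = m then Θ else 0) + Real.log L) :=
        Finset.sum_le_sum fun n hn => Finset.sum_le_sum fun m hm => hupper n hn m hm
    _ = S.card * Θ + (S.card : ℝ) ^ 2 * Real.log L := by
        simp only [Finset.sum_add_distrib, Finset.sum_ite_eq, Finset.sum_const, nsmul_eq_mul,
          Finset.sum_ite_mem, Finset.inter_self]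
        ring

theorem exists_card_le_sqrt_of_card_image_le_half {k ε : ℝ} (hk : 0 ≤ k) (hε : 0 < ε) :
    ∃ C : ℝ, 0 < C ∧ ∀ {D : ℕ} {L : ℝ} {S : Finset ℤ}, D ≠ 0 → 1 ≤ L →
      (∀ n ∈ S, ∀ m ∈ S, |((n - m : ℤ) : ℝ)| ≤ L) →
      (∀ p : ℕ, p.Prime → 3 < p → ¬ p ∣ D →
        ((S.image fun n : ℤ => (n : ZMod p)).card : ℝ) ≤ p / 2 + k * √p) →
      (S.card : ℝ) ≤ C * (√L * (D : ℝ) ^ ε) := by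
  obtain ⟨C₁, hC₁, hsum⟩ :=
    exists_two_mul_log_sub_le_sum_goodPrimes hk (by positivity : 0 < 2 * ε)
  set A := Real.exp ((C₁ + 1) / 2) with hA
  have hA1 : 1 ≤ A := Real.one_le_exp (by linarith)
  refine ⟨Real.log 4 * (2 * A), by positivity, fun {D L S} hD hL hS himage => ?_⟩
  have hD1 : (1 : ℝ) ≤ D := by exact_mod_cast Nat.one_le_iff_ne_zero.mpr hD
  set M := A * (√L * (D : ℝ) ^ ε) with hM
  have hM1 : 1 ≤ M := one_le_mul_of_one_le_of_one_le hA1 <|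
    one_le_mul_of_one_le_of_one_le (Real.one_le_sqrt.mpr hL) (Real.one_le_rpow hD1 hε.le)
  have hMN : M ≤ ⌈M⌉₊ := Nat.le_ceil M
  have hN : ⌈M⌉₊ ≠ 0 := (Nat.ceil_pos.mpr (by linarith)).ne'
  have hlogN : (C₁ + 1) / 2 + Real.log L / 2 + ε * Real.log D ≤ Real.log ⌈M⌉₊ := by
    refine le_trans (le_of_eq ?_) (Real.log_le_log (by linarith) hMN)
    rw [hM, Real.log_mul (by positivity) (by positivity), Real.log_mul (by positivity)
      (by positivity), Real.log_sqrt (by linarith), Real.log_rpow (by linarith), hA, Real.log_exp,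
      add_assoc]
  have hsieve := gallagher_larger_sieve (T := goodPrimes ⌈M⌉₊ D)
    (ν := fun p => (p : ℝ) / 2 + k * √p) hL hS
    (fun p hp => (mem_goodPrimes.mp hp).2.1)
    (fun p hp => by
      have : (0 : ℝ) < p := by exact_mod_cast (mem_goodPrimes.mp hp).2.1.pos
      positivity)
    (fun p hp => by
      obtain ⟨-, hprime, hp3, hpD⟩ := mem_goodPrimes.mp hp
      exact himage p hprime hp3 hpD)
  have hone : 1 ≤ ∑ p ∈ goodPrimes ⌈M⌉₊ D, Real.log p / ((p : ℝ) / 2 + k * √p) - Real.log L := by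
    linarith [hsum D _ hD hN]
  calc (S.card : ℝ) ≤ S.card * (∑ p ∈ goodPrimes ⌈M⌉₊ D, Real.log p / ((p : ℝ) / 2 + k * √p) -
          Real.log L) := le_mul_of_one_le_right (Nat.cast_nonneg _) hone
    _ ≤ Real.log 4 * ⌈M⌉₊ := hsieve.trans (sum_log_goodPrimes_le _ _)
    _ ≤ Real.log 4 * (2 * M) := by
        gcongr
        exact (Nat.ceil_le_two_mul (by linarith))
    _ = Real.log 4 * (2 * A) * (√L * (D : ℝ) ^ ε) := by rw [hM]; ring

end LargerSieve

section CubicForm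

/-- The diagonal binary cubic form `α X³ + β Y³`. -/
def cubicForm (α β : ℤ) (s : ℤ × ℤ) : ℤ := α * s.1 ^ 3 + β * s.2 ^ 3

lemma quadraticChar_intCast_ne_neg_one {p : ℕ} [Fact p.Prime] {g : ℤ} (hg : IsSquare g) :
    quadraticChar (ZMod p) (g : ZMod p) ≠ -1 := by
  rw [Ne, quadraticChar_neg_one_iff_not_isSquare, not_not]
  exact hg.map (Int.castRingHom (ZMod p))

theorem exists_card_isSquare_cubicForm_line_le {ε : ℝ} (hε : 0 < ε) :
    ∃ C : ℝ, 0 < C ∧ ∀ {α β : ℤ} {x e : ℤ × ℤ} {L : ℝ} {S : Finset ℤ},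
      α * β * (e.1 * x.2 - e.2 * x.1) ≠ 0 → 1 ≤ L →
      (∀ n ∈ S, ∀ m ∈ S, |((n - m : ℤ) : ℝ)| ≤ L) →
      (∀ n ∈ S, IsSquare (cubicForm α β (x + n • e))) →
      (S.card : ℝ) ≤ C * (√L * |((α * β * (e.1 * x.2 - e.2 * x.1) : ℤ) : ℝ)| ^ ε) := by
  obtain ⟨C, hC, hcard⟩ :=
    exists_card_le_sqrt_of_card_image_le_half (by norm_num : (0 : ℝ) ≤ 12) hε
  refine ⟨C, hC, fun {α β x e L S} hD hL hS hsq => ?_⟩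
  rw [← Int.cast_abs, Int.abs_eq_natAbs, Int.cast_natCast]
  refine hcard (Int.natAbs_ne_zero.mpr hD) hL hS fun p hprime hp3 hpD => ?_
  have : Fact p.Prime := ⟨hprime⟩
  have hne : ((α * β * (e.1 * x.2 - e.2 * x.1) : ℤ) : ZMod p) ≠ 0 := by
    rwa [Ne, ZMod.intCast_zmod_eq_zero_iff_dvd, Int.natCast_dvd]
  push_cast at hne
  obtain ⟨hαβ, hdet⟩ := mul_ne_zero_iff.mp hne
  obtain ⟨hα, hβ⟩ := mul_ne_zero_iff.mp hαβ
  refine le_trans ?_ (card_quadraticChar_cubic_ne_neg_one_le hp3 (x := (x.1, x.2))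
    (e := (e.1, e.2)) hα hβ hdet)
  rw [Nat.cast_le]
  refine Finset.card_le_card fun t ht => ?_
  obtain ⟨n, hn, rfl⟩ := Finset.mem_image.mp ht
  have := quadraticChar_intCast_ne_neg_one (p := p) (hsq n hn)
  simp only [cubicForm, Prod.fst_add, Prod.snd_add, Prod.smul_fst, Prod.smul_snd, smul_eq_mul,
    Int.cast_add, Int.cast_mul, Int.cast_pow, mul_comm (n : ZMod p)] at this
  exact Finset.mem_filter.mpr ⟨Finset.mem_univ _, this⟩

end CubicForm

section SquareSieve

lemma sum_translate_le {V : Type*} [AddCommGroup V] {A A₁ S : Finset V}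
    (hA₁ : A₁ ⊆ A) (hS : ∀ s ∈ S, ∀ y ∈ A₁, y + s ∈ A) {f : V → ℝ} (hf : ∀ d, 0 ≤ f d) :
    A₁.card * ∑ s ∈ S, f s ≤ ∑ y ∈ A, ∑ x ∈ A, f (x - y) := by
  calc A₁.card * ∑ s ∈ S, f s = ∑ _y ∈ A₁, ∑ s ∈ S, f s := by
        rw [Finset.sum_const, nsmul_eq_mul]
    _ ≤ ∑ y ∈ A₁, ∑ x ∈ A, f (x - y) := by
        refine Finset.sum_le_sum fun y hy => ?_
        calc ∑ s ∈ S, f s = ∑ x ∈ S.map (addLeftEmbedding y), f (x - y) := by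
              simp only [Finset.sum_map, addLeftEmbedding_apply, add_sub_cancel_left]
          _ ≤ ∑ x ∈ A, f (x - y) := by
              refine Finset.sum_le_sum_of_subset_of_nonneg (fun x hx => ?_) fun _ _ _ => hf _
              obtain ⟨s, hs, rfl⟩ := Finset.mem_map.mp hx
              exact hS s hs y hy
    _ ≤ ∑ y ∈ A, ∑ x ∈ A, f (x - y) :=
        Finset.sum_le_sum_of_subset_of_nonneg hA₁
          fun _ _ _ => Finset.sum_nonneg fun _ _ => hf _

lemma sum_sum_sq_sum_eq {V ι : Type*} [Sub V] (A : Finset V) (T : Finset ι) (χ : ι → V → ℝ) :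
    ∑ y ∈ A, ∑ x ∈ A, (∑ p ∈ T, χ p (x - y)) ^ 2 =
      ∑ p ∈ T, ∑ q ∈ T, ∑ x ∈ A, ∑ y ∈ A, χ p (x - y) * χ q (x - y) := by
  simp_rw [sq, Finset.sum_mul_sum]
  rw [Finset.sum_comm]
  simp_rw [Finset.sum_comm (s := A) (t := T)]

/- The weights `χ p` detect squares: on the sifted set they are mostly `1`, while for `p ≠ q` the
values of `χ p` and `χ q` on differences of elements of `A` are uncorrelated. -/
theorem square_sieve {V ι : Type*} [AddCommGroup V] {A A₁ S : Finset V}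
    {T : Finset ι} {χ : ι → V → ℝ} {M : ℝ} (hM : 0 ≤ M) (hχ : ∀ p ∈ T, ∀ d, |χ p d| ≤ 1)
    (hcorr : ∀ p ∈ T, ∀ q ∈ T, p ≠ q → ∑ x ∈ A, ∑ y ∈ A, χ p (x - y) * χ q (x - y) ≤ M)
    (hA₁ : A₁ ⊆ A) (hS : ∀ s ∈ S, ∀ y ∈ A₁, y + s ∈ A)
    (hsq : ∀ s ∈ S, (T.card : ℝ) / 2 ≤ ∑ p ∈ T, χ p s) :
    (S.card : ℝ) * A₁.card * ((T.card : ℝ) / 2) ^ 2 ≤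
      T.card * (A.card : ℝ) ^ 2 + (T.card : ℝ) ^ 2 * M := by
  classical
  have hpair (p : ι) (hp : p ∈ T) (q : ι) (hq : q ∈ T) :
      ∑ x ∈ A, ∑ y ∈ A, χ p (x - y) * χ q (x - y) ≤
        (if p = q then (A.card : ℝ) ^ 2 else 0) + M := by
    split_ifs with hpq
    · refine le_add_of_le_of_nonneg ?_ hM
      calc ∑ x ∈ A, ∑ y ∈ A, χ p (x - y) * χ q (x - y) ≤ ∑ _x ∈ A, ∑ _y ∈ A, (1 : ℝ) := by
            refine Finset.sum_le_sum fun x _ => Finset.sum_le_sum fun y _ => ?_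
            refine (le_abs_self _).trans ?_
            rw [abs_mul]
            exact mul_le_one₀ (hχ p hp _) (abs_nonneg _) (hχ q hq _)
        _ = (A.card : ℝ) ^ 2 := by
            simp only [Finset.sum_const, nsmul_eq_mul, mul_one, sq]
    · rw [zero_add]
      exact hcorr p hp q hq hpq
  calc (S.card : ℝ) * A₁.card * ((T.card : ℝ) / 2) ^ 2
      = A₁.card * ∑ s ∈ S, ((T.card : ℝ) / 2) ^ 2 := by
        rw [Finset.sum_const, nsmul_eq_mul]
        ring
    _ ≤ A₁.card * ∑ s ∈ S, (∑ p ∈ T, χ p s) ^ 2 := by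
        gcongr with s hs
        exact hsq s hs
    _ ≤ ∑ y ∈ A, ∑ x ∈ A, (∑ p ∈ T, χ p (x - y)) ^ 2 :=
        sum_translate_le hA₁ hS fun _ => sq_nonneg _
    _ = ∑ p ∈ T, ∑ q ∈ T, ∑ x ∈ A, ∑ y ∈ A, χ p (x - y) * χ q (x - y) :=
        sum_sum_sq_sum_eq A T χ
    _ ≤ ∑ p ∈ T, ∑ q ∈ T, ((if p = q then (A.card : ℝ) ^ 2 else 0) + M) :=
        Finset.sum_le_sum fun p hp => Finset.sum_le_sum fun q hq => hpair p hp q hq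
    _ = T.card * (A.card : ℝ) ^ 2 + (T.card : ℝ) ^ 2 * M := by
        simp only [Finset.sum_add_distrib, Finset.sum_ite_eq, Finset.sum_const, nsmul_eq_mul,
          Finset.sum_ite_mem, Finset.inter_self]
        ring

/-- Reduction of an integral vector modulo `p`. -/
def reduceMod (p : ℕ) (x : ℤ × ℤ) : ZMod p × ZMod p := (x.1, x.2)

lemma reduceMod_sub (p : ℕ) (x y : ℤ × ℤ) :
    reduceMod p (x - y) = reduceMod p x - reduceMod p y := by
  simp [reduceMod]

lemma cubicSymbol_reduceMod {p : ℕ} [Fact p.Prime] (α β : ℤ) (x : ℤ × ℤ) :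
    cubicSymbol (p := p) α β (reduceMod p x) = jacobiSym (cubicForm α β x) p := by
  rw [← jacobiSym.legendreSym.to_jacobiSym, legendreSym, cubicSymbol, cubicForm, reduceMod]
  push_cast
  rfl

lemma abs_jacobiSym_le_one (g : ℤ) (n : ℕ) : |(jacobiSym g n : ℝ)| ≤ 1 := by
  rcases jacobiSym.trichotomy g n with h | h | h <;> simp [h]

lemma sum_sum_jacobiSym_cubicForm_mul_le {p q : ℕ} (hp : p.Prime) (hq : q.Prime) (hp3 : 3 < p)
    (hq3 : 3 < q) {α β : ℤ} (hpαβ : ¬ (p : ℤ) ∣ α * β) (hqαβ : ¬ (q : ℤ) ∣ α * β)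
    {A : Finset (ℤ × ℤ)} (hinj : Set.InjOn (fun x => (reduceMod p x, reduceMod q x)) A) :
    ∑ x ∈ A, ∑ y ∈ A, (jacobiSym (cubicForm α β (x - y)) p : ℝ) *
      (jacobiSym (cubicForm α β (x - y)) q : ℝ) ≤ 21 ^ 2 * p * q * A.card := by
  have : Fact p.Prime := ⟨hp⟩
  have : Fact q.Prime := ⟨hq⟩
  have hne {r : ℕ} [Fact r.Prime] (hr : ¬ (r : ℤ) ∣ α * β) :
      (α : ZMod r) ≠ 0 ∧ (β : ZMod r) ≠ 0 := by
    rwa [← ZMod.intCast_zmod_eq_zero_iff_dvd, Int.cast_mul, mul_eq_zero, not_or] at hr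
  refine (le_abs_self _).trans <| le_trans (le_of_eq ?_) <| norm_sum_sum_cubicSymbol_mul_le hp3 hq3
    (hne hpαβ).1 (hne hpαβ).2 (hne hqαβ).1 (hne hqαβ).2 hinj
  rw [← Real.norm_eq_abs, ← Complex.norm_real]
  simp only [← reduceMod_sub, cubicSymbol_reduceMod]
  push_cast
  rfl

lemma one_sub_ite_le_jacobiSym_of_isSquare {g : ℤ} (hg : IsSquare g) {p : ℕ} (hp : p.Prime) :
    (1 : ℝ) - (if p ∣ g.natAbs then 1 else 0) ≤ jacobiSym g p := by
  have : Fact p.Prime := ⟨hp⟩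
  obtain ⟨r, rfl⟩ := hg
  rw [← jacobiSym.legendreSym.to_jacobiSym]
  split_ifs with hdvd
  · rw [legendreSym.mul, sub_self]
    exact_mod_cast mul_self_nonneg _
  · rw [← Int.natCast_dvd, ← ZMod.intCast_zmod_eq_zero_iff_dvd, Int.cast_mul, mul_self_eq_zero]
      at hdvd
    rw [← sq, legendreSym.sq_one' p hdvd, sub_zero, Int.cast_one]

lemma card_sub_log_le_sum_jacobiSym {g : ℤ} (hg : g ≠ 0) (hsq : IsSquare g) {T : Finset ℕ}
    (hT : ∀ p ∈ T, p.Prime) :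
    (T.card : ℝ) - 2 * Real.log |(g : ℝ)| ≤ ∑ p ∈ T, (jacobiSym g p : ℝ) := by
  have hsum := Finset.sum_le_sum fun p hp => one_sub_ite_le_jacobiSym_of_isSquare hsq (hT p hp)
  rw [Finset.sum_sub_distrib, Finset.sum_boole, Finset.sum_const, nsmul_one] at hsum
  have hsub : {p ∈ T | p ∣ g.natAbs} ⊆ g.natAbs.primeFactors := fun p hp => by
    obtain ⟨hpT, hdvd⟩ := Finset.mem_filter.mp hp
    exact Nat.mem_primeFactors.mpr ⟨hT p hpT, hdvd, Int.natAbs_ne_zero.mpr hg⟩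
  have hcard : (({p ∈ T | p ∣ g.natAbs} : Finset ℕ).card : ℝ) ≤ g.natAbs.primeFactors.card := by
    exact_mod_cast Finset.card_le_card hsub
  rw [← Int.cast_abs, Int.abs_eq_natAbs, Int.cast_natCast]
  linarith [card_primeFactors_le g.natAbs]

end SquareSieve

section Lattice

/-- The lattice of pairs `x` with `x.1 ≡ l * x.2` modulo `m`. -/
def congruenceLattice (m l : ℤ) : AddSubgroup (ℤ × ℤ) where
  carrier := {x | m ∣ x.1 - l * x.2}
  zero_mem' := by simp
  add_mem' {x y} hx hy := by
    rw [Set.mem_ofPred_eq, Prod.fst_add, Prod.snd_add, mul_add, add_sub_add_comm]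
    exact dvd_add hx hy
  neg_mem' {x} hx := by
    rw [Set.mem_ofPred_eq, Prod.fst_neg, Prod.snd_neg, mul_neg, ← neg_sub', dvd_neg]
    exact hx

lemma mem_congruenceLattice {m l : ℤ} {x : ℤ × ℤ} :
    x ∈ congruenceLattice m l ↔ m ∣ x.1 - l * x.2 :=
  Iff.rfl

/-- The sup norm on `ℤ × ℤ` weighted so that the box `|x.1| ≤ Y`, `|x.2| ≤ Z` is the ball of
radius `Y * Z`; this scaling keeps the norm integral. -/
def boxNorm (Y Z : ℤ) (x : ℤ × ℤ) : ℤ := max (|x.1| * Z) (|x.2| * Y)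

/-- The determinant of the pair of vectors `e`, `x`, constant along the lines parallel to `e`. -/
def cross (e x : ℤ × ℤ) : ℤ := e.1 * x.2 - e.2 * x.1

/-- `e` is a nonzero vector of `Λ` of minimal `boxNorm`. -/
structure IsShortestVector (Λ : AddSubgroup (ℤ × ℤ)) (Y Z : ℤ) (e : ℤ × ℤ) : Prop where
  mem : e ∈ Λ
  ne_zero : e ≠ 0
  eq_zero_of_lt : ∀ w ∈ Λ, boxNorm Y Z w < boxNorm Y Z e → w = 0

variable {Y Z m l : ℤ} {Λ : AddSubgroup (ℤ × ℤ)} {e : ℤ × ℤ}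

lemma abs_fst_mul_le_boxNorm (Y Z : ℤ) (x : ℤ × ℤ) : |x.1| * Z ≤ boxNorm Y Z x := le_max_left _ _

lemma abs_snd_mul_le_boxNorm (Y Z : ℤ) (x : ℤ × ℤ) : |x.2| * Y ≤ boxNorm Y Z x := le_max_right _ _

lemma boxNorm_le_iff (hY : 0 < Y) (hZ : 0 < Z) {c : ℤ} {x : ℤ × ℤ} :
    boxNorm Y Z x ≤ c * (Y * Z) ↔ |x.1| ≤ c * Y ∧ |x.2| ≤ c * Z := by
  rw [boxNorm, max_le_iff, ← mul_assoc, mul_le_mul_iff_left₀ hZ, mul_right_comm,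
    mul_le_mul_iff_left₀ hY]

lemma boxNorm_nonneg (hZ : 0 < Z) (x : ℤ × ℤ) : 0 ≤ boxNorm Y Z x :=
  le_max_of_le_left (by positivity)

lemma boxNorm_pos (hY : 0 < Y) (hZ : 0 < Z) {x : ℤ × ℤ} (hx : x ≠ 0) : 0 < boxNorm Y Z x := by
  by_contra! h
  have hbox := (boxNorm_le_iff hY hZ (c := 0)).mp (by simpa using h)
  simp only [zero_mul, abs_nonpos_iff] at hbox
  exact hx (Prod.ext hbox.1 hbox.2)

lemma boxNorm_zsmul (Y Z n : ℤ) (x : ℤ × ℤ) : boxNorm Y Z (n • x) = |n| * boxNorm Y Z x := by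
  simp only [boxNorm, Prod.smul_fst, Prod.smul_snd, smul_eq_mul, abs_mul, mul_assoc]
  rw [mul_max_of_nonneg _ _ (abs_nonneg n)]

lemma boxNorm_sub_le (hY : 0 < Y) (hZ : 0 < Z) (x y : ℤ × ℤ) :
    boxNorm Y Z (x - y) ≤ boxNorm Y Z x + boxNorm Y Z y := by
  refine max_le ?_ ?_
  · calc |x.1 - y.1| * Z ≤ (|x.1| + |y.1|) * Z := by gcongr; exact abs_sub _ _
      _ ≤ _ := by
        rw [add_mul]
        exact add_le_add (abs_fst_mul_le_boxNorm Y Z x) (abs_fst_mul_le_boxNorm Y Z y)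
  · calc |x.2 - y.2| * Y ≤ (|x.2| + |y.2|) * Y := by gcongr; exact abs_sub _ _
      _ ≤ _ := by
        rw [add_mul]
        exact add_le_add (abs_snd_mul_le_boxNorm Y Z x) (abs_snd_mul_le_boxNorm Y Z y)

lemma cross_sub (e x y : ℤ × ℤ) : cross e (x - y) = cross e x - cross e y := by
  simp only [cross, Prod.fst_sub, Prod.snd_sub]; ring

lemma dvd_cross (he : e ∈ congruenceLattice m l) {x : ℤ × ℤ} (hx : x ∈ congruenceLattice m l) :
    m ∣ cross e x := by
  have h : cross e x = (e.1 - l * e.2) * x.2 - e.2 * (x.1 - l * x.2) := by rw [cross]; ring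
  exact h ▸ dvd_sub (he.mul_right _) (hx.mul_left _)

lemma abs_cross_le (hY : 0 < Y) (hZ : 0 < Z) {c : ℤ} (hc : 0 ≤ c) {x : ℤ × ℤ}
    (hx : boxNorm Y Z x ≤ c * (Y * Z)) (e : ℤ × ℤ) : |cross e x| ≤ 2 * c * boxNorm Y Z e := by
  obtain ⟨hx₁, hx₂⟩ := (boxNorm_le_iff hY hZ).mp hx
  calc |cross e x| ≤ |e.1| * |x.2| + |e.2| * |x.1| := by
        rw [cross, ← abs_mul, ← abs_mul]; exact abs_sub _ _
    _ ≤ |e.1| * (c * Z) + |e.2| * (c * Y) := by gcongr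
    _ = c * (|e.1| * Z) + c * (|e.2| * Y) := by ring
    _ ≤ c * boxNorm Y Z e + c * boxNorm Y Z e := by
        gcongr
        exacts [abs_fst_mul_le_boxNorm Y Z e, abs_snd_mul_le_boxNorm Y Z e]
    _ = _ := by ring

lemma exists_rat_of_cross_eq_zero (he : e ≠ 0) {w : ℤ × ℤ} (h : cross e w = 0) :
    ∃ t : ℚ, (w.1 : ℚ) = t * e.1 ∧ (w.2 : ℚ) = t * e.2 := by
  have hcross : (e.1 : ℚ) * w.2 = e.2 * w.1 := mod_cast sub_eq_zero.mp h
  by_cases he₁ : e.1 = 0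
  · have he₂ : (e.2 : ℚ) ≠ 0 := mod_cast fun he₂ => he (Prod.ext he₁ he₂)
    refine ⟨w.2 / e.2, ?_, by field_simp⟩
    field_simp
    linear_combination -hcross
  · have he₁ : (e.1 : ℚ) ≠ 0 := mod_cast he₁
    refine ⟨w.1 / e.1, by field_simp, ?_⟩
    field_simp
    linear_combination hcross

lemma eq_of_isCoprime_of_cross_eq_zero (he : e ≠ 0) {x y : ℤ × ℤ} (hx : cross e x = 0)
    (hy : cross e y = 0) (hx₁ : 0 < x.1) (hy₁ : 0 < y.1)
    (hxc : IsCoprime x.1 x.2) (hyc : IsCoprime y.1 y.2) : x = y := by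
  obtain ⟨s, hs₁, hs₂⟩ := exists_rat_of_cross_eq_zero he hx
  obtain ⟨t, ht₁, ht₂⟩ := exists_rat_of_cross_eq_zero he hy
  have hprop : x.1 * y.2 = y.1 * x.2 := by
    have : (x.1 * y.2 : ℚ) = y.1 * x.2 := by rw [hs₁, hs₂, ht₁, ht₂]; ring
    exact_mod_cast this
  have h₁ : x.1 = y.1 := Int.dvd_antisymm hx₁.le hy₁.le
    (hxc.dvd_of_dvd_mul_right (Dvd.intro _ hprop))
    (hyc.dvd_of_dvd_mul_right (Dvd.intro _ hprop.symm))
  refine Prod.ext h₁ ?_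
  rw [h₁] at hprop
  exact (mul_left_cancel₀ hy₁.ne' hprop).symm

lemma exists_isShortestVector (hZ : 0 < Z) (hΛ : Λ ≠ ⊥) : ∃ e, IsShortestVector Λ Y Z e := by
  obtain ⟨v, hv0⟩ := Λ.ne_bot_iff_exists_ne_zero.mp hΛ
  obtain ⟨e, ⟨he, he0⟩, hmin⟩ := exists_minimalFor_of_wellFoundedLT
    (fun e : ℤ × ℤ => e ∈ Λ ∧ e ≠ 0) (fun e => (boxNorm Y Z e).toNat)
    ⟨v, v.2, fun h => hv0 (Subtype.ext h)⟩
  refine ⟨e, he, he0, fun w hw hlt => ?_⟩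
  by_contra hw0
  have hle := hmin (j := w) ⟨hw, hw0⟩
  have := boxNorm_nonneg (Y := Y) hZ w
  simp only at hle
  omega

namespace IsShortestVector

lemma exists_eq_zsmul (hY : 0 < Y) (hZ : 0 < Z) (he : IsShortestVector Λ Y Z e) {w : ℤ × ℤ}
    (hw : w ∈ Λ) (h : cross e w = 0) : ∃ n : ℤ, w = n • e := by
  obtain ⟨t, ht₁, ht₂⟩ := exists_rat_of_cross_eq_zero he.ne_zero h
  have hhalf {a b : ℤ} (hab : (a : ℚ) = t * b) : 2 * |a - round t * b| ≤ |b| := by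
    have : 2 * |(a : ℚ) - round t * b| ≤ |(b : ℚ)| := by
      rw [hab, ← sub_mul, abs_mul]
      nlinarith [abs_sub_round t, abs_nonneg (b : ℚ)]
    exact_mod_cast this
  refine ⟨round t, sub_eq_zero.mp (he.eq_zero_of_lt _ (Λ.sub_mem hw (Λ.zsmul_mem he.mem _)) ?_)⟩
  have hpos := boxNorm_pos hY hZ he.ne_zero
  have h₁ := abs_fst_mul_le_boxNorm Y Z e
  have h₂ := abs_snd_mul_le_boxNorm Y Z e
  refine max_lt ?_ ?_ <;>
    simp only [Prod.fst_sub, Prod.snd_sub, Prod.smul_fst, Prod.smul_snd, smul_eq_mul]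
  · nlinarith [hhalf ht₁]
  · nlinarith [hhalf ht₂]

lemma exists_image_eq (hY : 0 < Y) (hZ : 0 < Z) (he : IsShortestVector Λ Y Z e)
    {F : Finset (ℤ × ℤ)} (hF : ∀ x ∈ F, x ∈ Λ) {x₀ : ℤ × ℤ} (hx₀ : x₀ ∈ Λ)
    (hcross : ∀ x ∈ F, cross e x = cross e x₀) :
    ∃ S : Finset ℤ, S.image (fun n => x₀ + n • e) = F ∧ S.card = F.card := by
  have hsub : (F : Set (ℤ × ℤ)) ⊆ (fun n : ℤ => x₀ + n • e) '' Set.univ := fun x hx => by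
    obtain ⟨n, hn⟩ := he.exists_eq_zsmul hY hZ (Λ.sub_mem (hF x hx) hx₀)
      (by rw [cross_sub, hcross x hx, sub_self])
    exact ⟨n, trivial, by simp [← hn]⟩
  obtain ⟨S, -, hS⟩ := Finset.subset_set_image_iff.mp hsub
  refine ⟨S, hS, ?_⟩
  rw [← hS, Finset.card_image_of_injective]
  exact (add_right_injective x₀).comp (smul_left_injective ℤ he.ne_zero)

end IsShortestVector

lemma card_nonzero_abs_le {I : Finset ℤ} {V : ℝ} (hV : 0 ≤ V)
    (hI : ∀ v ∈ I, v ≠ 0 ∧ |(v : ℝ)| ≤ V) : (I.card : ℝ) ≤ 2 * V := by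
  have hsub : I ⊆ (Finset.Icc (-⌊V⌋) ⌊V⌋).erase 0 := fun v hv => by
    rw [Finset.mem_erase, Finset.mem_Icc, ← abs_le, Int.le_floor]
    exact_mod_cast hI v hv
  have hfloor : 0 ≤ ⌊V⌋ := Int.floor_nonneg.mpr hV
  have hcard := Finset.card_le_card hsub
  rw [Finset.card_erase_of_mem (by simpa using hfloor), Int.card_Icc] at hcard
  have hcardZ : (I.card : ℤ) ≤ 2 * ⌊V⌋ := by omega
  calc (I.card : ℝ) ≤ 2 * ⌊V⌋ := by exact_mod_cast hcardZ
    _ ≤ 2 * V := by gcongr; exact Int.floor_le V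

/- The values of `cross e` on the lattice are multiples of `m`, so only `O(boxNorm e / m)` lines
parallel to `e` meet the box. -/
lemma card_le_of_card_cross_eq_le (hm : 0 < m) (hY : 0 < Y) (hZ : 0 < Z) {c : ℤ} (hc : 0 ≤ c)
    (he : e ∈ congruenceLattice m l) {F : Finset (ℤ × ℤ)}
    (hF : ∀ x ∈ F, x ∈ congruenceLattice m l ∧ boxNorm Y Z x ≤ c * (Y * Z)) {M₀ M : ℝ}
    (hM₀ : (({x ∈ F | cross e x = 0} : Finset _).card : ℝ) ≤ M₀) (hM : 0 ≤ M)
    (hfib : ∀ x₀ ∈ F, cross e x₀ ≠ 0 →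
      (({x ∈ F | cross e x = cross e x₀} : Finset _).card : ℝ) ≤ M) :
    (F.card : ℝ) ≤ M₀ + 4 * c * (boxNorm Y Z e / m) * M := by
  have hm' : (0 : ℝ) < m := by exact_mod_cast hm
  have hne : (0 : ℝ) ≤ boxNorm Y Z e := by exact_mod_cast boxNorm_nonneg hZ e
  have : (0 : ℝ) ≤ c := by exact_mod_cast hc
  set G := {x ∈ F | ¬cross e x = 0} with hG
  set I := G.image fun x => cross e x / m
  have hcancel (x : ℤ × ℤ) (hx : x ∈ F) : cross e x / m * m = cross e x :=
    Int.ediv_mul_cancel (dvd_cross he (hF x hx).1)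
  have hI : (I.card : ℝ) ≤ 2 * (2 * c * (boxNorm Y Z e / m)) := by
    refine card_nonzero_abs_le (by positivity) fun v hv => ?_
    obtain ⟨x, hx, rfl⟩ := Finset.mem_image.mp hv
    obtain ⟨hxF, hx0⟩ := Finset.mem_filter.mp hx
    refine ⟨fun h => hx0 (by rw [← hcancel x hxF, h, zero_mul]), ?_⟩
    have hle := abs_cross_le hY hZ hc (hF x hxF).2 e
    rw [← hcancel x hxF, abs_mul, abs_of_pos hm] at hle
    rw [← mul_div_assoc, le_div_iff₀ hm']
    exact_mod_cast hle
  have hGcard : (G.card : ℝ) ≤ I.card * M := by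
    rw [Finset.card_eq_sum_card_image (fun x => cross e x / m) G, Nat.cast_sum, ← nsmul_eq_mul]
    refine Finset.sum_le_card_nsmul _ _ _ fun v hv => ?_
    obtain ⟨x₀, hx₀, rfl⟩ := Finset.mem_image.mp hv
    obtain ⟨hx₀F, hx₀0⟩ := Finset.mem_filter.mp hx₀
    refine le_trans ?_ (hfib x₀ hx₀F hx₀0)
    refine Nat.cast_le.mpr (Finset.card_le_card fun x hx => ?_)
    obtain ⟨hxG, hxv⟩ := Finset.mem_filter.mp hx
    have hxF := (Finset.mem_filter.mp hxG).1
    exact Finset.mem_filter.mpr ⟨hxF, by rw [← hcancel x hxF, hxv, hcancel x₀ hx₀F]⟩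
  calc (F.card : ℝ) = ({x ∈ F | cross e x = 0} : Finset _).card + G.card := by
        rw [hG]; exact_mod_cast (Finset.card_filter_add_card_filter_not _).symm
    _ ≤ M₀ + I.card * M := by gcongr
    _ ≤ M₀ + 2 * (2 * c * (boxNorm Y Z e / m)) * M := by gcongr
    _ = _ := by ring

/-- The points of `congruenceLattice m l` in the box `|x.1| ≤ c * Y`, `|x.2| ≤ c * Z`. -/
noncomputable def latticeBox (m l Y Z c : ℤ) : Finset (ℤ × ℤ) :=
  {x ∈ Finset.Icc (-(c * Y)) (c * Y) ×ˢ Finset.Icc (-(c * Z)) (c * Z) | m ∣ x.1 - l * x.2}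

lemma mem_latticeBox (hY : 0 < Y) (hZ : 0 < Z) {c : ℤ} {x : ℤ × ℤ} :
    x ∈ latticeBox m l Y Z c ↔ x ∈ congruenceLattice m l ∧ boxNorm Y Z x ≤ c * (Y * Z) := by
  rw [latticeBox, Finset.mem_filter, Finset.mem_product, Finset.mem_Icc, Finset.mem_Icc,
    ← abs_le, ← abs_le, boxNorm_le_iff hY hZ, mem_congruenceLattice, and_comm]

lemma abs_sub_le_of_ediv_eq {a b n : ℤ} (hn : 0 < n) (h : a / n = b / n) : |a - b| ≤ n := by
  have ha := Int.emod_add_mul_ediv a n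
  have hb := Int.emod_add_mul_ediv b n
  rw [h] at ha
  rw [abs_le]
  constructor <;> linarith [Int.emod_nonneg a hn.ne', Int.emod_nonneg b hn.ne',
    Int.emod_lt_of_pos a hn, Int.emod_lt_of_pos b hn]

lemma ediv_mem_Icc_of_abs_le {a n c : ℤ} (hn : 0 < n) (h : |a| ≤ c * n) :
    a / n ∈ Finset.Icc (-c) c := by
  obtain ⟨h₁, h₂⟩ := abs_le.mp h
  exact Finset.mem_Icc.mpr
    ⟨(Int.le_ediv_iff_mul_le hn).mpr (by linarith), Int.ediv_le_of_le_mul hn h₂⟩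

lemma card_latticeBox_two_le (m l : ℤ) (hY : 0 < Y) (hZ : 0 < Z) :
    (latticeBox m l Y Z 2).card ≤ 25 * (latticeBox m l Y Z 1).card := by
  set cell : ℤ × ℤ → ℤ × ℤ := fun x => (x.1 / Y, x.2 / Z)
  have hfib : ∀ v ∈ (latticeBox m l Y Z 2).image cell,
      ({x ∈ latticeBox m l Y Z 2 | cell x = v} : Finset _).card ≤
        (latticeBox m l Y Z 1).card := by
    intro v hv
    obtain ⟨x₀, hx₀, rfl⟩ := Finset.mem_image.mp hv
    refine Finset.card_le_card_of_injOn (fun x => x - x₀) (fun x hx => ?_)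
      (sub_left_injective.injOn)
    obtain ⟨hx, hcell⟩ := Finset.mem_filter.mp hx
    obtain ⟨h₁, h₂⟩ := Prod.mk.inj hcell
    rw [Finset.mem_coe, mem_latticeBox hY hZ, boxNorm_le_iff hY hZ, one_mul, one_mul]
    exact ⟨AddSubgroup.sub_mem _ ((mem_latticeBox hY hZ).mp hx).1
      ((mem_latticeBox hY hZ).mp hx₀).1, abs_sub_le_of_ediv_eq hY h₁, abs_sub_le_of_ediv_eq hZ h₂⟩
  have hcells : ((latticeBox m l Y Z 2).image cell).card ≤ 25 := by
    refine (Finset.card_le_card (t := Finset.Icc (-2) 2 ×ˢ Finset.Icc (-2) 2) ?_).trans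
      (by decide)
    refine Finset.image_subset_iff.mpr fun x hx => ?_
    obtain ⟨h₁, h₂⟩ := (boxNorm_le_iff hY hZ).mp ((mem_latticeBox hY hZ).mp hx).2
    exact Finset.mem_product.mpr ⟨ediv_mem_Icc_of_abs_le hY h₁, ediv_mem_Icc_of_abs_le hZ h₂⟩
  calc _ ≤ (latticeBox m l Y Z 1).card * ((latticeBox m l Y Z 2).image cell).card :=
        Finset.card_le_mul_card_image _ _ hfib
    _ ≤ (latticeBox m l Y Z 1).card * 25 := by gcongr
    _ = _ := mul_comm _ _

lemma sub_mem_latticeBox (hY : 0 < Y) (hZ : 0 < Z) {c d : ℤ} {x y : ℤ × ℤ}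
    (hx : x ∈ latticeBox m l Y Z c) (hy : y ∈ latticeBox m l Y Z d) :
    x - y ∈ latticeBox m l Y Z (c + d) := by
  rw [mem_latticeBox hY hZ] at hx hy ⊢
  refine ⟨AddSubgroup.sub_mem _ hx.1 hy.1, (boxNorm_sub_le hY hZ x y).trans ?_⟩
  rw [add_mul]
  exact add_le_add hx.2 hy.2

lemma add_mem_latticeBox_two (hY : 0 < Y) (hZ : 0 < Z) {x y : ℤ × ℤ}
    (hx : x ∈ latticeBox m l Y Z 1) (hy : y ∈ latticeBox m l Y Z 1) :
    x + y ∈ latticeBox m l Y Z 2 := by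
  have hneg : -y ∈ latticeBox m l Y Z 1 := by
    rw [mem_latticeBox hY hZ] at hy ⊢
    exact ⟨AddSubgroup.neg_mem _ hy.1, by simpa [boxNorm] using hy.2⟩
  rw [← sub_neg_eq_add, ← one_add_one_eq_two]
  exact sub_mem_latticeBox hY hZ hx hneg

lemma zero_mem_latticeBox (hY : 0 < Y) (hZ : 0 < Z) : (0 : ℤ × ℤ) ∈ latticeBox m l Y Z 1 :=
  (mem_latticeBox hY hZ).mpr
    ⟨AddSubgroup.zero_mem _, by simp [boxNorm, mul_nonneg hY.le hZ.le]⟩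

lemma card_latticeBox_fibre_le (hY : 0 < Y) (hZ : 0 < Z)
    (he : IsShortestVector (congruenceLattice m l) Y Z e) (heYZ : boxNorm Y Z e ≤ Y * Z) (a : ℤ) :
    (({x ∈ latticeBox m l Y Z 2 | cross e x = a} : Finset _).card : ℝ) ≤
      9 * (Y * Z / boxNorm Y Z e) := by
  have he' : (0 : ℝ) < boxNorm Y Z e := by exact_mod_cast boxNorm_pos hY hZ he.ne_zero
  have hU : (1 : ℝ) ≤ Y * Z / boxNorm Y Z e := (one_le_div he').mpr (by exact_mod_cast heYZ)
  set F : Finset (ℤ × ℤ) := {x ∈ latticeBox m l Y Z 2 | cross e x = a}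
  rcases F.eq_empty_or_nonempty with hF | ⟨x₀, hx₀⟩
  · rw [hF, Finset.card_empty, Nat.cast_zero]; positivity
  obtain ⟨hx₀box, hx₀a⟩ := Finset.mem_filter.mp hx₀
  obtain ⟨S, hS, hcard⟩ := he.exists_image_eq hY hZ (F := F)
    (fun x hx => ((mem_latticeBox hY hZ).mp (Finset.mem_filter.mp hx).1).1)
    ((mem_latticeBox hY hZ).mp hx₀box).1
    (fun x hx => (Finset.mem_filter.mp hx).2.trans hx₀a.symm)
  have hSabs : ∀ n ∈ S, |(n : ℝ)| ≤ 4 * (Y * Z / boxNorm Y Z e) := fun n hn => by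
    have hnF : x₀ + n • e ∈ F := hS ▸ Finset.mem_image_of_mem _ hn
    have hbox := ((mem_latticeBox hY hZ).mp
      (sub_mem_latticeBox hY hZ (Finset.mem_filter.mp hnF).1 hx₀box)).2
    rw [add_sub_cancel_left, boxNorm_zsmul] at hbox
    rw [← mul_div_assoc, le_div_iff₀ he']
    exact_mod_cast hbox
  have herase : ((S.erase 0).card : ℝ) ≤ 2 * (4 * (Y * Z / boxNorm Y Z e)) :=
    card_nonzero_abs_le (by positivity) fun n hn =>
      ⟨Finset.ne_of_mem_erase hn, hSabs n (Finset.mem_of_mem_erase hn)⟩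
  have hpred : (S.card : ℝ) ≤ (S.erase 0).card + 1 := by
    exact_mod_cast Nat.sub_le_iff_le_add.mp Finset.pred_card_le_card_erase
  rw [← hcard]
  linarith

lemma card_latticeBox_two_le_mul (hm : 0 < m) (hY : 0 < Y) (hZ : 0 < Z)
    (he : IsShortestVector (congruenceLattice m l) Y Z e) (heYZ : boxNorm Y Z e ≤ Y * Z)
    (hme : (m : ℝ) ≤ 2 * boxNorm Y Z e) :
    ((latticeBox m l Y Z 2).card : ℝ) ≤ 90 * (Y * Z / m) := by
  have hm' : (0 : ℝ) < m := by exact_mod_cast hm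
  have he' : (0 : ℝ) < boxNorm Y Z e := by exact_mod_cast boxNorm_pos hY hZ he.ne_zero
  have : (0 : ℝ) < Y * Z := by exact_mod_cast mul_pos hY hZ
  have hfib := card_latticeBox_fibre_le hY hZ he heYZ
  set U : ℝ := Y * Z / boxNorm Y Z e with hU
  have h := card_le_of_card_cross_eq_le hm hY hZ zero_le_two he.mem
    (fun x hx => (mem_latticeBox hY hZ).mp hx) (hfib 0) (by positivity) (fun x₀ _ _ => hfib _)
  have hV : 1 ≤ 2 * (boxNorm Y Z e / m : ℝ) := by rwa [← mul_div_assoc, one_le_div hm']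
  have hUV : Y * Z / m = U * (boxNorm Y Z e / m) := by rw [hU]; field_simp
  have hU0 : 0 ≤ U := by positivity
  rw [hUV]
  push_cast at h
  nlinarith

lemma IsShortestVector.injOn_reduceMod (hY : 0 < Y) (hZ : 0 < Z)
    (he : IsShortestVector (congruenceLattice m l) Y Z e) {p q : ℕ} (hp : p.Prime) (hq : q.Prime)
    (hpq : p ≠ q) (hpm : ¬(p : ℤ) ∣ m) (hqm : ¬(q : ℤ) ∣ m)
    (hlarge : 4 * (Y * Z) < (p * q : ℤ) * boxNorm Y Z e) :
    Set.InjOn (fun x => (reduceMod p x, reduceMod q x)) (latticeBox m l Y Z 2) := by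
  have hcop : IsCoprime (p : ℤ) q :=
    Nat.isCoprime_iff_coprime.mpr ((Nat.coprime_primes hp hq).mpr hpq)
  have hcopm : IsCoprime m (p * q : ℤ) := IsCoprime.mul_right
    ((Nat.prime_iff_prime_int.mp hp).coprime_iff_not_dvd.mpr hpm).symm
    ((Nat.prime_iff_prime_int.mp hq).coprime_iff_not_dvd.mpr hqm).symm
  have hpos : (0 : ℤ) < p * q := by exact_mod_cast Nat.mul_pos hp.pos hq.pos
  intro x hx y hy hxy
  simp only [reduceMod, Prod.mk.injEq, ZMod.intCast_eq_intCast_iff_dvd_sub] at hxy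
  obtain ⟨⟨hp₁, hp₂⟩, hq₁, hq₂⟩ := hxy
  obtain ⟨w₁, hw₁⟩ := hcop.mul_dvd hp₁ hq₁
  obtain ⟨w₂, hw₂⟩ := hcop.mul_dvd hp₂ hq₂
  have hsub : y - x = (p * q : ℤ) • (w₁, w₂) := Prod.ext hw₁ hw₂
  obtain ⟨hmem, hbox⟩ := (mem_latticeBox hY hZ).mp (sub_mem_latticeBox hY hZ hy hx)
  rw [hsub] at hmem hbox
  have hw : (w₁, w₂) ∈ congruenceLattice m l := by
    refine hcopm.dvd_of_dvd_mul_left (y := (p * q : ℤ)) ?_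
    have h : (p * q : ℤ) * (w₁ - l * w₂) =
        ((p * q : ℤ) • (w₁, w₂)).1 - l * ((p * q : ℤ) • (w₁, w₂)).2 := by
      simp only [Prod.smul_mk, smul_eq_mul]; ring
    exact h ▸ mem_congruenceLattice.mp hmem
  rw [boxNorm_zsmul, abs_of_pos hpos] at hbox
  have hw0 := he.eq_zero_of_lt _ hw (lt_of_mul_lt_mul_left (hbox.trans_lt hlarge) hpos.le)
  rw [hw0, smul_zero] at hsub
  exact (sub_eq_zero.mp hsub).symm

end Lattice

section SquarePoints

open Classical in
/-- The coprime points of `congruenceLattice m l` in `[1, Y] × [1, Z]` at which the cubic form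
`α s₁³ + β s₂³` is a nonzero square. -/
noncomputable def squarePoints (m l α β Y Z : ℤ) : Finset (ℤ × ℤ) :=
  {s ∈ Finset.Icc 1 Y ×ˢ Finset.Icc 1 Z | s ∈ congruenceLattice m l ∧ IsCoprime s.1 s.2 ∧
    cubicForm α β s ≠ 0 ∧ IsSquare (cubicForm α β s)}

/-- The parameters of `squarePoints` are nondegenerate and bounded by `H`. -/
structure HeightLE (H : ℝ) (m α β Y Z : ℤ) : Prop where
  two_le : 2 ≤ H
  m_pos : 0 < m
  Y_pos : 0 < Y
  Z_pos : 0 < Z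
  α_ne_zero : α ≠ 0
  β_ne_zero : β ≠ 0
  m_le : (m : ℝ) ≤ H
  abs_α_le : |(α : ℝ)| ≤ H
  abs_β_le : |(β : ℝ)| ≤ H
  Y_le : (Y : ℝ) ≤ H
  Z_le : (Z : ℝ) ≤ H

variable {H : ℝ} {m l α β Y Z : ℤ} {e s : ℤ × ℤ}

lemma mem_squarePoints : s ∈ squarePoints m l α β Y Z ↔
    (1 ≤ s.1 ∧ s.1 ≤ Y) ∧ (1 ≤ s.2 ∧ s.2 ≤ Z) ∧ s ∈ congruenceLattice m l ∧
      IsCoprime s.1 s.2 ∧ cubicForm α β s ≠ 0 ∧ IsSquare (cubicForm α β s) := by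
  simp only [squarePoints, Finset.mem_filter, Finset.mem_product, Finset.mem_Icc, and_assoc]

lemma squarePoints_subset_latticeBox (hY : 0 < Y) (hZ : 0 < Z) :
    squarePoints m l α β Y Z ⊆ latticeBox m l Y Z 1 := fun s hs => by
  obtain ⟨⟨h₁, hY₁⟩, ⟨h₂, hZ₂⟩, hmem, -⟩ := mem_squarePoints.mp hs
  rw [mem_latticeBox hY hZ, boxNorm_le_iff hY hZ, one_mul, one_mul, abs_of_pos (by omega),
    abs_of_pos (by omega)]
  exact ⟨hmem, hY₁, hZ₂⟩

namespace HeightLE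

lemma mul_le (h : HeightLE H m α β Y Z) : (Y : ℝ) * Z ≤ H ^ 2 := by
  have hZ : (0 : ℝ) ≤ Z := by exact_mod_cast h.Z_pos.le
  have := h.two_le
  nlinarith [h.Y_le, h.Z_le]

lemma abs_mul_cross_le (h : HeightLE H m α β Y Z) (heYZ : boxNorm Y Z e ≤ Y * Z) {x : ℤ × ℤ}
    (hx : boxNorm Y Z x ≤ 1 * (Y * Z)) : |((α * β * cross e x : ℤ) : ℝ)| ≤ H ^ 5 := by
  have hcross : |cross e x| ≤ 2 * (Y * Z) :=
    (abs_cross_le h.Y_pos h.Z_pos zero_le_one hx e).trans (by linarith)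
  have hcross' : |(cross e x : ℝ)| ≤ H * H ^ 2 :=
    calc |(cross e x : ℝ)| ≤ 2 * (Y * Z) := by exact_mod_cast hcross
      _ ≤ H * H ^ 2 := mul_le_mul h.two_le h.mul_le
          (by exact_mod_cast (mul_pos h.Y_pos h.Z_pos).le) (by linarith [h.two_le])
  calc |((α * β * cross e x : ℤ) : ℝ)| = |(α : ℝ)| * |(β : ℝ)| * |(cross e x : ℝ)| := by
        push_cast; rw [abs_mul, abs_mul]
    _ ≤ H * H * (H * H ^ 2) := by
        have := h.two_le
        gcongr
        exacts [h.abs_α_le, h.abs_β_le]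
    _ = H ^ 5 := by ring

lemma abs_cubicForm_le (h : HeightLE H m α β Y Z) (hs : s ∈ squarePoints m l α β Y Z) :
    |(cubicForm α β s : ℝ)| ≤ H ^ 5 := by
  obtain ⟨⟨h₁, hY₁⟩, ⟨h₂, hZ₂⟩, -⟩ := mem_squarePoints.mp hs
  have hterm {γ t T : ℤ} (hγ : |(γ : ℝ)| ≤ H) (ht : 1 ≤ t) (htT : t ≤ T) (hT : (T : ℝ) ≤ H) :
      |(γ * t ^ 3 : ℝ)| ≤ H ^ 4 := by
    have ht0 : (0 : ℝ) ≤ t := by exact_mod_cast (by omega : 0 ≤ t)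
    have htH : (t : ℝ) ≤ H := le_trans (by exact_mod_cast htT) hT
    calc |(γ * t ^ 3 : ℝ)| = |(γ : ℝ)| * t ^ 3 := by rw [abs_mul, abs_of_nonneg (pow_nonneg ht0 3)]
      _ ≤ H * H ^ 3 := by
          have hH := h.two_le
          gcongr
      _ = H ^ 4 := by ring
  calc |(cubicForm α β s : ℝ)| = |(α * s.1 ^ 3 + β * s.2 ^ 3 : ℝ)| := by
        rw [cubicForm]; push_cast; rfl
    _ ≤ H ^ 4 + H ^ 4 := (abs_add_le _ _).trans
        (add_le_add (hterm h.abs_α_le h₁ hY₁ h.Y_le) (hterm h.abs_β_le h₂ hZ₂ h.Z_le))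
    _ = 2 * H ^ 4 := by ring
    _ ≤ H * H ^ 4 := by
        have := h.two_le
        gcongr
    _ = H ^ 5 := by ring

lemma natAbs_mul_le (h : HeightLE H m α β Y Z) : ((α * β * m).natAbs : ℝ) ≤ H ^ 5 := by
  have hm : (0 : ℝ) < m := by exact_mod_cast h.m_pos
  have hH : 1 ≤ H := by linarith [h.two_le]
  calc ((α * β * m).natAbs : ℝ) = |(α : ℝ)| * |(β : ℝ)| * m := by
        rw [Nat.cast_natAbs]; push_cast; rw [abs_mul, abs_mul, abs_of_pos hm]
    _ ≤ H * H * H := by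
        gcongr
        exacts [h.abs_α_le, h.abs_β_le, h.m_le]
    _ = H ^ 3 := by ring
    _ ≤ H ^ 5 := pow_le_pow_right₀ hH (by norm_num)

end HeightLE

lemma card_squarePoints_cross_eq_zero_le (he : e ≠ 0) :
    ({s ∈ squarePoints m l α β Y Z | cross e s = 0} : Finset _).card ≤ 1 := by
  rw [Finset.card_le_one]
  intro s hs t ht
  obtain ⟨hs, hs0⟩ := Finset.mem_filter.mp hs
  obtain ⟨ht, ht0⟩ := Finset.mem_filter.mp ht
  obtain ⟨⟨hs₁, -⟩, -, -, hscop, -⟩ := mem_squarePoints.mp hs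
  obtain ⟨⟨ht₁, -⟩, -, -, htcop, -⟩ := mem_squarePoints.mp ht
  exact eq_of_isCoprime_of_cross_eq_zero he hs0 ht0 hs₁ ht₁ hscop htcop

lemma exists_card_squarePoints_line_le {δ : ℝ} (hδ : 0 < δ) :
    ∃ C : ℝ, 0 < C ∧ ∀ {H : ℝ} {m l α β Y Z : ℤ} {e s₀ : ℤ × ℤ}, HeightLE H m α β Y Z →
      IsShortestVector (congruenceLattice m l) Y Z e → boxNorm Y Z e ≤ Y * Z →
      s₀ ∈ squarePoints m l α β Y Z → cross e s₀ ≠ 0 →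
      (({s ∈ squarePoints m l α β Y Z | cross e s = cross e s₀} : Finset _).card : ℝ) ≤
        C * (√(Y * Z / boxNorm Y Z e) * H ^ δ) := by
  obtain ⟨C, hC, hline⟩ := exists_card_isSquare_cubicForm_line_le (ε := δ / 5) (by positivity)
  refine ⟨C, hC, fun {H m l α β Y Z e s₀} h he heYZ hs₀ hcross => ?_⟩
  have hY := h.Y_pos
  have hZ := h.Z_pos
  have hH : 0 ≤ H := by linarith [h.two_le]
  have he' : (0 : ℝ) < boxNorm Y Z e := by exact_mod_cast boxNorm_pos hY hZ he.ne_zero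
  have hbox := squarePoints_subset_latticeBox (m := m) (l := l) (α := α) (β := β) hY hZ
  set F : Finset (ℤ × ℤ) := {s ∈ squarePoints m l α β Y Z | cross e s = cross e s₀}
  have hFS : ∀ s ∈ F, s ∈ squarePoints m l α β Y Z := fun s hs => (Finset.mem_filter.mp hs).1
  obtain ⟨S, hS, hcard⟩ := he.exists_image_eq hY hZ (F := F)
    (fun s hs => ((mem_latticeBox hY hZ).mp (hbox (hFS s hs))).1)
    ((mem_latticeBox hY hZ).mp (hbox hs₀)).1 (fun s hs => (Finset.mem_filter.mp hs).2)
  have hSF : ∀ n ∈ S, s₀ + n • e ∈ squarePoints m l α β Y Z := fun n hn =>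
    hFS _ (hS ▸ Finset.mem_image_of_mem _ hn)
  have hdiff : ∀ n ∈ S, ∀ k ∈ S, |((n - k : ℤ) : ℝ)| ≤ Y * Z / boxNorm Y Z e := by
    intro n hn k hk
    have hle : boxNorm Y Z ((n - k) • e) ≤ Y * Z := by
      obtain ⟨⟨hn₁, hn₂⟩, ⟨hn₃, hn₄⟩, -⟩ := mem_squarePoints.mp (hSF n hn)
      obtain ⟨⟨hk₁, hk₂⟩, ⟨hk₃, hk₄⟩, -⟩ := mem_squarePoints.mp (hSF k hk)
      rw [sub_smul, ← add_sub_add_left_eq_sub (n • e) (k • e) s₀, ← one_mul (Y * Z),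
        boxNorm_le_iff hY hZ, Prod.fst_sub, Prod.snd_sub, abs_le, abs_le]
      omega
    rw [boxNorm_zsmul] at hle
    rw [le_div_iff₀ he']
    exact_mod_cast hle
  have hcount := hline (mul_ne_zero (mul_ne_zero h.α_ne_zero h.β_ne_zero) hcross)
    ((one_le_div he').mpr (by exact_mod_cast heYZ)) hdiff
    (fun n hn => (mem_squarePoints.mp (hSF n hn)).2.2.2.2.2)
  rw [← hcard]
  refine hcount.trans ?_
  have hHδ : (H ^ 5) ^ (δ / 5) = H ^ δ := by
    rw [← Real.rpow_natCast_mul hH]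
    ring_nf
  rw [← hHδ]
  gcongr
  exact h.abs_mul_cross_le heYZ ((mem_latticeBox hY hZ).mp (hbox hs₀)).2

lemma exists_card_squarePoints_le_lines {δ : ℝ} (hδ : 0 < δ) :
    ∃ C : ℝ, 0 < C ∧ ∀ {H : ℝ} {m l α β Y Z : ℤ} {e : ℤ × ℤ}, HeightLE H m α β Y Z →
      IsShortestVector (congruenceLattice m l) Y Z e → boxNorm Y Z e ≤ Y * Z →
      ((squarePoints m l α β Y Z).card : ℝ) ≤
        1 + C * (2 * (boxNorm Y Z e / m) * √(Y * Z / boxNorm Y Z e)) * H ^ δ := by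
  obtain ⟨C, hC, hline⟩ := exists_card_squarePoints_line_le hδ
  refine ⟨2 * C, by positivity, fun {H m l α β Y Z e} h he heYZ => ?_⟩
  have hY := h.Y_pos
  have hZ := h.Z_pos
  have hH : 0 ≤ H := by linarith [h.two_le]
  have hcount := card_le_of_card_cross_eq_le (F := squarePoints m l α β Y Z) (M₀ := 1)
    h.m_pos hY hZ zero_le_one he.mem
    (fun s hs => (mem_latticeBox hY hZ).mp (squarePoints_subset_latticeBox hY hZ hs))
    (by exact_mod_cast card_squarePoints_cross_eq_zero_le he.ne_zero) (by positivity)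
    (fun s₀ hs₀ hcross => hline h he heYZ hs₀ hcross)
  refine hcount.trans (le_of_eq ?_)
  push_cast
  ring

lemma exists_mul_rpow_le_primeCounting {δ M : ℝ} (hδ : 0 < δ) :
    ∃ A : ℝ, 4 ≤ A ∧ ∀ {H w : ℝ}, 1 ≤ H → 1 ≤ w → w ≤ H ^ 3 →
      M * (w * H ^ δ) ≤ Nat.primeCounting ⌊A * (w * H ^ (2 * δ))⌋₊ := by
  set η := δ / (3 + 2 * δ) with hη
  have hη0 : 0 < η := by positivity
  have hηhalf : η ≤ 1 / 2 := by rw [hη, div_le_iff₀ (by positivity)]; linarith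
  set A := (16 * M / η) ^ 2 + 4
  have hA4 : 4 ≤ A := le_add_of_nonneg_left (sq_nonneg _)
  have hsqrtA : 16 * M / η ≤ √A := Real.le_sqrt_of_sq_le (by linarith)
  refine ⟨A, hA4, fun {H w} hH hw hwH => ?_⟩
  have hH0 : 0 < H := by linarith
  have hHδ : 1 ≤ H ^ δ := Real.one_le_rpow hH hδ.le
  have hH2δ : H ^ (2 * δ) = H ^ δ * H ^ δ := by rw [two_mul, Real.rpow_add hH0]
  set P := A * (w * H ^ (2 * δ)) with hP
  have hP4 : 4 ≤ P := by
    have : 1 ≤ w * (H ^ δ * H ^ δ) := by nlinarith [mul_le_mul hHδ hHδ zero_le_one (by positivity)]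
    rw [hP, hH2δ]; nlinarith
  have hfloor : P / 2 ≤ ⌊P⌋₊ := by linarith [Nat.lt_floor_add_one P]
  have hPη : (⌊P⌋₊ : ℝ) ^ η ≤ √A * H ^ δ := by
    have hPH : P ≤ A * H ^ (3 + 2 * δ) := by
      rw [hP, Real.rpow_add hH0]
      gcongr
      exact_mod_cast hwH
    calc (⌊P⌋₊ : ℝ) ^ η ≤ (A * H ^ (3 + 2 * δ)) ^ η := by
          gcongr; exact (Nat.floor_le (by positivity)).trans hPH
      _ = A ^ η * H ^ δ := by
          rw [Real.mul_rpow (by positivity) (by positivity), ← Real.rpow_mul hH0.le, hη,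
            mul_div_cancel₀ _ (by positivity)]
      _ ≤ √A * H ^ δ := by
          rw [Real.sqrt_eq_rpow]
          gcongr
          linarith
  refine le_trans ?_ (rpow_le_primeCounting hη0 (Nat.le_floor (by push_cast; linarith)))
  have hPpos : (0 : ℝ) < ⌊P⌋₊ := by linarith
  have hquot : √A / 2 * (w * H ^ δ) ≤ (⌊P⌋₊ : ℝ) ^ (1 - η) := by
    rw [Real.rpow_sub hPpos, Real.rpow_one, le_div_iff₀ (by positivity)]
    calc √A / 2 * (w * H ^ δ) * (⌊P⌋₊ : ℝ) ^ η ≤ √A / 2 * (w * H ^ δ) * (√A * H ^ δ) := by gcongr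
      _ = √A * √A * (w * (H ^ δ * H ^ δ)) / 2 := by ring
      _ = P / 2 := by rw [Real.mul_self_sqrt (by positivity), ← hH2δ]
      _ ≤ _ := hfloor
  calc M * (w * H ^ δ) = η / 8 * (16 * M / η / 2 * (w * H ^ δ)) := by field_simp; ring
    _ ≤ η / 8 * (√A / 2 * (w * H ^ δ)) := by gcongr
    _ ≤ _ := by gcongr

lemma primeCounting_le_card_goodPrimes_add {w : ℝ} (hw : 0 ≤ w) (N : ℕ) {D : ℕ} (hD : D ≠ 0) :
    (N.primeCounting : ℝ) ≤
      ({p ∈ goodPrimes N D | w < (p : ℕ)} : Finset ℕ).card + w + 2 * Real.log (6 * D) := by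
  have hsub : N.primesLE ⊆ {p ∈ goodPrimes N D | w < (p : ℕ)} ∪ Finset.Ioc 0 ⌊w⌋₊ ∪
      (6 * D).primeFactors := fun p hp => by
    have hprime := (Nat.mem_primesLE.mp hp).2
    rw [Finset.mem_union, Finset.mem_union, Finset.mem_filter, Finset.mem_Ioc, Nat.le_floor_iff hw]
    rcases Finset.mem_union.mp (primesLE_subset_goodPrimes_union_primeFactors N hD hp) with h | h
    · exact Or.inl ((lt_or_ge w p).imp (⟨h, ·⟩) (⟨hprime.pos, ·⟩))
    · exact Or.inr h
  have hcard := (Finset.card_le_card hsub).trans ((Finset.card_union_le _ _).trans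
    (Nat.add_le_add_right (Finset.card_union_le _ _) _))
  rw [Nat.card_Ioc, Nat.sub_zero, Nat.primesLE_card_eq_primeCounting] at hcard
  have hfactors := card_primeFactors_le (6 * D)
  push_cast at hfactors
  calc (N.primeCounting : ℝ) ≤ ({p ∈ goodPrimes N D | w < (p : ℕ)} : Finset ℕ).card + ⌊w⌋₊ +
        (6 * D).primeFactors.card := by exact_mod_cast hcard
    _ ≤ _ := by gcongr; exact Nat.floor_le hw

lemma exists_sieving_primes {δ : ℝ} (hδ : 0 < δ) :
    ∃ A : ℝ, 0 < A ∧ ∀ {H w : ℝ} {D : ℕ}, 2 ≤ H → 1 ≤ w → w ≤ H ^ 3 → D ≠ 0 → (D : ℝ) ≤ H ^ 5 →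
      ∃ T : Finset ℕ, (∀ p ∈ T, p.Prime ∧ 3 < p ∧ ¬p ∣ D ∧ 2 * w < p ∧
        (p : ℝ) ≤ A * (w * H ^ (2 * δ))) ∧ w ≤ T.card ∧ 20 * Real.log H ≤ T.card := by
  obtain ⟨A, hA, hcount⟩ := exists_mul_rpow_le_primeCounting (M := 3 + 36 / δ) hδ
  refine ⟨A, by linarith, fun {H w D} hH hw hwH hD hDH => ?_⟩
  have hlogH : 0 ≤ Real.log H := Real.log_nonneg (by linarith)
  set P := A * (w * H ^ (2 * δ))
  have hT := (hcount (by linarith) hw hwH).trans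
    (primeCounting_le_card_goodPrimes_add (w := 2 * w) (by positivity) ⌊P⌋₊ hD)
  set T : Finset ℕ := {p ∈ goodPrimes ⌊P⌋₊ D | 2 * w < (p : ℕ)}
  have hlogD : Real.log (6 * D) ≤ 8 * Real.log H := by
    have : (0 : ℝ) < D := by exact_mod_cast hD.bot_lt
    rw [← Nat.cast_ofNat (n := 8), ← Real.log_pow]
    refine Real.log_le_log (by positivity) ?_
    calc (6 * D : ℝ) ≤ 2 ^ 3 * H ^ 5 := by gcongr; norm_num
      _ ≤ H ^ 3 * H ^ 5 := by gcongr
      _ = H ^ 8 := by ring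
  have hlog : 36 * Real.log H ≤ 36 / δ * (w * H ^ δ) := by
    calc 36 * Real.log H ≤ 36 * (H ^ δ / δ) := by
          gcongr; exact Real.log_le_rpow_div (by linarith) hδ
      _ = 36 / δ * (1 * H ^ δ) := by ring
      _ ≤ _ := by gcongr
  have hw' : w ≤ w * H ^ δ :=
    le_mul_of_one_le_right (by linarith) (Real.one_le_rpow (by linarith) hδ.le)
  refine ⟨T, fun p hp => ?_, by linarith, by linarith⟩
  obtain ⟨hp, hwp⟩ := Finset.mem_filter.mp hp
  obtain ⟨hpP, hprime, hp3, hpD⟩ := mem_goodPrimes.mp hp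
  exact ⟨hprime, hp3, hpD, hwp, (Nat.le_floor_iff (by positivity)).mp hpP⟩

lemma four_mul_lt_mul_of_two_mul_sqrt_lt {a b : ℤ} (ha : 0 ≤ a) (hb : 0 < b) {p q : ℕ}
    (hp : 2 * √(a / b) < p) (hq : 2 * √(a / b) < q) : 4 * a < (p * q : ℤ) * b := by
  have hb' : (0 : ℝ) < b := by exact_mod_cast hb
  have : (0 : ℝ) ≤ a := by exact_mod_cast ha
  have hprod := mul_lt_mul'' hp hq (by positivity) (by positivity)
  rw [mul_mul_mul_comm, Real.mul_self_sqrt (by positivity), ← mul_div_assoc,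
    div_lt_iff₀ hb'] at hprod
  norm_num at hprod
  exact_mod_cast hprod

lemma le_of_mul_mul_sq_half_le {S A A₁ t M : ℝ} (ht : 0 < t) (hA₁ : 0 < A₁) (hA : A ≤ 25 * A₁)
    (hA0 : 0 ≤ A) (hM : 0 ≤ M)
    (h : S * A₁ * (t / 2) ^ 2 ≤ t * A ^ 2 + t ^ 2 * (M * A)) : S ≤ 100 * (A / t + M) := by
  refine le_of_mul_le_mul_right ?_ (by positivity : 0 < A₁ * (t / 2) ^ 2)
  calc S * (A₁ * (t / 2) ^ 2) ≤ t * A ^ 2 + t ^ 2 * (M * A) := by linarith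
    _ = A * (t ^ 2 * (A / t + M)) := by field_simp
    _ ≤ 25 * A₁ * (t ^ 2 * (A / t + M)) := by gcongr
    _ = 100 * (A / t + M) * (A₁ * (t / 2) ^ 2) := by ring

lemma half_card_le_sum_jacobiSym_cubicForm (h : HeightLE H m α β Y Z)
    (hs : s ∈ squarePoints m l α β Y Z) {T : Finset ℕ} (hT : ∀ p ∈ T, p.Prime)
    (hcard : 20 * Real.log H ≤ T.card) :
    (T.card : ℝ) / 2 ≤ ∑ p ∈ T, (jacobiSym (cubicForm α β s) p : ℝ) := by
  obtain ⟨-, -, -, -, hne, hsq⟩ := mem_squarePoints.mp hs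
  have hsum := card_sub_log_le_sum_jacobiSym hne hsq hT
  have hlog : Real.log |(cubicForm α β s : ℝ)| ≤ 5 * Real.log H := by
    rw [← Nat.cast_ofNat (n := 5), ← Real.log_pow]
    exact Real.log_le_log (by positivity) (h.abs_cubicForm_le hs)
  linarith

lemma sum_latticeBox_jacobiSym_le (h : HeightLE H m α β Y Z)
    (he : IsShortestVector (congruenceLattice m l) Y Z e) {p q : ℕ} {P : ℝ} (hpq : p ≠ q)
    (hp : p.Prime ∧ 3 < p ∧ ¬p ∣ (α * β * m).natAbs ∧
      2 * √(Y * Z / boxNorm Y Z e) < p ∧ (p : ℝ) ≤ P)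
    (hq : q.Prime ∧ 3 < q ∧ ¬q ∣ (α * β * m).natAbs ∧
      2 * √(Y * Z / boxNorm Y Z e) < q ∧ (q : ℝ) ≤ P) :
    ∑ x ∈ latticeBox m l Y Z 2, ∑ y ∈ latticeBox m l Y Z 2,
        (jacobiSym (cubicForm α β (x - y)) p : ℝ) * (jacobiSym (cubicForm α β (x - y)) q : ℝ) ≤
      441 * P ^ 2 * (latticeBox m l Y Z 2).card := by
  obtain ⟨hpprime, hp3, hpD, hpw, hpP⟩ := hp
  obtain ⟨hqprime, hq3, hqD, hqw, hqP⟩ := hq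
  rw [← Int.natCast_dvd] at hpD hqD
  have hinj := he.injOn_reduceMod h.Y_pos h.Z_pos hpprime hqprime hpq
    (fun hdvd => hpD (hdvd.mul_left _)) (fun hdvd => hqD (hdvd.mul_left _))
    (four_mul_lt_mul_of_two_mul_sqrt_lt (mul_pos h.Y_pos h.Z_pos).le
      (boxNorm_pos h.Y_pos h.Z_pos he.ne_zero) (by exact_mod_cast hpw) (by exact_mod_cast hqw))
  calc _ ≤ 21 ^ 2 * (p : ℝ) * q * (latticeBox m l Y Z 2).card :=
        sum_sum_jacobiSym_cubicForm_mul_le hpprime hqprime hp3 hq3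
          (fun hdvd => hpD (hdvd.mul_right _)) (fun hdvd => hqD (hdvd.mul_right _)) hinj
    _ ≤ 21 ^ 2 * P * P * (latticeBox m l Y Z 2).card := by
        have hP : 0 ≤ P := p.cast_nonneg.trans hpP
        gcongr
    _ = 441 * P ^ 2 * (latticeBox m l Y Z 2).card := by ring

lemma card_squarePoints_le_of_primes (h : HeightLE H m α β Y Z)
    (he : IsShortestVector (congruenceLattice m l) Y Z e) {T : Finset ℕ} {P : ℝ}
    (hT : ∀ p ∈ T, p.Prime ∧ 3 < p ∧ ¬p ∣ (α * β * m).natAbs ∧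
      2 * √(Y * Z / boxNorm Y Z e) < p ∧ (p : ℝ) ≤ P)
    (hcard : 20 * Real.log H ≤ T.card) (hTpos : 0 < (T.card : ℝ)) :
    ((squarePoints m l α β Y Z).card : ℝ) ≤
      100 * ((latticeBox m l Y Z 2).card / T.card + 441 * P ^ 2) := by
  have hY := h.Y_pos
  have hZ := h.Z_pos
  have hsub : latticeBox m l Y Z 1 ⊆ latticeBox m l Y Z 2 := fun x hx =>
    add_zero x ▸ add_mem_latticeBox_two hY hZ hx (zero_mem_latticeBox hY hZ)
  have hsieve := square_sieve (χ := fun p d => (jacobiSym (cubicForm α β d) p : ℝ))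
    (by positivity) (fun p _ d => abs_jacobiSym_le_one _ p)
    (fun p hp q hq hpq => sum_latticeBox_jacobiSym_le h he hpq (hT p hp) (hT q hq)) hsub
    (fun s hs y hy => add_mem_latticeBox_two hY hZ hy (squarePoints_subset_latticeBox hY hZ hs))
    (fun s hs => half_card_le_sum_jacobiSym_cubicForm h hs (fun p hp => (hT p hp).1) hcard)
  exact le_of_mul_mul_sq_half_le hTpos
    (by exact_mod_cast Finset.card_pos.mpr ⟨0, zero_mem_latticeBox hY hZ⟩)
    (by exact_mod_cast card_latticeBox_two_le m l hY hZ) (by positivity) (by positivity) hsieve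

lemma mul_sqrt_le_rpow_two_thirds {U V : ℝ} (hU : 0 ≤ U) (hV : 0 ≤ V) (hVU : V ≤ √U) :
    V * √U ≤ (U * V) ^ ((2 : ℝ) / 3) := by
  rw [div_eq_mul_inv, Real.rpow_mul (by positivity),
    Real.le_rpow_inv_iff_of_pos (by positivity) (by positivity) (by norm_num)]
  norm_cast
  calc (V * √U) ^ 3 = V ^ 2 * √U ^ 3 * V := by ring
    _ ≤ V ^ 2 * √U ^ 3 * √U := by gcongr
    _ = (√U ^ 2 * V) ^ 2 := by ring
    _ = (U * V) ^ 2 := by rw [Real.sq_sqrt hU]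

lemma sqrt_le_rpow_third {U V : ℝ} (hU : 0 ≤ U) (hUV : √U ≤ V) :
    √U ≤ (U * V) ^ ((1 : ℝ) / 3) := by
  have hV : 0 ≤ V := (Real.sqrt_nonneg U).trans hUV
  rw [one_div, Real.le_rpow_inv_iff_of_pos (by positivity) (by positivity) (by norm_num)]
  norm_cast
  calc √U ^ 3 = √U ^ 2 * √U := by ring
    _ ≤ √U ^ 2 * V := by gcongr
    _ = U * V := by rw [Real.sq_sqrt hU]

lemma rpow_third_pow_three {W : ℝ} (hW : 0 ≤ W) : (W ^ ((1 : ℝ) / 3)) ^ 3 = W := by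
  rw [← Real.rpow_mul_natCast hW]
  norm_num

lemma rpow_third_sq {W : ℝ} (hW : 0 ≤ W) : (W ^ ((1 : ℝ) / 3)) ^ 2 = W ^ ((2 : ℝ) / 3) := by
  rw [← Real.rpow_mul_natCast hW]
  norm_num

lemma two_mul_rpow_two_thirds_le {x : ℝ} (hx : 0 ≤ x) :
    (2 * x) ^ ((2 : ℝ) / 3) ≤ 2 * x ^ ((2 : ℝ) / 3) := by
  rw [Real.mul_rpow zero_le_two hx]
  gcongr
  exact Real.rpow_le_self_of_one_le one_le_two (by norm_num)

lemma div_mul_two_mul_div_eq {a b c : ℝ} (hb : b ≠ 0) : a / b * (2 * (b / c)) = 2 * (a / c) := by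
  field_simp

lemma HeightLE.rpow_third_le (h : HeightLE H m α β Y Z)
    (h1 : 1 ≤ (2 * (Y * Z / m : ℝ)) ^ ((1 : ℝ) / 3)) :
    (2 * (Y * Z / m : ℝ)) ^ ((1 : ℝ) / 3) ≤ H ^ 3 := by
  have hm : (1 : ℝ) ≤ m := by exact_mod_cast h.m_pos
  have hYZ : (0 : ℝ) ≤ Y * Z := by exact_mod_cast (mul_pos h.Y_pos h.Z_pos).le
  calc (2 * (Y * Z / m : ℝ)) ^ ((1 : ℝ) / 3)
      ≤ ((2 * (Y * Z / m : ℝ)) ^ ((1 : ℝ) / 3)) ^ 3 := le_self_pow₀ h1 (by norm_num)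
    _ = 2 * (Y * Z / m) := rpow_third_pow_three (by positivity)
    _ ≤ 2 * (Y * Z) := by gcongr; exact div_le_self hYZ hm
    _ ≤ H * H ^ 2 := mul_le_mul h.two_le h.mul_le hYZ (by linarith [h.two_le])
    _ = H ^ 3 := by ring

lemma exists_card_squarePoints_le_of_sqrt_le {δ : ℝ} (hδ : 0 < δ) :
    ∃ C : ℝ, 0 < C ∧ ∀ {H : ℝ} {m l α β Y Z : ℤ} {e : ℤ × ℤ}, HeightLE H m α β Y Z →
      IsShortestVector (congruenceLattice m l) Y Z e → boxNorm Y Z e ≤ Y * Z →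
      √(Y * Z / boxNorm Y Z e) ≤ 2 * (boxNorm Y Z e / m) →
      ((squarePoints m l α β Y Z).card : ℝ) ≤ C * (Y * Z / m) ^ ((2 : ℝ) / 3) * H ^ δ := by
  obtain ⟨A, hA, hprimes⟩ := exists_sieving_primes (δ := δ / 4) (by positivity)
  refine ⟨200 * (45 + 441 * A ^ 2), by positivity, fun {H m l α β Y Z e} h he heYZ hUV => ?_⟩
  have hH := h.two_le
  have hm : (0 : ℝ) < m := by exact_mod_cast h.m_pos
  have he' : (0 : ℝ) < boxNorm Y Z e := by
    exact_mod_cast boxNorm_pos h.Y_pos h.Z_pos he.ne_zero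
  have hYZ : (0 : ℝ) ≤ Y * Z := by exact_mod_cast (mul_pos h.Y_pos h.Z_pos).le
  have hU : 1 ≤ √(Y * Z / boxNorm Y Z e) := by
    rw [Real.one_le_sqrt, one_le_div he']
    exact_mod_cast heYZ
  set w := (2 * (Y * Z / m : ℝ)) ^ ((1 : ℝ) / 3) with hw
  have hUw : √(Y * Z / boxNorm Y Z e) ≤ w := by
    rw [hw, ← div_mul_two_mul_div_eq he'.ne']
    exact sqrt_le_rpow_third (by positivity) hUV
  have hw3 : w ^ 3 = 2 * (Y * Z / m) := rpow_third_pow_three (by positivity)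
  obtain ⟨T, hT, hTw, hTH⟩ := hprimes hH (hU.trans hUw)
    (h.rpow_third_le (hU.trans hUw))
    (Int.natAbs_ne_zero.mpr (mul_ne_zero (mul_ne_zero h.α_ne_zero h.β_ne_zero) h.m_pos.ne'))
    h.natAbs_mul_le
  have hbox : ((latticeBox m l Y Z 2).card : ℝ) ≤ 45 * w ^ 3 :=
    (card_latticeBox_two_le_mul h.m_pos h.Y_pos h.Z_pos he heYZ
      (by have := hU.trans hUV; rwa [← mul_div_assoc, one_le_div hm] at this)).trans
        (by rw [hw3]; linarith)
  have hw0 : 0 < w := by linarith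
  have hHδ : 1 ≤ H ^ δ := Real.one_le_rpow (by linarith) hδ.le
  have hexp : (H ^ (2 * (δ / 4))) ^ 2 = H ^ δ := by
    rw [← Real.rpow_mul_natCast (by linarith)]
    ring_nf
  have hsieve := card_squarePoints_le_of_primes h he (P := A * (w * H ^ (2 * (δ / 4))))
    (fun p hp => by
      obtain ⟨hprime, hp3, hpD, hpw, hpP⟩ := hT p hp
      exact ⟨hprime, hp3, hpD, by linarith, hpP⟩) hTH (by linarith)
  calc ((squarePoints m l α β Y Z).card : ℝ)
      ≤ 100 * (45 * w ^ 3 / w + 441 * (A * (w * H ^ (2 * (δ / 4)))) ^ 2) :=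
        hsieve.trans (by gcongr)
    _ = 100 * (45 * 1 + 441 * A ^ 2 * H ^ δ) * w ^ 2 := by
        rw [mul_pow, mul_pow, hexp]
        field_simp
    _ ≤ 100 * (45 * H ^ δ + 441 * A ^ 2 * H ^ δ) * (2 * (Y * Z / m) ^ ((2 : ℝ) / 3)) := by
        gcongr
        rw [hw, rpow_third_sq (by positivity)]
        exact two_mul_rpow_two_thirds_le (by positivity)
    _ = _ := by ring

lemma exists_card_squarePoints_le_of_le_sqrt {δ : ℝ} (hδ : 0 < δ) :
    ∃ C : ℝ, 0 < C ∧ ∀ {H : ℝ} {m l α β Y Z : ℤ} {e : ℤ × ℤ}, HeightLE H m α β Y Z →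
      IsShortestVector (congruenceLattice m l) Y Z e → boxNorm Y Z e ≤ Y * Z →
      2 * (boxNorm Y Z e / m) ≤ √(Y * Z / boxNorm Y Z e) →
      ((squarePoints m l α β Y Z).card : ℝ) ≤ 1 + C * (Y * Z / m) ^ ((2 : ℝ) / 3) * H ^ δ := by
  obtain ⟨C, hC, hlines⟩ := exists_card_squarePoints_le_lines hδ
  refine ⟨C * 2, by positivity, fun {H m l α β Y Z e} h he heYZ hVU => ?_⟩
  have hm : (0 : ℝ) < m := by exact_mod_cast h.m_pos
  have hH : 0 ≤ H := by linarith [h.two_le]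
  have he' : (0 : ℝ) < boxNorm Y Z e := by
    exact_mod_cast boxNorm_pos h.Y_pos h.Z_pos he.ne_zero
  have hYZ : (0 : ℝ) ≤ Y * Z := by exact_mod_cast (mul_pos h.Y_pos h.Z_pos).le
  refine (hlines h he heYZ).trans ?_
  rw [mul_assoc C 2]
  gcongr 1 + C * ?_ * H ^ δ
  refine (mul_sqrt_le_rpow_two_thirds (by positivity) (by positivity) hVU).trans ?_
  rw [div_mul_two_mul_div_eq he'.ne']
  exact two_mul_rpow_two_thirds_le (by positivity)

lemma congruenceLattice_ne_bot (hm : m ≠ 0) : congruenceLattice m l ≠ ⊥ := fun hbot => by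
  have hmem : (m, (0 : ℤ)) ∈ congruenceLattice m l := by simp [mem_congruenceLattice]
  rw [hbot, AddSubgroup.mem_bot, Prod.mk_eq_zero] at hmem
  exact hm hmem.1

lemma boxNorm_le_of_mem_squarePoints (hY : 0 < Y) (hZ : 0 < Z)
    (he : IsShortestVector (congruenceLattice m l) Y Z e) (hs : s ∈ squarePoints m l α β Y Z) :
    boxNorm Y Z e ≤ Y * Z := by
  obtain ⟨hmem, hle⟩ := (mem_latticeBox hY hZ).mp (squarePoints_subset_latticeBox hY hZ hs)
  rw [one_mul] at hle
  refine le_trans (le_of_not_gt fun hlt => ?_) hle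
  have hs₁ := (mem_squarePoints.mp hs).1.1
  simp [he.eq_zero_of_lt s hmem hlt] at hs₁

theorem exists_card_squarePoints_le {δ : ℝ} (hδ : 0 < δ) :
    ∃ C : ℝ, 0 < C ∧ ∀ {H : ℝ} {m l α β Y Z : ℤ}, HeightLE H m α β Y Z →
      ((squarePoints m l α β Y Z).card : ℝ) ≤
        C * (1 + (Y * Z / m) ^ ((2 : ℝ) / 3)) * H ^ δ := by
  obtain ⟨C₁, hC₁, hlines⟩ := exists_card_squarePoints_le_of_le_sqrt hδ
  obtain ⟨C₂, hC₂, hsieve⟩ := exists_card_squarePoints_le_of_sqrt_le hδ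
  refine ⟨1 + C₁ + C₂, by positivity, fun {H m l α β Y Z} h => ?_⟩
  have hHδ : 1 ≤ H ^ δ := Real.one_le_rpow (by linarith [h.two_le]) hδ.le
  have hm : (0 : ℝ) < m := by exact_mod_cast h.m_pos
  have hYZ : (0 : ℝ) ≤ Y * Z := by exact_mod_cast (mul_pos h.Y_pos h.Z_pos).le
  set R := ((Y : ℝ) * Z / m) ^ ((2 : ℝ) / 3)
  have : 0 ≤ R := by positivity
  obtain hempty | ⟨s, hs⟩ := (squarePoints m l α β Y Z).eq_empty_or_nonempty
  · rw [hempty, Finset.card_empty, Nat.cast_zero]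
    positivity
  obtain ⟨e, he⟩ := exists_isShortestVector (Y := Y) h.Z_pos
    (congruenceLattice_ne_bot (l := l) h.m_pos.ne')
  have heYZ := boxNorm_le_of_mem_squarePoints h.Y_pos h.Z_pos he hs
  have : (1 + C₁ + C₂) * (1 + R) * H ^ δ =
      H ^ δ + C₁ * R * H ^ δ + C₂ * R * H ^ δ + (C₁ + C₂ + R) * H ^ δ := by ring
  have hrest : 0 ≤ (C₁ + C₂ + R) * H ^ δ := by positivity
  have hR₁ : 0 ≤ C₁ * R * H ^ δ := by positivity
  have hR₂ : 0 ≤ C₂ * R * H ^ δ := by positivity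
  rcases le_total (2 * ((boxNorm Y Z e : ℝ) / m)) √(Y * Z / boxNorm Y Z e) with hVU | hUV
  · linarith [hlines h he heYZ hVU]
  · linarith [hsieve h he heYZ hUV]

end SquarePoints

section RootsOfUnity

lemma card_filter_pow_eq_le_card_filter_pow_eq_one {G : Type*} [CommGroup G] [Fintype G]
    [DecidableEq G] (k : ℕ) (c : G) :
    ({u : G | u ^ k = c} : Finset G).card ≤ ({u : G | u ^ k = 1} : Finset G).card := by
  obtain h | ⟨v, hv⟩ := ({u : G | u ^ k = c} : Finset G).eq_empty_or_nonempty
  · rw [h, Finset.card_empty]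
    exact Nat.zero_le _
  have hv' := (Finset.mem_filter.mp hv).2
  refine Finset.card_le_card_of_injOn (· * v⁻¹) (fun u hu => ?_) (mul_left_injective _).injOn
  have hu' := (Finset.mem_filter.mp hu).2
  simp [mul_pow, hu', hv']

lemma card_filter_pow_eq_one_le_mul {G G₁ G₂ : Type*} [Group G] [Fintype G] [DecidableEq G]
    [Group G₁] [Fintype G₁] [DecidableEq G₁] [Group G₂] [Fintype G₂] [DecidableEq G₂]
    (φ : G ≃* G₁ × G₂) (k : ℕ) :
    ({u : G | u ^ k = 1} : Finset G).card ≤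
      ({u : G₁ | u ^ k = 1} : Finset G₁).card * ({u : G₂ | u ^ k = 1} : Finset G₂).card := by
  rw [← Finset.card_product]
  refine Finset.card_le_card_of_injOn φ (fun u hu => ?_) φ.injective.injOn
  have hφ : φ u ^ k = 1 := by rw [← map_pow, (Finset.mem_filter.mp hu).2, map_one]
  simpa using ⟨congrArg Prod.fst hφ, congrArg Prod.snd hφ⟩

lemma card_units_zmod_prime_pow_pow_eq_one_le {k : ℕ} (hk : Odd k) {p n : ℕ} (hp : p.Prime)
    (hn : 0 < n) [NeZero (p ^ n)] :
    ({u : (ZMod (p ^ n))ˣ | u ^ k = 1} : Finset _).card ≤ k := by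
  obtain rfl | hp2 := eq_or_ne p 2
  · have hsub : ({u : (ZMod (2 ^ n))ˣ | u ^ k = 1} : Finset _) ⊆ {1} := fun u hu => by
      have hcard : orderOf u ∣ 2 ^ (n - 1) := by
        simpa [ZMod.card_units_eq_totient, Nat.totient_prime_pow hp hn] using
          orderOf_dvd_card (x := u)
      rw [Finset.mem_singleton, ← orderOf_eq_one_iff]
      exact Nat.eq_one_of_dvd_coprimes (hk.coprime_two_right.pow_right (n - 1))
        (orderOf_dvd_of_pow_eq_one (Finset.mem_filter.mp hu).2) hcard
    exact (Finset.card_le_card hsub).trans hk.pos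
  · have := ZMod.isCyclic_units_of_prime_pow p hp hp2 n
    exact IsCyclic.card_pow_eq_one_le hk.pos

lemma card_units_zmod_pow_eq_one_le {k : ℕ} (hk : Odd k) (N : ℕ) [hN : NeZero N] :
    ({u : (ZMod N)ˣ | u ^ k = 1} : Finset _).card ≤ k ^ N.primeFactors.card := by
  revert hN
  induction N using Nat.recOnPosPrimePosCoprime with
  | prime_pow p n hp hn =>
    intro _
    rw [Nat.primeFactors_prime_pow hn.ne' hp, Finset.card_singleton, pow_one]
    exact card_units_zmod_prime_pow_pow_eq_one_le hk hp hn
  | zero => intro _; exact absurd rfl (NeZero.ne 0)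
  | one =>
    intro _
    rw [Nat.primeFactors_one, Finset.card_empty, pow_zero, Finset.card_le_one]
    exact fun u _ v _ => Subsingleton.elim u v
  | coprime a b ha hb hab iha ihb =>
    intro _
    have : NeZero a := ⟨by omega⟩
    have : NeZero b := ⟨by omega⟩
    rw [hab.primeFactors_mul, Finset.card_union_of_disjoint hab.disjoint_primeFactors, pow_add]
    exact (card_filter_pow_eq_one_le_mul ((Units.mapEquiv
      (ZMod.chineseRemainder hab).toMulEquiv).trans MulEquiv.prodUnits) k).trans
        (Nat.mul_le_mul iha ihb)

lemma exists_pow_card_primeFactors_le {b ε : ℝ} (hb : 1 ≤ b) (hε : 0 < ε) :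
    ∃ C : ℝ, 0 < C ∧ ∀ n : ℕ, n ≠ 0 → b ^ n.primeFactors.card ≤ C * (n : ℝ) ^ ε := by
  set M := ⌈b ^ (1 / ε)⌉₊
  refine ⟨b ^ M, by positivity, fun n hn => ?_⟩
  have hfactor : ∀ p ∈ n.primeFactors, b ≤ (if p < M then b else 1) * (p : ℝ) ^ ε := by
    intro p hp
    have hp1 : (1 : ℝ) ≤ p := by exact_mod_cast (Nat.prime_of_mem_primeFactors hp).one_le
    split_ifs with hpM
    · exact le_mul_of_one_le_right (by positivity) (Real.one_le_rpow hp1 hε.le)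
    · calc b = (b ^ (1 / ε)) ^ ε := by
            rw [← Real.rpow_mul (by positivity), one_div_mul_cancel hε.ne', Real.rpow_one]
        _ ≤ (p : ℝ) ^ ε := by gcongr; exact Nat.ceil_le.mp (not_lt.mp hpM)
        _ = 1 * (p : ℝ) ^ ε := (one_mul _).symm
  calc b ^ n.primeFactors.card = ∏ _p ∈ n.primeFactors, b := (Finset.prod_const b).symm
    _ ≤ ∏ p ∈ n.primeFactors, (if p < M then b else 1) * (p : ℝ) ^ ε :=
        Finset.prod_le_prod (fun _ _ => by positivity) hfactor
    _ = b ^ ({p ∈ n.primeFactors | p < M} : Finset ℕ).card *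
          ((∏ p ∈ n.primeFactors, p : ℕ) : ℝ) ^ ε := by
        rw [Finset.prod_mul_distrib, ← Finset.prod_filter, Finset.prod_const,
          Real.finsetProd_rpow _ _ fun p _ => p.cast_nonneg, Nat.cast_prod]
    _ ≤ b ^ M * (n : ℝ) ^ ε := by
        gcongr ?_ * (Nat.cast ?_) ^ ε
        · refine pow_le_pow_right₀ hb ?_
          calc _ ≤ (Finset.range M).card := Finset.card_le_card fun p hp =>
                Finset.mem_range.mpr (Finset.mem_filter.mp hp).2
            _ = M := Finset.card_range M
        · exact Nat.le_of_dvd hn.bot_lt (Nat.prod_primeFactors_dvd n)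

end RootsOfUnity

section FibrePairs

open Classical in
/-- The coprime pairs `s` in `[1, Y] × [1, Z]`, with both entries prime to `n`, for which
`a s₁³ + b s₂³ + c n³ x² = 0` has a solution `x ≠ 0`. -/
noncomputable def fibrePairs (a b c : ℤ) (n : ℕ) (Y Z : ℤ) : Finset (ℤ × ℤ) :=
  {s ∈ Finset.Icc 1 Y ×ˢ Finset.Icc 1 Z | IsCoprime s.1 s.2 ∧ IsCoprime s.1 n ∧ IsCoprime s.2 n ∧
    ∃ x : ℤ, x ≠ 0 ∧ a * s.1 ^ 3 + b * s.2 ^ 3 + c * n ^ 3 * x ^ 2 = 0}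

variable {a b c Y Z : ℤ} {n : ℕ} {s : ℤ × ℤ}

lemma mem_fibrePairs : s ∈ fibrePairs a b c n Y Z ↔
    (1 ≤ s.1 ∧ s.1 ≤ Y) ∧ (1 ≤ s.2 ∧ s.2 ≤ Z) ∧ IsCoprime s.1 s.2 ∧ IsCoprime s.1 n ∧
      IsCoprime s.2 n ∧ ∃ x : ℤ, x ≠ 0 ∧ a * s.1 ^ 3 + b * s.2 ^ 3 + c * n ^ 3 * x ^ 2 = 0 := by
  simp only [fibrePairs, Finset.mem_filter, Finset.mem_product, Finset.mem_Icc, and_assoc]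

lemma units_mul_inv_pow_three_eq {R : Type*} [CommRing R] {α β u v : Rˣ}
    (h : (α : R) * u ^ 3 + β * v ^ 3 = 0) : (u * v⁻¹) ^ 3 = -(β * α⁻¹) := by
  have hu : α * u ^ 3 = -(β * v ^ 3) := Units.ext (by push_cast; exact eq_neg_of_add_eq_zero_left h)
  calc (u * v⁻¹) ^ 3 = α⁻¹ * (α * u ^ 3) * (v ^ 3)⁻¹ := by
        rw [inv_mul_cancel_left, mul_pow, inv_pow]
    _ = -(β * α⁻¹) := by
        rw [hu, mul_neg, neg_mul, ← mul_assoc, mul_inv_cancel_right, mul_comm]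

lemma isUnit_intCast_zmod_pow {z : ℤ} (hz : IsCoprime z n) (k : ℕ) :
    IsUnit (z : ZMod (n ^ k)) := by
  rw [ZMod.coe_int_isUnit_iff_isCoprime, Nat.cast_pow]
  exact hz.symm.pow_left

lemma exists_cubeRoot_of_mem_fibrePairs {α β : (ZMod (n ^ 3))ˣ} (hα : (α : ZMod (n ^ 3)) = a)
    (hβ : (β : ZMod (n ^ 3)) = b) (hs : s ∈ fibrePairs a b c n Y Z) :
    ∃ u : (ZMod (n ^ 3))ˣ, u ^ 3 = -(β * α⁻¹) ∧
      (s.1 : ZMod (n ^ 3)) = (u : ZMod (n ^ 3)) * s.2 := by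
  obtain ⟨-, -, -, h₁, h₂, x, -, heq⟩ := mem_fibrePairs.mp hs
  obtain ⟨u, hu⟩ := isUnit_intCast_zmod_pow h₁ 3
  obtain ⟨v, hv⟩ := isUnit_intCast_zmod_pow h₂ 3
  have hn : (n : ZMod (n ^ 3)) ^ 3 = 0 := by exact_mod_cast ZMod.natCast_self (n ^ 3)
  have heq' := congrArg (Int.cast : ℤ → ZMod (n ^ 3)) heq
  push_cast at heq'
  rw [hn, ← hα, ← hβ, ← hu, ← hv, mul_zero, zero_mul, add_zero] at heq'
  exact ⟨u * v⁻¹, units_mul_inv_pow_three_eq heq', by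
    rw [← hu, ← hv, ← Units.val_mul, inv_mul_cancel_right]⟩

lemma mem_squarePoints_of_mem_fibrePairs (hn : n ≠ 0) (hc : c ≠ 0) {u : ZMod (n ^ 3)}
    (hs : s ∈ fibrePairs a b c n Y Z) (hu : (s.1 : ZMod (n ^ 3)) = u * (s.2 : ZMod (n ^ 3))) :
    s ∈ squarePoints (n ^ 3) u.val (-(c * n * a)) (-(c * n * b)) Y Z := by
  obtain ⟨h₁, h₂, hcop, -, -, x, hx, heq⟩ := mem_fibrePairs.mp hs
  have : NeZero (n ^ 3) := ⟨pow_ne_zero _ hn⟩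
  have hform : cubicForm (-(c * n * a)) (-(c * n * b)) s = c * n ^ 2 * x * (c * n ^ 2 * x) := by
    rw [cubicForm]
    linear_combination (-(c * n)) * heq
  have hroot : c * n ^ 2 * x ≠ 0 :=
    mul_ne_zero (mul_ne_zero hc (pow_ne_zero _ (by exact_mod_cast hn))) hx
  refine mem_squarePoints.mpr ⟨h₁, h₂, ?_, hcop, hform ▸ mul_ne_zero hroot hroot, _, hform⟩
  rw [mem_congruenceLattice, ← Nat.cast_pow, ← ZMod.intCast_zmod_eq_zero_iff_dvd]
  push_cast
  rw [ZMod.natCast_zmod_val, hu, sub_self]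

lemma card_fibrePairs_le (hn : n ≠ 0) (hc : c ≠ 0) (ha : IsCoprime a n) (hb : IsCoprime b n)
    {M : ℕ} (hM : ∀ l, (squarePoints (n ^ 3) l (-(c * n * a)) (-(c * n * b)) Y Z).card ≤ M) :
    (fibrePairs a b c n Y Z).card ≤ 3 ^ n.primeFactors.card * M := by
  have : NeZero (n ^ 3) := ⟨pow_ne_zero _ hn⟩
  obtain ⟨α, hα⟩ := isUnit_intCast_zmod_pow ha 3
  obtain ⟨β, hβ⟩ := isUnit_intCast_zmod_pow hb 3
  set T : Finset (ZMod (n ^ 3))ˣ := {u | u ^ 3 = -(β * α⁻¹)}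
  have hT : T.card ≤ 3 ^ n.primeFactors.card := by
    have := (card_filter_pow_eq_le_card_filter_pow_eq_one 3 (-(β * α⁻¹))).trans
      (card_units_zmod_pow_eq_one_le (k := 3) (by decide) (n ^ 3))
    rwa [Nat.primeFactors_pow _ three_ne_zero] at this
  have hsub : fibrePairs a b c n Y Z ⊆ T.biUnion fun u =>
      squarePoints (n ^ 3) (u : ZMod (n ^ 3)).val (-(c * n * a)) (-(c * n * b)) Y Z := by
    intro s hs
    obtain ⟨u, hu, hsu⟩ := exists_cubeRoot_of_mem_fibrePairs hα hβ hs
    exact Finset.mem_biUnion.mpr ⟨u, Finset.mem_filter.mpr ⟨Finset.mem_univ u, hu⟩,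
      mem_squarePoints_of_mem_fibrePairs hn hc hs hsu⟩
  calc _ ≤ T.card * M := (Finset.card_le_card hsub).trans
        (Finset.card_biUnion_le_card_mul _ _ _ fun u _ => hM _)
    _ ≤ _ := Nat.mul_le_mul_right M hT

lemma HeightLE.pow_three {H : ℝ} (h : HeightLE H n a b Y Z) (hc : c ≠ 0) (hcH : |(c : ℝ)| ≤ H) :
    HeightLE (H ^ 3) (n ^ 3) (-(c * n * a)) (-(c * n * b)) Y Z := by
  have hH : 1 ≤ H := by linarith [h.two_le]
  have hn : (n : ℤ) ≠ 0 := h.m_pos.ne'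
  have hnH : (n : ℝ) ≤ H := by exact_mod_cast h.m_le
  have hle : H ≤ H ^ 3 := le_self_pow₀ hH three_ne_zero
  have hcoeff {z : ℤ} (hz : |(z : ℝ)| ≤ H) : |((-(c * n * z) : ℤ) : ℝ)| ≤ H ^ 3 := by
    push_cast
    rw [abs_neg, abs_mul, abs_mul, Nat.abs_cast]
    calc _ ≤ H * H * H := by gcongr
      _ = H ^ 3 := by ring
  exact
    { two_le := h.two_le.trans hle
      m_pos := pow_pos h.m_pos 3
      Y_pos := h.Y_pos
      Z_pos := h.Z_pos
      α_ne_zero := neg_ne_zero.mpr (mul_ne_zero (mul_ne_zero hc hn) h.α_ne_zero)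
      β_ne_zero := neg_ne_zero.mpr (mul_ne_zero (mul_ne_zero hc hn) h.β_ne_zero)
      m_le := by push_cast; gcongr
      abs_α_le := hcoeff h.abs_α_le
      abs_β_le := hcoeff h.abs_β_le
      Y_le := h.Y_le.trans hle
      Z_le := h.Z_le.trans hle }

theorem exists_card_fibrePairs_le {δ : ℝ} (hδ : 0 < δ) :
    ∃ C : ℝ, 0 < C ∧ ∀ {H : ℝ} {n : ℕ} {a b c Y Z : ℤ}, HeightLE H n a b Y Z → c ≠ 0 →
      |(c : ℝ)| ≤ H → IsCoprime a n → IsCoprime b n →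
      ((fibrePairs a b c n Y Z).card : ℝ) ≤
        C * (1 + (Y * Z / (n : ℝ) ^ 3) ^ ((2 : ℝ) / 3)) * H ^ δ := by
  obtain ⟨C₁, hC₁, hroots⟩ := exists_pow_card_primeFactors_le (b := 3) (ε := δ / 2) (by norm_num)
    (by positivity)
  obtain ⟨C₂, hC₂, hsquares⟩ := exists_card_squarePoints_le (δ := δ / 6) (by positivity)
  refine ⟨C₁ * C₂, by positivity, fun {H n a b c Y Z} h hc hcH ha hb => ?_⟩
  have hH : 0 < H := by linarith [h.two_le]
  have hn : n ≠ 0 := by exact_mod_cast h.m_pos.ne'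
  have hnH : (n : ℝ) ≤ H := by exact_mod_cast h.m_le
  set R := C₂ * (1 + (Y * Z / (n : ℝ) ^ 3) ^ ((2 : ℝ) / 3)) * H ^ (δ / 2) with hR
  have hR0 : 0 ≤ R := by
    have hYZ : (0 : ℝ) ≤ Y * Z := by exact_mod_cast (mul_pos h.Y_pos h.Z_pos).le
    positivity
  have hclass (l : ℤ) :
      ((squarePoints (n ^ 3) l (-(c * n * a)) (-(c * n * b)) Y Z).card : ℝ) ≤ R := by
    have hexp : (H ^ 3) ^ (δ / 6) = H ^ (δ / 2) := by
      rw [← Real.rpow_natCast_mul hH.le]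
      ring_nf
    have hle := hsquares (l := l) (h.pow_three hc hcH)
    push_cast at hle
    rwa [hexp] at hle
  calc ((fibrePairs a b c n Y Z).card : ℝ) ≤ 3 ^ n.primeFactors.card * ⌊R⌋₊ := by
        exact_mod_cast card_fibrePairs_le hn hc ha hb fun l => Nat.le_floor (hclass l)
    _ ≤ C₁ * H ^ (δ / 2) * R := by
        gcongr
        · exact (hroots n hn).trans (by gcongr)
        · exact Nat.floor_le hR0
    _ = C₁ * C₂ * (1 + (Y * Z / (n : ℝ) ^ 3) ^ ((2 : ℝ) / 3)) * (H ^ (δ / 2) * H ^ (δ / 2)) := by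
        rw [hR]; ring
    _ = _ := by rw [← Real.rpow_add hH, add_halves]

end FibrePairs

section S0

lemma univ_fin_three_eq : ∀ {i j k : Fin 3}, i ≠ j → i ≠ k → j ≠ k →
    (Finset.univ : Finset (Fin 3)) = {i, j, k} := by
  decide

variable {a : Fin 3 → ℤ} {X Y : Fin 3 → ℝ} {p : (Fin 3 → ℤ) × (Fin 3 → ℤ)} {i j k : Fin 3}

lemma sum_eq_zero_of_mem_S0 (hp : p ∈ S0 a X Y) (hij : i ≠ j) (hik : i ≠ k) (hjk : j ≠ k) :
    a i * p.1 i ^ 2 * p.2 i ^ 3 + a j * p.1 j ^ 2 * p.2 j ^ 3 +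
      a k * p.1 k ^ 2 * p.2 k ^ 3 = 0 := by
  obtain ⟨-, -, -, -, heq, -⟩ := hp
  rw [← Fin.sum_univ_three fun l => a l * p.1 l ^ 2 * p.2 l ^ 3, univ_fin_three_eq hij hik hjk,
    Finset.sum_insert (by simp [hij, hik]), Finset.sum_pair hjk] at heq
  rw [add_assoc, heq]

lemma isCoprime_coeff_of_mem_S0 (hp : p ∈ S0 a X Y) (l l' : Fin 3) :
    IsCoprime (a l) (p.1 l' * p.2 l') := by
  obtain ⟨-, -, -, -, -, -, hgcd, -⟩ := hp
  have hprod : p.1 0 * p.1 1 * p.1 2 * p.2 0 * p.2 1 * p.2 2 = ∏ l, p.1 l * p.2 l := by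
    rw [Fin.prod_univ_three]
    ring
  rw [← Int.isCoprime_iff_gcd_eq_one, ← Fin.prod_univ_three a, hprod] at hgcd
  exact (hgcd.of_isCoprime_of_dvd_left (Finset.dvd_prod_of_mem a (Finset.mem_univ l)))
    |>.of_isCoprime_of_dvd_right (Finset.dvd_prod_of_mem _ (Finset.mem_univ l'))

lemma not_forall_prime_dvd_of_mem_S0 (hp : p ∈ S0 a X Y) {q : ℤ} (hq : Prime q) :
    ¬ ∀ l, q ∣ p.1 l * p.2 l := fun h => by
  obtain ⟨-, -, -, -, -, hgcd, -⟩ := hp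
  have hdvd := Int.dvd_coe_gcd (h 0) (Int.dvd_coe_gcd (h 1) (h 2))
  rw [hgcd] at hdvd
  exact hq.not_dvd_one hdvd

lemma isCoprime_of_mem_S0 (hp : p ∈ S0 a X Y) (hij : i ≠ j) (hik : i ≠ k) (hjk : j ≠ k) :
    IsCoprime (p.1 i * p.2 i) (p.1 j * p.2 j) := by
  refine isCoprime_of_prime_dvd (fun h => (mul_pos (hp.1 i) (hp.2.1 i)).ne' h.1)
    fun q hq hi hj => not_forall_prime_dvd_of_mem_S0 hp hq fun l => ?_
  have hmul : q ∣ a k * (p.1 k ^ 2 * p.2 k ^ 3) := by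
    have heq : a k * (p.1 k ^ 2 * p.2 k ^ 3) = p.1 i * p.2 i * -(a i * p.1 i * p.2 i ^ 2) +
        p.1 j * p.2 j * -(a j * p.1 j * p.2 j ^ 2) := by
      linear_combination sum_eq_zero_of_mem_S0 hp hij hik hjk
    exact heq ▸ dvd_add (hi.mul_right _) (hj.mul_right _)
  have hak : ¬ q ∣ a k := fun h =>
    hq.not_isUnit ((isCoprime_coeff_of_mem_S0 hp k i).isUnit_of_dvd' h hi)
  have hk : q ∣ p.1 k * p.2 k := by
    obtain h | h := hq.dvd_or_dvd ((hq.dvd_or_dvd hmul).resolve_left hak)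
    · exact (hq.dvd_of_dvd_pow h).mul_right _
    · exact (hq.dvd_of_dvd_pow h).mul_left _
  have hl := univ_fin_three_eq hij hik hjk ▸ Finset.mem_univ l
  simp only [Finset.mem_insert, Finset.mem_singleton] at hl
  obtain rfl | rfl | rfl := hl
  exacts [hi, hj, hk]

lemma mem_fibrePairs_of_mem_S0 {n : ℕ} (hp : p ∈ S0 a X Y) (hn : p.2 k = n) (hij : i ≠ j)
    (hik : i ≠ k) (hjk : j ≠ k) :
    (p.2 i, p.2 j) ∈ fibrePairs (a i * p.1 i ^ 2) (a j * p.1 j ^ 2) (a k) n ⌊Y i⌋ ⌊Y j⌋ := by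
  have hcop {l l' l'' : Fin 3} (h : l ≠ l') (h' : l ≠ l'') (h'' : l' ≠ l'') :
      IsCoprime (p.2 l) (p.2 l') :=
    (isCoprime_of_mem_S0 hp h h' h'').of_mul_left_right.of_mul_right_right
  refine mem_fibrePairs.mpr ⟨⟨hp.2.1 i, Int.le_floor.mpr (hp.2.2.2.1 i).2⟩,
    ⟨hp.2.1 j, Int.le_floor.mpr (hp.2.2.2.1 j).2⟩, hcop hij hik hjk, hn ▸ hcop hik hij hjk.symm,
    hn ▸ hcop hjk hij.symm hik.symm, p.1 k, (hp.1 k).ne', ?_⟩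
  rw [← hn]
  linear_combination sum_eq_zero_of_mem_S0 hp hij hik hjk

lemma isCoprime_mul_sq_of_mem_S0 (hp : p ∈ S0 a X Y) (hij : i ≠ j) (hik : i ≠ k) (hjk : j ≠ k) :
    IsCoprime (a i * p.1 i ^ 2) (p.2 k) :=
  .mul_left (isCoprime_coeff_of_mem_S0 hp i k).of_mul_right_right
    (isCoprime_of_mem_S0 hp hik hij hjk.symm).of_mul_left_left.of_mul_right_right.pow_left

lemma abs_mul_sq_le_and_le_pow_six {B α x y : ℝ} (hB : 2 ≤ B) (hα : 1 ≤ |α|) (hx : 1 ≤ x)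
    (hy : 1 ≤ y) (h : x ^ 2 * y ^ 3 ≤ 32 * B / |α|) : |α| * x ^ 2 ≤ B ^ 6 ∧ y ≤ B ^ 6 := by
  have hprod : |α| * x ^ 2 * y ^ 3 ≤ B ^ 6 :=
    calc |α| * x ^ 2 * y ^ 3 = x ^ 2 * y ^ 3 * |α| := by ring
      _ ≤ 2 ^ 5 * B := by
          rw [le_div_iff₀ (by positivity)] at h
          linarith
      _ ≤ B ^ 5 * B := by gcongr
      _ = B ^ 6 := by ring
  have hαx : 1 ≤ |α| * x ^ 2 := one_le_mul_of_one_le_of_one_le hα (one_le_pow₀ hx)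
  constructor
  · exact (le_mul_of_one_le_right (by positivity) (one_le_pow₀ hy)).trans hprod
  · calc y ≤ y ^ 3 := le_self_pow₀ hy three_ne_zero
      _ ≤ |α| * x ^ 2 * y ^ 3 := le_mul_of_one_le_left (by positivity) hαx
      _ ≤ B ^ 6 := hprod

variable {B : ℝ}

lemma heightLE_of_mem_S0 (hB : 2 ≤ B) (ha : ∀ l, a l ≠ 0) (hX : ∀ l, 1 ≤ X l) (hY : ∀ l, 1 ≤ Y l)
    (hXY : ∀ l, X l ^ 2 * Y l ^ 3 ≤ 32 * B / |(a l : ℝ)|) (hp : p ∈ S0 a X Y) (i j k : Fin 3) :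
    HeightLE (B ^ 6) (p.2 k) (a i * p.1 i ^ 2) (a j * p.1 j ^ 2) ⌊Y i⌋ ⌊Y j⌋ := by
  have hbounds (l : Fin 3) : |(a l : ℝ)| * X l ^ 2 ≤ B ^ 6 ∧ Y l ≤ B ^ 6 :=
    abs_mul_sq_le_and_le_pow_six hB (by exact_mod_cast Int.one_le_abs (ha l)) (hX l) (hY l) (hXY l)
  have hcoeff (l : Fin 3) : |((a l * p.1 l ^ 2 : ℤ) : ℝ)| ≤ B ^ 6 := by
    have hpos : (0 : ℝ) < p.1 l := by exact_mod_cast hp.1 l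
    push_cast
    rw [abs_mul, abs_of_pos (pow_pos hpos 2)]
    exact (by gcongr; exact (hp.2.2.1 l).2 : _ ≤ |(a l : ℝ)| * X l ^ 2).trans (hbounds l).1
  exact
    { two_le := hB.trans (le_self_pow₀ (by linarith) (by norm_num))
      m_pos := hp.2.1 k
      Y_pos := Int.floor_pos.mpr (hY i)
      Z_pos := Int.floor_pos.mpr (hY j)
      α_ne_zero := mul_ne_zero (ha i) (pow_ne_zero _ (hp.1 i).ne')
      β_ne_zero := mul_ne_zero (ha j) (pow_ne_zero _ (hp.1 j).ne')
      m_le := (hp.2.2.2.1 k).2.trans (hbounds k).2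
      abs_α_le := hcoeff i
      abs_β_le := hcoeff j
      Y_le := (Int.floor_le _).trans (hbounds i).2
      Z_le := (Int.floor_le _).trans (hbounds j).2 }

lemma div_cube_rpow_two_thirds_le {x y c n : ℝ} (hx : 0 ≤ x) (hxy : x ≤ y) (hc : 0 < c)
    (hcn : c / 2 ≤ n) :
    (x / n ^ 3) ^ ((2 : ℝ) / 3) ≤ 4 * (y ^ ((2 : ℝ) / 3) * c ^ (-2 : ℝ)) := by
  have hn : 0 < n := by linarith
  have hcube : ((c / 2) ^ 3) ^ ((2 : ℝ) / 3) = (c / 2) ^ 2 := by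
    rw [← Real.rpow_natCast_mul (by positivity), ← Real.rpow_natCast]
    norm_num
  calc (x / n ^ 3) ^ ((2 : ℝ) / 3) ≤ (y / (c / 2) ^ 3) ^ ((2 : ℝ) / 3) := by
        gcongr
        exact hx.trans hxy
    _ = y ^ ((2 : ℝ) / 3) / (c / 2) ^ 2 := by
        rw [Real.div_rpow (hx.trans hxy) (by positivity), hcube]
    _ = 4 * (y ^ ((2 : ℝ) / 3) * c ^ (-2 : ℝ)) := by
        rw [Real.rpow_neg hc.le, Real.rpow_two]
        ring

/-- The sextuple with prescribed `xᵢ`, `xⱼ` and `y_k` whose remaining entries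
`(x_k, yᵢ, yⱼ)` are `t`. -/
def fibrePoint (i j k : Fin 3) (xi xj yk : ℤ) (t : ℤ × ℤ × ℤ) : (Fin 3 → ℤ) × (Fin 3 → ℤ) :=
  (fun l => if l = i then xi else if l = j then xj else t.1,
    fun l => if l = k then yk else if l = i then t.2.1 else t.2.2)

variable {xi xj : ℤ}

lemma ncard_setOf_fibrePoint_mem_S0_le {n : ℕ} (hak : a k ≠ 0) (hij : i ≠ j) (hik : i ≠ k)
    (hjk : j ≠ k) : {t | fibrePoint i j k xi xj n t ∈ S0 a X Y}.ncard ≤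
      (fibrePairs (a i * xi ^ 2) (a j * xj ^ 2) (a k) n ⌊Y i⌋ ⌊Y j⌋).card := by
  rw [← Set.ncard_coe_finset]
  refine Set.ncard_le_ncard_of_injOn Prod.snd (fun t ht => ?_) (fun t ht t' ht' hsnd => ?_)
    (Finset.finite_toSet _)
  · simpa [fibrePoint, hij, hij.symm, hik, hik.symm, hjk, hjk.symm] using
      mem_fibrePairs_of_mem_S0 ht (by simp [fibrePoint]) hij hik hjk
  · have hn : (n : ℤ) ≠ 0 := by simpa [fibrePoint] using (ht.2.1 k).ne'
    have hpos : 0 < t.1 := by simpa [fibrePoint, hik.symm, hjk.symm] using ht.1 k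
    have hpos' : 0 < t'.1 := by simpa [fibrePoint, hik.symm, hjk.symm] using ht'.1 k
    have heq := sum_eq_zero_of_mem_S0 ht hij hik hjk
    have heq' := sum_eq_zero_of_mem_S0 ht' hij hik hjk
    simp only [fibrePoint, hij, hij.symm, hik, hik.symm, hjk, hjk.symm, if_true, if_false, hsnd]
      at heq heq'
    have hsq : t.1 ^ 2 = t'.1 ^ 2 := mul_left_cancel₀ (mul_ne_zero hak (pow_ne_zero 3 hn))
      (by linear_combination heq - heq')
    exact Prod.ext ((pow_left_inj₀ hpos.le hpos'.le two_ne_zero).mp hsq) hsnd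

theorem exists_card_fibrePairs_le_of_mem_S0 {ε : ℝ} (hε : 0 < ε) :
    ∃ C : ℝ, 0 < C ∧ ∀ {a : Fin 3 → ℤ} {X Y : Fin 3 → ℝ} {B : ℝ}, 2 ≤ B → (∀ l, a l ≠ 0) →
      (∀ l, 1 ≤ X l) → (∀ l, 1 ≤ Y l) → (∀ l, X l ^ 2 * Y l ^ 3 ≤ 32 * B / |(a l : ℝ)|) →
      ∀ {p : (Fin 3 → ℤ) × (Fin 3 → ℤ)}, p ∈ S0 a X Y →
      ∀ {i j k : Fin 3}, i ≠ j → i ≠ k → j ≠ k → ∀ {n : ℕ}, p.2 k = n →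
        ((fibrePairs (a i * p.1 i ^ 2) (a j * p.1 j ^ 2) (a k) n ⌊Y i⌋ ⌊Y j⌋).card : ℝ) ≤
          C * (1 + (Y i * Y j) ^ ((2 : ℝ) / 3) * Y k ^ (-2 : ℝ)) * B ^ ε := by
  obtain ⟨C, hC, hpairs⟩ := exists_card_fibrePairs_le (δ := ε / 6) (by positivity)
  refine ⟨4 * C, by positivity, fun {a X Y B} hB ha hX hY hXY p hp i j k hij hik hjk n hn => ?_⟩
  have hheight := hn ▸ heightLE_of_mem_S0 hB ha hX hY hXY hp i j k
  have hak : |(a k : ℝ)| ≤ B ^ 6 :=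
    calc |(a k : ℝ)| ≤ |(a k : ℝ)| * X k ^ 2 :=
          le_mul_of_one_le_right (abs_nonneg _) (one_le_pow₀ (hX k))
      _ ≤ B ^ 6 := (abs_mul_sq_le_and_le_pow_six hB (by exact_mod_cast Int.one_le_abs (ha k))
          (hX k) (hY k) (hXY k)).1
  have := hY i
  have := hY j
  have hYk := hY k
  have hfloor (l : Fin 3) : (0 : ℝ) ≤ ⌊Y l⌋ := by
    exact_mod_cast Int.floor_nonneg.mpr (zero_le_one.trans (hY l))
  have hratio : (⌊Y i⌋ * ⌊Y j⌋ / (n : ℝ) ^ 3) ^ ((2 : ℝ) / 3) ≤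
      4 * ((Y i * Y j) ^ ((2 : ℝ) / 3) * Y k ^ (-2 : ℝ)) :=
    div_cube_rpow_two_thirds_le (mul_nonneg (hfloor i) (hfloor j))
      (mul_le_mul (Int.floor_le _) (Int.floor_le _) (hfloor j) (by positivity)) (by positivity)
      (by exact_mod_cast hn ▸ (hp.2.2.2.1 k).1.le)
  have hexp : (B ^ 6) ^ (ε / 6) = B ^ ε := by
    rw [← Real.rpow_natCast_mul (by positivity)]
    ring_nf
  calc _ ≤ C * (1 + (⌊Y i⌋ * ⌊Y j⌋ / (n : ℝ) ^ 3) ^ ((2 : ℝ) / 3)) * (B ^ 6) ^ (ε / 6) :=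
        hpairs hheight (ha k) hak (hn ▸ isCoprime_mul_sq_of_mem_S0 hp hij hik hjk)
          (hn ▸ isCoprime_mul_sq_of_mem_S0 hp hij.symm hjk hik)
    _ ≤ C * (4 + 4 * ((Y i * Y j) ^ ((2 : ℝ) / 3) * Y k ^ (-2 : ℝ))) * B ^ ε := by
        rw [hexp]
        gcongr
        norm_num
    _ = _ := by ring

end S0

end FibreBound

open FibreBound in
theorem N0_fibre_bound_general (ε : ℝ) (hε : 0 < ε) :
    ∃ C : ℝ, 0 < C ∧ ∀ (a : Fin 3 → ℤ) (X Y : Fin 3 → ℝ) (B : ℝ),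
      2 ≤ B → (∀ i, a i ≠ 0) → (∀ i, 1 ≤ X i) → (∀ i, 1 ≤ Y i) →
      (∀ i, X i ^ 2 * Y i ^ 3 ≤ 32 * B / |(a i : ℝ)|) →
      ∀ i j k : Fin 3, i ≠ j → i ≠ k → j ≠ k → ∀ xi xj yk : ℤ,
        ({t | fibrePoint i j k xi xj yk t ∈ S0 a X Y}.ncard : ℝ) ≤
          C * (1 + (Y i * Y j) ^ ((2 : ℝ) / 3) * Y k ^ (-2 : ℝ)) * B ^ ε := by
  obtain ⟨C, hC, hpairs⟩ := exists_card_fibrePairs_le_of_mem_S0 hε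
  refine ⟨C, hC, fun a X Y B hB ha hX hY hXY i j k hij hik hjk xi xj yk => ?_⟩
  have hYi := hY i
  have hYj := hY j
  have hYk := hY k
  obtain hempty | ⟨t, ht⟩ := {t | fibrePoint i j k xi xj yk t ∈ S0 a X Y}.eq_empty_or_nonempty
  · rw [hempty, Set.ncard_empty, Nat.cast_zero]
    positivity
  have hyk : 0 < yk := by simpa [fibrePoint] using ht.2.1 k
  lift yk to ℕ using hyk.le
  have hcard := hpairs hB ha hX hY hXY ht hij hik hjk (n := yk) (by simp [fibrePoint])
  simp only [fibrePoint, hij.symm, if_true, if_false] at hcard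
  exact (Nat.cast_le.mpr (ncard_setOf_fibrePoint_mem_S0_le (ha k) hij hik hjk)).trans hcard

/-- For every `ε > 0` there is a constant `C(ε)` such that for any permutation `(i, j, k)` of
`(1, 2, 3)` and any fixed positive integers `xᵢ, xⱼ, y_k`, the number of triples
`(x_k, y_i, y_j)` of positive integers for which the resulting sextuple lies in `S₀(B)` is at
most `C(ε)(1 + (Y_iY_j)^{2/3}Y_k^{-2})B^ε`. -/
theorem N0_fibre_bound (ε : ℝ) (hε : 0 < ε) :
    ∃ C : ℝ, 0 < C ∧ ∀ (a : Fin 3 → ℤ) (X Y : Fin 3 → ℝ) (B : ℝ),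
      2 ≤ B → (∀ i, a i ≠ 0) → (∀ i, Squarefree (a i)) →
      (∀ i j, i ≠ j → IsCoprime (a i) (a j)) →
      (∀ i, 1 ≤ X i) → (∀ i, 1 ≤ Y i) →
      (∀ i, X i ^ 2 * Y i ^ 3 ≤ 32 * B / |(a i : ℝ)|) →
      ∀ i j k : Fin 3, i ≠ j → i ≠ k → j ≠ k →
      ∀ xi xj yk : ℤ, 0 < xi → 0 < xj → 0 < yk →
        (({t : ℤ × ℤ × ℤ |
            ((fun l => if l = i then xi else if l = j then xj else t.1),
             (fun l => if l = k then yk else if l = i then t.2.1 else t.2.2)) ∈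
              S0 a X Y}).ncard : ℝ) ≤
          C * (1 + (Y i * Y j) ^ ((2 : ℝ) / 3) * Y k ^ (-2 : ℝ)) * B ^ ε := by
  obtain ⟨C, hC, hcount⟩ := N0_fibre_bound_general ε hε
  exact ⟨C, hC, fun a X Y B hB ha _ _ hX hY hXY i j k hij hik hjk xi xj yk _ _ _ =>
    hcount a X Y B hB ha hX hY hXY i j k hij hik hjk xi xj yk⟩
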